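/- For every ε ∈ (0, 0.1], every real σ ∈ (0, 1], and all integers m ≥ 1, n ≥ 1, K ≥ 2, A ≥ 3, and H ≥ 8n + m + 1, there exists a finite family ℳ of finite episodic POMDPs with horizon H such that: (1) every M ∈ ℳ has |𝒮| = 2ⁿ + 4 latent states, |𝒪| = 2ⁿ + 2K + 3 observations, and |𝒜| = A actions; (2) every M ∈ ℳ is (m+1)-step α-revealing with α = σ/(σ + 2); (3) |ℳ| ≤ 2^K · A^H · (2ⁿ+4) · A · H; (4) for every T ∈ ℕ and every T-episode algorithm 𝔄, max_{M∈ℳ} E_M^𝔄[Regret] ≥ (1/120000) · min{ 2^{n−1}·K^{1/2}·A^{m+1}·H/(m·σ²ε²), 2^{n−1}·A^{H/2}·H/(m·ε), ε·T }; and (5) for every T ∈ ℕ and every T-episode algorithm 𝔄 whose output satisfies ℙ_M^𝔄( V_M⋆ − V_M(π^out) < ε/8 ) ≥ 3/4 for every M ∈ ℳ, one must have T ≥ (1/60000) · min{ 2^{n−1}·K^{1/2}·A^{m+1}·H/(σ²ε²), 2^{n−1}·A^{H/2}·H/ε² }. -/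

import Mathlib

/-! The hard models hide a combination lock behind a binary tree. Descending the tree uses the
actions `0, 1`; any other action leaves the tree for the lock. At one secret entry (step, node,
action), the lock is reached with a flag with probability `ε`, otherwise without one; both look the
same. At the lock the first `⌊A/3⌋` actions *reveal*: they move to a state emitting one of `K`
signed symbols, whose sign is a fair coin without the flag and is correlated, with strength `s`,
with hidden bits `v` with the flag; then the episode ends without reward. The other actions stay at
the lock, but from a fixed step on, any deviation from a secret *password* loses the flag. At the
last step the lock pays `1` with the flag and `1` with probability `1/2` without it. In the
reference model the flag is never given.

* Two consecutive observations after a revealing action give an unbiased estimate of the indicator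
  of the latent state, of total size `2/s + 1`. Averaging over the `⌊A/3⌋ A^{m-1}` action sequences
  beginning with a revealing action gives a left inverse of norm at most
  `(2/s + 1) / √(⌊A/3⌋ A^{m-1})`, which is at most `1 + 2/σ` for `s = σ / √(⌊A/3⌋ A^{m-1})`.
* Each reveal costs `1/2`, and each episode that does not end at the flagged lock costs `ε/2`. A
  trajectory is compatible with at most one pair of entry and password.
* The likelihood ratio of a model to the reference model is a product over episodes of `1 + ε X`
  with `X` centred and bounded. It is truncated once the secret has been probed more than about
  `√K / (10 ε² s²)` times by reveals or `1 / (50 ε²)` times by visits to the end of the lock. Its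
  second moment, averaged over `v`, is bounded through the moment generating function of the
  correlation of two random sign vectors; this is where `√K` comes from. Hence, if the expected
  number of reveals and the number of episodes stay below a fraction of the number of secrets times
  these thresholds, some model is not told apart from the reference model.

An algorithm that identifies all models therefore needs many episodes. As for the regret, either
there are many reveals, which is costly in the reference model, or some model costs `ε/8` per
episode. -/

open Finset

noncomputable section

/-- A finite episodic POMDP with horizon `H`, latent state space `S`, observation space `O`,
action space `A`.  Steps are indexed by `1, …, H` (paper convention). -/
structure POMDP (S O A : Type) [Fintype S] [Fintype O] [Fintype A] (H : ℕ) where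
  init : S → ℝ
  init_nonneg : ∀ s, 0 ≤ init s
  init_sum : ∑ s, init s = 1
  trans : ℕ → S → A → S → ℝ
  trans_nonneg : ∀ h s a s', 0 ≤ trans h s a s'
  trans_sum : ∀ h s a, ∑ s', trans h s a s' = 1
  emit : ℕ → S → O → ℝ
  emit_nonneg : ∀ h s o, 0 ≤ emit h s o
  emit_sum : ∀ h s, ∑ o, emit h s o = 1
  reward : ℕ → O → A → ℝ
  reward_nonneg : ∀ h o a, 0 ≤ reward h o a
  reward_le_one : ∀ h o a, reward h o a ≤ 1
  reward_total : ∀ τ : Fin H → O × A, ∑ h : Fin H, reward (h.1 + 1) (τ h).1 (τ h).2 ≤ 1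

namespace POMDP

variable {S O A : Type} [Fintype S] [Fintype O] [Fintype A] {H : ℕ}

/-- `emitActProb M m h s ω a` is the probability `ℙ_M(o_{h:h+m−1} = ω | s_h = s,
a_{h:h+m−2} = a)` of observing the sequence `ω ∈ 𝒪^m` when the latent state at (1-based)
step `h` is `s` and the action sequence `a ∈ 𝒜^{m−1}` is executed. -/
def emitActProb (M : POMDP S O A H) : (m : ℕ) → ℕ → S → (Fin m → O) → (Fin (m - 1) → A) → ℝ
  | 0, _, _, _, _ => 1
  | 1, h, s, ω, _ => M.emit h s (ω 0)
  | m + 2, h, s, ω, a =>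
    M.emit h s (ω 0) *
      ∑ s' : S, M.trans h s (a ⟨0, Nat.succ_pos m⟩) s' *
        emitActProb M (m + 1) (h + 1) s' (fun i => ω i.succ) (fun i => a i.succ)

/-- The `m`-step emission–action matrix `𝕄_{h,m}` (`h` is the 1-based step index). -/
def emitActMatrix (M : POMDP S O A H) (h m : ℕ) :
    Matrix ((Fin m → O) × (Fin (m - 1) → A)) S ℝ :=
  Matrix.of fun p s => M.emitActProb m h s p.1 p.2

/-- The set of columns of the step-(h−1) transition matrix `𝕋_{h−1}`
(the single column `μ₁` when `h = 1`). -/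
def stepCols (M : POMDP S O A H) (h : ℕ) : Set (S → ℝ) :=
  if h = 1 then {fun s => M.init s}
  else {c | ∃ s' a', c = fun s => M.trans (h - 1) s' a' s}

/-- `B` is a generalized left inverse of `𝕄_{h,m}`, i.e. `B · 𝕄_{h,m} · 𝕋_{h−1} = 𝕋_{h−1}`. -/
def IsGenLeftInv (M : POMDP S O A H) (h m : ℕ)
    (B : Matrix S ((Fin m → O) × (Fin (m - 1) → A)) ℝ) : Prop :=
  ∀ c ∈ M.stepCols h, (B * M.emitActMatrix h m).mulVec c = c

end POMDP

/-- The star-norm `‖x‖_* = (Σ_a (Σ_ω |x(ω,a)|)²)^{1/2}`. -/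
def starNorm {ι κ : Type} [Fintype ι] [Fintype κ] (x : ι × κ → ℝ) : ℝ :=
  Real.sqrt (∑ a : κ, (∑ ω : ι, |x (ω, a)|) ^ 2)

/-- The `(*→1)`-operator norm `‖B‖_{*→1} = max_{‖x‖_* ≤ 1} ‖Bx‖₁`. -/
def opNormStarOne {S ι κ : Type} [Fintype S] [Fintype ι] [Fintype κ]
    (B : Matrix S (ι × κ) ℝ) : ℝ :=
  sSup {y | ∃ x : ι × κ → ℝ, starNorm x ≤ 1 ∧ y = ∑ s, |B.mulVec x s|}

/-- The `(1→1)`-operator norm `‖B‖_{1→1} = max_{‖y‖₁ ≤ 1} ‖By‖₁`. -/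
def opNormOneOne {ι₁ ι₂ : Type} [Fintype ι₁] [Fintype ι₂] (B : Matrix ι₁ ι₂ ℝ) : ℝ :=
  sSup {y | ∃ v : ι₂ → ℝ, (∑ i, |v i|) ≤ 1 ∧ y = ∑ j, |B.mulVec v j|}

namespace POMDP
variable {S O A : Type} [Fintype S] [Fintype O] [Fintype A] {H : ℕ}

/-- `M` is `m`-step `α`-revealing. -/
def IsRevealing (M : POMDP S O A H) (m : ℕ) (α : ℝ) : Prop :=
  ∀ h ∈ Finset.Icc 1 (H - m + 1),
    ∃ B : Matrix S ((Fin m → O) × (Fin (m - 1) → A)) ℝ,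
      M.IsGenLeftInv h m B ∧ opNormStarOne B ≤ 1 / α

end POMDP

/-- A history-dependent policy: a distribution over actions for every (history, observation). -/
structure Policy (O A : Type) [Fintype A] where
  act : List (O × A) → O → A → ℝ
  act_nonneg : ∀ τ o a, 0 ≤ act τ o a
  act_sum : ∀ τ o, ∑ a, act τ o a = 1

namespace POMDP
variable {S O A : Type} [Fintype S] [Fintype O] [Fintype A] {H : ℕ}

/-- The probability `ℙ_M^π(τ)` of a full trajectory `τ = (o_1,a_1,…,o_H,a_H)`. -/
def trajProb (M : POMDP S O A H) (π : Policy O A) (τ : Fin H → O × A) : ℝ :=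
  ∑ s : Fin H → S, ∏ h : Fin H,
    (if h.1 = 0 then M.init (s h)
     else
       M.trans h.1 (s ⟨h.1 - 1, Nat.lt_of_le_of_lt (Nat.sub_le _ _) h.2⟩)
         (τ ⟨h.1 - 1, Nat.lt_of_le_of_lt (Nat.sub_le _ _) h.2⟩).2 (s h)) *
    M.emit (h.1 + 1) (s h) (τ h).1 *
    π.act ((List.ofFn τ).take h.1) (τ h).1 (τ h).2

/-- The value `V_M(π)` of a policy. -/
def value (M : POMDP S O A H) (π : Policy O A) : ℝ :=
  ∑ τ : Fin H → O × A, M.trajProb π τ * ∑ h : Fin H, M.reward (h.1 + 1) (τ h).1 (τ h).2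

/-- The optimal value `V_M⋆`. -/
def optValue (M : POMDP S O A H) : ℝ := ⨆ π : Policy O A, M.value π

end POMDP

/-- A `T`-episode algorithm: a distribution over actions for every
(past episodes, within-episode history, current observation), and an output policy map. -/
structure Algorithm (O A : Type) [Fintype A] (H : ℕ) where
  act : List (Fin H → O × A) → List (O × A) → O → A → ℝ
  act_nonneg : ∀ past hist o a, 0 ≤ act past hist o a
  act_sum : ∀ past hist o, ∑ a, act past hist o a = 1
  out : List (Fin H → O × A) → Policy O A

/-- The policy executed by algorithm `𝔄` in the episode following the past episodes `past`. -/
def Algorithm.policyAt {O A : Type} [Fintype A] {H : ℕ} (𝔄 : Algorithm O A H)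
    (past : List (Fin H → O × A)) : Policy O A :=
  ⟨fun hist o a => 𝔄.act past hist o a, fun _ _ _ => 𝔄.act_nonneg _ _ _ _,
    fun _ _ => 𝔄.act_sum _ _ _⟩

namespace POMDP
variable {S O A : Type} [Fintype S] [Fintype O] [Fintype A] {H : ℕ}

/-- The law `ℙ_M^𝔄` of the transcript `(τ^{(1)},…,τ^{(T)})`. -/
def transcriptProb (M : POMDP S O A H) (𝔄 : Algorithm O A H) {T : ℕ}
    (τs : Fin T → Fin H → O × A) : ℝ :=
  ∏ t : Fin T, M.trajProb (𝔄.policyAt ((List.ofFn τs).take t.1)) (τs t)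

open Classical in
/-- `ℙ_M^𝔄(V_M⋆ − V_M(π^out) < ε)`. -/
def pacProb (M : POMDP S O A H) (𝔄 : Algorithm O A H) (T : ℕ) (ε : ℝ) : ℝ :=
  ∑ τs : Fin T → Fin H → O × A,
    if M.optValue - M.value (𝔄.out (List.ofFn τs)) < ε then M.transcriptProb 𝔄 τs else 0

/-- The expected regret `E_M^𝔄[Σ_{t=1}^T (V_M⋆ − V_M(π^{(t)}))]`. -/
def expRegret (M : POMDP S O A H) (𝔄 : Algorithm O A H) (T : ℕ) : ℝ :=
  ∑ τs : Fin T → Fin H → O × A,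
    M.transcriptProb 𝔄 τs *
      ∑ t : Fin T, (M.optValue - M.value (𝔄.policyAt ((List.ofFn τs).take t.1)))

end POMDP

/-! ### Trajectory laws -/

section SumsOverTuples

variable {α : Type*} [Fintype α] {k : ℕ}

lemma sum_tuple_eq_sum_cons (f : (Fin (k + 1) → α) → ℝ) :
    ∑ x, f x = ∑ y : α, ∑ z : Fin k → α, f (Fin.cons y z) := by
  rw [← (Fin.consEquiv fun _ : Fin (k + 1) => α).sum_comp, Fintype.sum_prod_type]
  rfl

lemma sum_tuple_eq_sum_snoc (f : (Fin (k + 1) → α) → ℝ) :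
    ∑ x, f x = ∑ z : Fin k → α, ∑ y : α, f (Fin.snoc (α := fun _ => α) z y) := by
  rw [← (Fin.snocEquiv fun _ : Fin (k + 1) => α).sum_comp, Fintype.sum_prod_type, sum_comm]
  rfl

end SumsOverTuples

namespace POMDP

variable {S O A : Type} [Fintype S] [Fintype O] [Fintype A] {H : ℕ}

/-- Expectation of a function `G` of the remaining trajectory when `π` plays `k` further steps
from latent state `s` at step `h`, after the history `hist`. -/
def rollout (M : POMDP S O A H) (π : Policy O A) :
    ℕ → ℕ → List (O × A) → S → (List (O × A) → ℝ) → ℝ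
  | 0, _, _, _, G => G []
  | k + 1, h, hist, s, G =>
    ∑ o, M.emit h s o * ∑ a, π.act hist o a * ∑ s', M.trans h s a s' *
      rollout M π k (h + 1) (hist ++ [(o, a)]) s' (fun l => G ((o, a) :: l))

/-- Probability of the trajectory segment `τ` of length `k` played by `π` from step `h + 1` after
the history `hist`, when the latent state at step `h + 1` has law `w`; for `h = 0`, `hist = []` and
`w = M.init` this is `trajProb`. -/
def segProb (M : POMDP S O A H) (π : Policy O A) (k h : ℕ) (hist : List (O × A)) (w : S → ℝ)
    (τ : Fin k → O × A) : ℝ :=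
  ∑ s : Fin k → S, ∏ i : Fin k,
    (if i.1 = 0 then w (s i)
     else
       M.trans (h + i.1) (s ⟨i.1 - 1, Nat.lt_of_le_of_lt (Nat.sub_le _ _) i.2⟩)
         (τ ⟨i.1 - 1, Nat.lt_of_le_of_lt (Nat.sub_le _ _) i.2⟩).2 (s i)) *
    M.emit (h + i.1 + 1) (s i) (τ i).1 *
    π.act (hist ++ (List.ofFn τ).take i.1) (τ i).1 (τ i).2

variable (M : POMDP S O A H) (π : Policy O A)

lemma trajProb_eq_segProb (τ : Fin H → O × A) :
    M.trajProb π τ = M.segProb π H 0 [] M.init τ := by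
  simp [trajProb, segProb]

lemma segProb_cons (k h : ℕ) (hist : List (O × A)) (w : S → ℝ) (p : O × A) (τ : Fin k → O × A) :
    M.segProb π (k + 1) h hist w (Fin.cons p τ) =
      ∑ s, w s * M.emit (h + 1) s p.1 * π.act hist p.1 p.2 *
        M.segProb π k (h + 1) (hist ++ [p]) (M.trans (h + 1) s p.2) τ := by
  unfold segProb
  rw [sum_tuple_eq_sum_cons]
  refine sum_congr rfl fun s _ => ?_
  rw [mul_sum]
  refine sum_congr rfl fun t _ => ?_
  rw [Fin.prod_univ_succ]
  congr 1
  · simp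
  refine prod_congr rfl fun ⟨i, hi⟩ _ => ?_
  have take_hist : hist ++ [p] ++ (List.ofFn τ).take i =
      hist ++ (List.ofFn (Fin.cons p τ : Fin (k + 1) → O × A)).take (i + 1) := by
    simp
  rw [take_hist]
  rcases i with _ | i
  · simp [Fin.cons]
  · have step_eq : h + 1 + (i + 1) = h + (i + 1 + 1) := by omega
    simp only [step_eq, Fin.succ_mk, Nat.add_sub_cancel]
    simp [Fin.cons]

lemma sum_segProb_mul (k : ℕ) :
    ∀ (h : ℕ) (hist : List (O × A)) (w : S → ℝ) (G : List (O × A) → ℝ), ∑ s, w s = 1 →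
      ∑ τ, M.segProb π k h hist w τ * G (List.ofFn τ) =
        ∑ s, w s * M.rollout π k (h + 1) hist s G := by
  induction k with
  | zero =>
    intro h hist w G hw
    simp [segProb, rollout, ← sum_mul, hw]
  | succ k ih =>
    intro h hist w G _
    have tail_sum (s : S) (p : O × A) :
        ∑ τ, M.segProb π k (h + 1) (hist ++ [p]) (M.trans (h + 1) s p.2) τ *
            G (p :: List.ofFn τ) =
          ∑ s', M.trans (h + 1) s p.2 s' *
            M.rollout π k (h + 2) (hist ++ [p]) s' (fun l => G (p :: l)) :=
      ih (h + 1) (hist ++ [p]) _ (fun l => G (p :: l)) (M.trans_sum _ _ _)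
    calc ∑ τ, M.segProb π (k + 1) h hist w τ * G (List.ofFn τ)
        = ∑ p : O × A, ∑ s, w s * M.emit (h + 1) s p.1 * π.act hist p.1 p.2 *
            ∑ τ, M.segProb π k (h + 1) (hist ++ [p]) (M.trans (h + 1) s p.2) τ *
              G (p :: List.ofFn τ) := by
          rw [sum_tuple_eq_sum_cons]
          simp only [segProb_cons, sum_mul, List.ofFn_cons, mul_sum, mul_assoc]
          exact sum_congr rfl fun p _ => sum_comm
      _ = ∑ s, w s * M.rollout π (k + 1) (h + 1) hist s G := by
          simp only [tail_sum, rollout, mul_sum, mul_assoc]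
          rw [sum_comm]
          exact sum_congr rfl fun s _ => Fintype.sum_prod_type _

lemma sum_trajProb_mul (G : List (O × A) → ℝ) :
    ∑ τ, M.trajProb π τ * G (List.ofFn τ) = ∑ s, M.init s * M.rollout π H 1 [] s G := by
  simp only [trajProb_eq_segProb]
  exact M.sum_segProb_mul π H 0 [] M.init G M.init_sum

lemma trajProb_nonneg (τ : Fin H → O × A) : 0 ≤ M.trajProb π τ := by
  refine sum_nonneg fun s _ => prod_nonneg fun h _ => ?_
  refine mul_nonneg (mul_nonneg ?_ (M.emit_nonneg _ _ _)) (π.act_nonneg _ _ _)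
  split_ifs
  · exact M.init_nonneg _
  · exact M.trans_nonneg _ _ _ _

lemma rollout_const (c : ℝ) (k : ℕ) :
    ∀ (h : ℕ) (hist : List (O × A)) (s : S), M.rollout π k h hist s (fun _ => c) = c := by
  induction k with
  | zero => intros; rfl
  | succ k ih =>
    intro h hist s
    simp [rollout, ih, ← sum_mul, M.trans_sum, π.act_sum, M.emit_sum]

lemma sum_trajProb : ∑ τ, M.trajProb π τ = 1 := by
  simpa [rollout_const, M.init_sum] using M.sum_trajProb_mul π fun _ => 1

lemma value_le_one : M.value π ≤ 1 :=
  calc M.value π ≤ ∑ τ, M.trajProb π τ * 1 :=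
        sum_le_sum fun τ _ => mul_le_mul_of_nonneg_left (M.reward_total τ) (M.trajProb_nonneg π τ)
    _ = 1 := by simp [sum_trajProb]

lemma value_le_optValue : M.value π ≤ M.optValue :=
  le_ciSup (f := M.value) ⟨1, by rintro _ ⟨π, rfl⟩; exact M.value_le_one π⟩ π

end POMDP

/-! ### Sequences of episodes -/

section EpisodeProcess

variable {Ω : Type*}

/-- `q l` is, for every list `l` of past episodes (the most recent one first), a probability vector:
the conditional law of the next episode. -/
structure IsEpisodeLaw [Fintype Ω] (q : List Ω → Ω → ℝ) : Prop where
  nonneg : ∀ l x, 0 ≤ q l x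
  sum_eq_one : ∀ l, ∑ x, q l x = 1

/-- Expectation over the first `T` episodes of the process with conditional episode laws `q`, as a
linear functional. It makes sense for any real weights `q`, which is needed for changes of
measure. -/
def episodeExpect [Fintype Ω] (q : List Ω → Ω → ℝ) : ℕ → (List Ω → ℝ) →ₗ[ℝ] ℝ
  | 0 => LinearMap.proj []
  | T + 1 => episodeExpect q T ∘ₗ
      { toFun := fun f l => ∑ x, q l x * f (x :: l)
        map_add' := fun f g => by ext l; simp [mul_add, sum_add_distrib]
        map_smul' := fun c f => by ext l; simp [mul_sum, mul_left_comm] }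

/-- Sum of `g` over the strict pasts of the episodes listed in `l`. -/
def pastSum (g : List Ω → ℝ) : List Ω → ℝ
  | [] => 0
  | _ :: l => g l + pastSum g l

/-- Total of the statistic `N` over the episodes listed in `l`. -/
def total (N : Ω → ℕ) (l : List Ω) : ℕ := (l.map N).sum

section PathwiseSums

@[simp]
lemma total_nil (N : Ω → ℕ) : total N [] = 0 := rfl

@[simp]
lemma total_cons (N : Ω → ℕ) (x : Ω) (l : List Ω) : total N (x :: l) = N x + total N l := rfl

lemma total_one (l : List Ω) : total (fun _ => 1) l = l.length := by simp [total]

lemma total_mono {N N' : Ω → ℕ} (h : ∀ x, N x ≤ N' x) (l : List Ω) : total N l ≤ total N' l :=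
  List.sum_le_sum fun x _ => h x

lemma total_sum {ι : Type*} (I : Finset ι) (N : ι → Ω → ℕ) (l : List Ω) :
    total (fun x => ∑ i ∈ I, N i x) l = ∑ i ∈ I, total (N i) l := by
  induction l with
  | nil => simp
  | cons x l ih => simp [ih, sum_add_distrib]

lemma pastSum_const_mul (c : ℝ) (g : List Ω → ℝ) (l : List Ω) :
    pastSum (fun l => c * g l) l = c * pastSum g l := by
  induction l with
  | nil => simp [pastSum]
  | cons x l ih => simp only [pastSum, ih, mul_add]

lemma pastSum_sub (g g' : List Ω → ℝ) (l : List Ω) :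
    pastSum (fun l => g l - g' l) l = pastSum g l - pastSum g' l := by
  induction l with
  | nil => simp [pastSum]
  | cons x l ih => simp only [pastSum, ih]; ring

lemma pastSum_const (c : ℝ) (l : List Ω) : pastSum (fun _ => c) l = l.length * c := by
  induction l with
  | nil => simp [pastSum]
  | cons x l ih => simp only [pastSum, ih, List.length_cons]; push_cast; ring

lemma pastSum_mono {g g' : List Ω → ℝ} (h : ∀ l, g l ≤ g' l) (l : List Ω) :
    pastSum g l ≤ pastSum g' l := by
  induction l with
  | nil => simp [pastSum]
  | cons _ l ih => exact add_le_add (h l) ih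

lemma pastSum_sum {ι : Type*} (I : Finset ι) (g : ι → List Ω → ℝ) (l : List Ω) :
    pastSum (fun l => ∑ i ∈ I, g i l) l = ∑ i ∈ I, pastSum (g i) l := by
  induction l with
  | nil => simp [pastSum]
  | cons x l ih => simp only [pastSum, ih, sum_add_distrib]

lemma pastSum_reverse (G : List Ω → ℝ) (l : List Ω) :
    pastSum (fun l => G l.reverse) l.reverse = ∑ t ∈ range l.length, G (l.take t) := by
  induction l using List.reverseRecOn with
  | nil => simp [pastSum]
  | append_singleton l x ih =>
    rw [List.reverse_append, List.reverse_singleton, List.singleton_append, pastSum, ih,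
      List.length_append, List.length_singleton, sum_range_succ, List.reverse_reverse, add_comm,
      List.take_left]
    congr 1
    refine sum_congr rfl fun t ht => ?_
    rw [List.take_append_of_le_length (mem_range.mp ht).le]

end PathwiseSums

variable [Fintype Ω] {q : List Ω → Ω → ℝ}

lemma episodeExpect_succ (T : ℕ) (f : List Ω → ℝ) :
    episodeExpect q (T + 1) f = episodeExpect q T (fun l => ∑ x, q l x * f (x :: l)) := rfl

lemma episodeExpect_add (T : ℕ) (f g : List Ω → ℝ) :
    episodeExpect q T (fun l => f l + g l) = episodeExpect q T f + episodeExpect q T g :=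
  map_add _ f g

lemma episodeExpect_sub (T : ℕ) (f g : List Ω → ℝ) :
    episodeExpect q T (fun l => f l - g l) = episodeExpect q T f - episodeExpect q T g :=
  map_sub _ f g

lemma episodeExpect_const_mul (T : ℕ) (c : ℝ) (f : List Ω → ℝ) :
    episodeExpect q T (fun l => c * f l) = c * episodeExpect q T f := map_smul _ c f

lemma episodeExpect_div_const (T : ℕ) (f : List Ω → ℝ) (c : ℝ) :
    episodeExpect q T (fun l => f l / c) = episodeExpect q T f / c := by
  simp only [div_eq_inv_mul, episodeExpect_const_mul]

lemma episodeExpect_sum {ι : Type*} (I : Finset ι) (T : ℕ) (f : ι → List Ω → ℝ) :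
    episodeExpect q T (fun l => ∑ i ∈ I, f i l) = ∑ i ∈ I, episodeExpect q T (f i) := by
  rw [← map_sum, Finset.sum_fn]

lemma sum_prod_mul_eq_episodeExpect (p : List Ω → Ω → ℝ) (T : ℕ) :
    ∀ f : List Ω → ℝ,
      ∑ x : Fin T → Ω, (∏ t : Fin T, p ((List.ofFn x).take t.1) (x t)) *
        f (List.ofFn x).reverse = episodeExpect (fun l => p l.reverse) T f := by
  induction T with
  | zero => intro f; simp [episodeExpect]
  | succ T ih =>
    intro f
    rw [sum_tuple_eq_sum_snoc, episodeExpect_succ, ← ih]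
    refine sum_congr rfl fun z _ => ?_
    rw [mul_sum]
    refine sum_congr rfl fun y _ => ?_
    have ofFn_snoc : List.ofFn (Fin.snoc (α := fun _ => Ω) z y) = List.ofFn z ++ [y] := by
      rw [List.ofFn_succ', List.concat_eq_append]
      simp only [Fin.snoc_castSucc, Fin.snoc_last]
    have take_init (t : Fin T) :
        (List.ofFn z ++ [y]).take t.castSucc.1 = (List.ofFn z).take t.1 :=
      List.take_append_of_le_length (by simp [t.2.le])
    have take_last : (List.ofFn z ++ [y]).take (Fin.last T).1 = List.ofFn z :=
      List.take_left' (by simp)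
    rw [Fin.prod_univ_castSucc, ofFn_snoc]
    simp only [take_init, take_last, Fin.snoc_castSucc, Fin.snoc_last, List.reverse_append,
      List.reverse_singleton, List.singleton_append, List.reverse_reverse, mul_assoc]

lemma episodeExpect_eq_of_martingale {f : List Ω → ℝ} (h : ∀ l, ∑ x, q l x * f (x :: l) = f l)
    (T : ℕ) : episodeExpect q T f = f [] := by
  induction T with
  | zero => rfl
  | succ T ih => simp only [episodeExpect_succ, h, ih]

lemma episodeExpect_mul_likelihood (r : Ω → ℝ) (T : ℕ) :
    ∀ f : List Ω → ℝ,
      episodeExpect (fun l x => q l x * r x) T f =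
        episodeExpect q T (fun l => (l.map r).prod * f l) := by
  induction T with
  | zero => intro f; simp [episodeExpect]
  | succ T ih =>
    intro f
    simp only [episodeExpect_succ, ih, mul_sum, List.map_cons, List.prod_cons]
    congr! 3
    ring

lemma episodeExpect_congr_of_length (T : ℕ) :
    ∀ {f g : List Ω → ℝ}, (∀ l, l.length = T → f l = g l) →
      episodeExpect q T f = episodeExpect q T g := by
  induction T with
  | zero => intro f g h; exact h [] rfl
  | succ T ih =>
    intro f g h
    refine ih fun l hl => sum_congr rfl fun x _ => ?_
    rw [h (x :: l) (by simp [hl])]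

namespace IsEpisodeLaw

variable (hq : IsEpisodeLaw q)

include hq

lemma episodeExpect_mono (T : ℕ) :
    ∀ {f g : List Ω → ℝ}, (∀ l, f l ≤ g l) → episodeExpect q T f ≤ episodeExpect q T g := by
  induction T with
  | zero => intro f g h; exact h _
  | succ _ ih =>
    intro f g h
    exact ih fun l => sum_le_sum fun x _ => mul_le_mul_of_nonneg_left (h _) (hq.nonneg _ _)

lemma episodeExpect_const (T : ℕ) (c : ℝ) : episodeExpect q T (fun _ => c) = c :=
  episodeExpect_eq_of_martingale (fun l => by rw [← sum_mul, hq.sum_eq_one, one_mul]) T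

lemma episodeExpect_nonneg (T : ℕ) {f : List Ω → ℝ} (hf : ∀ l, 0 ≤ f l) : 0 ≤ episodeExpect q T f :=
  (hq.episodeExpect_const T 0).symm.le.trans (hq.episodeExpect_mono T hf)

lemma episodeExpect_length (T : ℕ) : episodeExpect q T (fun l => (l.length : ℝ)) = T :=
  (episodeExpect_congr_of_length T fun _ hl => by rw [hl]).trans (hq.episodeExpect_const T T)

lemma episodeExpect_pastSum_succ (g : List Ω → ℝ) (T : ℕ) :
    episodeExpect q (T + 1) (pastSum g) = episodeExpect q T g + episodeExpect q T (pastSum g) := by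
  simp only [episodeExpect_succ, pastSum, ← sum_mul, hq.sum_eq_one, one_mul, episodeExpect_add]

lemma episodeExpect_pastSum_le {g : List Ω → ℝ} (hg : ∀ l, 0 ≤ g l) {T T' : ℕ} (h : T ≤ T') :
    episodeExpect q T (pastSum g) ≤ episodeExpect q T' (pastSum g) := by
  induction h with
  | refl => rfl
  | @step k _ ih =>
    rw [hq.episodeExpect_pastSum_succ]
    linarith [hq.episodeExpect_nonneg k hg]

lemma episodeExpect_total (N : Ω → ℕ) (T : ℕ) :
    episodeExpect q T (fun l => (total N l : ℝ)) =
      episodeExpect q T (pastSum fun l => ∑ x, q l x * N x) := by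
  induction T with
  | zero => simp [episodeExpect, pastSum]
  | succ T ih =>
    rw [hq.episodeExpect_pastSum_succ, ← ih, ← episodeExpect_add, episodeExpect_succ]
    simp only [total_cons, Nat.cast_add, mul_add, sum_add_distrib, ← sum_mul, hq.sum_eq_one,
      one_mul]

lemma episodeExpect_abs_sub_one_le {f : List Ω → ℝ} {δ : ℝ} (hδ : 0 < δ) {T : ℕ}
    (hf : episodeExpect q T f = 1) (hf2 : episodeExpect q T (fun l => f l ^ 2) ≤ 1 + δ ^ 2) :
    episodeExpect q T (fun l => |f l - 1|) ≤ δ := by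
  have amgm (l : List Ω) : |f l - 1| ≤ (2 * δ)⁻¹ * (f l ^ 2 - 2 * f l + (1 + δ ^ 2)) := by
    rw [inv_mul_eq_div, le_div_iff₀ (by positivity)]
    nlinarith [sq_nonneg (|f l - 1| - δ), sq_abs (f l - 1)]
  calc episodeExpect q T (fun l => |f l - 1|)
      ≤ (2 * δ)⁻¹ * (episodeExpect q T (fun l => f l ^ 2) - 2 * 1 + (1 + δ ^ 2)) := by
        rw [← hf, ← hq.episodeExpect_const T (episodeExpect q T f + δ ^ 2),
          ← episodeExpect_const_mul, ← episodeExpect_sub, ← episodeExpect_add,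
          ← episodeExpect_const_mul, hf]
        exact hq.episodeExpect_mono T amgm
    _ ≤ (2 * δ)⁻¹ * (2 * δ ^ 2) := by gcongr; linarith
    _ = δ := by field_simp

end IsEpisodeLaw

end EpisodeProcess

namespace POMDP

variable {S O A : Type} [Fintype S] [Fintype O] [Fintype A] {H : ℕ}

/-- Law of the next episode when `𝔄` interacts with `M`, given the past episodes listed with the
most recent one first. -/
def episodeLaw (M : POMDP S O A H) (𝔄 : Algorithm O A H) (l : List (Fin H → O × A)) :
    (Fin H → O × A) → ℝ :=
  M.trajProb (𝔄.policyAt l.reverse)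

variable (M : POMDP S O A H) (𝔄 : Algorithm O A H)

lemma isEpisodeLaw_episodeLaw : IsEpisodeLaw (M.episodeLaw 𝔄) where
  nonneg _ _ := M.trajProb_nonneg _ _
  sum_eq_one _ := M.sum_trajProb _

lemma sum_transcriptProb_mul (T : ℕ) (f : List (Fin H → O × A) → ℝ) :
    ∑ τs : Fin T → Fin H → O × A, M.transcriptProb 𝔄 τs * f (List.ofFn τs).reverse =
      episodeExpect (M.episodeLaw 𝔄) T f :=
  sum_prod_mul_eq_episodeExpect (fun l x => M.trajProb (𝔄.policyAt l) x) T f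

lemma expRegret_eq_episodeExpect (T : ℕ) :
    M.expRegret 𝔄 T = episodeExpect (M.episodeLaw 𝔄) T
      (pastSum fun l => M.optValue - M.value (𝔄.policyAt l.reverse)) := by
  rw [← sum_transcriptProb_mul]
  refine sum_congr rfl fun τs _ => ?_
  rw [pastSum_reverse (fun l => M.optValue - M.value (𝔄.policyAt l)), List.length_ofFn,
    Fin.sum_univ_eq_sum_range fun t => M.optValue - M.value (𝔄.policyAt ((List.ofFn τs).take t))]

open Classical in
lemma pacProb_eq_episodeExpect (T : ℕ) (δ : ℝ) :
    M.pacProb 𝔄 T δ = episodeExpect (M.episodeLaw 𝔄) T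
      (fun l => if M.optValue - M.value (𝔄.out l.reverse) < δ then 1 else 0) := by
  rw [← sum_transcriptProb_mul]
  refine sum_congr rfl fun τs _ => ?_
  rw [List.reverse_reverse]
  split_ifs <;> simp

lemma expRegret_mono {T T' : ℕ} (h : T ≤ T') : M.expRegret 𝔄 T ≤ M.expRegret 𝔄 T' := by
  rw [expRegret_eq_episodeExpect, expRegret_eq_episodeExpect]
  exact (M.isEpisodeLaw_episodeLaw 𝔄).episodeExpect_pastSum_le
    (fun l => sub_nonneg.2 (M.value_le_optValue _)) h

end POMDP

/-! ### Random sign vectors -/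

section SignVectors

/-- The sign `±1` encoded by a Boolean. -/
def boolSign (b : Bool) : ℝ := if b then 1 else -1

lemma abs_boolSign (b : Bool) : |boolSign b| = 1 := by cases b <;> simp [boolSign]

variable {K : ℕ}

/-- Normalised correlation of two sign vectors. -/
def corr (v v' : Fin K → Bool) : ℝ := (∑ k, boolSign (v k) * boolSign (v' k)) / K

lemma abs_corr_le_one (v v' : Fin K → Bool) : |corr v v'| ≤ 1 := by
  rw [corr, abs_div, Nat.abs_cast]
  refine div_le_one_of_le₀ ((abs_sum_le_sum_abs _ _).trans ?_) (Nat.cast_nonneg _)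
  simp [abs_mul, abs_boolSign]

lemma sum_exp_mul_corr (v : Fin K → Bool) (c : ℝ) :
    ∑ v', Real.exp (c * corr v v') = 2 ^ K * Real.cosh (c / K) ^ K :=
  calc ∑ v', Real.exp (c * corr v v')
      = ∑ v' : Fin K → Bool, ∏ k, Real.exp (c / K * (boolSign (v k) * boolSign (v' k))) := by
        refine sum_congr rfl fun v' _ => ?_
        rw [← Real.exp_sum, ← mul_sum, corr, ← mul_div_right_comm, mul_div_assoc]
    _ = ∏ k, ∑ b, Real.exp (c / K * (boolSign (v k) * boolSign b)) := by
        rw [prod_univ_sum, Fintype.piFinset_univ]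
    _ = ∏ _k : Fin K, 2 * Real.cosh (c / K) := by
        refine prod_congr rfl fun k _ => ?_
        rw [Real.cosh_eq]
        cases v k <;> simp [boolSign] <;> ring
    _ = 2 ^ K * Real.cosh (c / K) ^ K := by simp [mul_pow]

lemma exp_one_div_fifty_le : Real.exp (1 / 50) ≤ 1.0203 := by
  refine (Real.exp_bound' (n := 3) (by norm_num) (by norm_num) (by norm_num)).trans ?_
  norm_num [sum_range_succ, Nat.factorial]

lemma cosh_two_mul_div_pow_le {lam : ℝ} (hK : 1 ≤ K) (hlam : lam ^ 2 ≤ K / 100) :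
    Real.cosh (2 * lam / K) ^ K ≤ 1.0203 := by
  have K_pos : (0 : ℝ) < K := by exact_mod_cast hK
  calc Real.cosh (2 * lam / K) ^ K ≤ Real.exp ((2 * lam / K) ^ 2 / 2) ^ K :=
        pow_le_pow_left₀ (Real.cosh_pos _).le (Real.cosh_le_exp_half_sq _) _
    _ = Real.exp (2 * lam ^ 2 / K) := by
        rw [← Real.exp_nat_mul]; congr 1; field_simp
    _ ≤ Real.exp (1 / 50) := by
        rw [Real.exp_le_exp, div_le_iff₀ K_pos]
        linarith
    _ ≤ 1.0203 := exp_one_div_fifty_le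

/-- The correlation with a uniformly random sign vector is subgaussian at scale `1 / √K`: this is
where the factor `√K` of the lower bounds comes from. -/
lemma sum_one_add_abs_exp_corr_sub_one_le (hK : 1 ≤ K) (v : Fin K → Bool) {lam : ℝ} (h0 : 0 ≤ lam)
    (hlam : lam ≤ √K / 10) :
    ∑ v', (1 + |Real.exp (lam * corr v v') - 1|) ≤ 2 ^ K * 1.15 := by
  -- AM-GM: `|y - 1| ≤ (7/2) (y - 1) ^ 2 + 1/14`
  have amgm (v' : Fin K → Bool) : 1 + |Real.exp (lam * corr v v') - 1| ≤
      (7 / 2) * Real.exp (2 * lam * corr v v') - 7 * Real.exp (lam * corr v v')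
        + (7 / 2 + 1 + 1 / 14) := by
    have exp_sq : Real.exp (2 * lam * corr v v') = Real.exp (lam * corr v v') ^ 2 := by
      rw [← Real.exp_nat_mul, mul_assoc]; rfl
    rw [exp_sq]
    set y := Real.exp (lam * corr v v')
    nlinarith [sq_nonneg (|y - 1| - 1 / 7), sq_abs (y - 1)]
  have lam_sq : lam ^ 2 ≤ K / 100 := by
    have := pow_le_pow_left₀ h0 hlam 2
    rw [div_pow, Real.sq_sqrt (Nat.cast_nonneg K)] at this
    linarith
  have second_moment := cosh_two_mul_div_pow_le hK lam_sq
  have first_moment : (1 : ℝ) ≤ Real.cosh (lam / K) ^ K := one_le_pow₀ (Real.one_le_cosh _)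
  calc ∑ v', (1 + |Real.exp (lam * corr v v') - 1|)
      ≤ 2 ^ K * ((7 / 2) * Real.cosh (2 * lam / K) ^ K - 7 * Real.cosh (lam / K) ^ K
          + (7 / 2 + 1 + 1 / 14)) := by
        refine (sum_le_sum fun v' _ => amgm v').trans_eq ?_
        rw [sum_add_distrib, sum_sub_distrib, ← mul_sum, ← mul_sum, sum_exp_mul_corr,
          sum_exp_mul_corr]
        simp
        ring
    _ ≤ 2 ^ K * 1.15 := by gcongr; linarith

end SignVectors

lemma one_add_pow_le_one_add_abs_exp {x : ℝ} (hx : 0 < 1 + x) {j n : ℕ} (hj : j ≤ n) :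
    (1 + x) ^ j ≤ 1 + |Real.exp (n * x) - 1| := by
  rcases le_total 0 x with h | h
  · calc (1 + x) ^ j ≤ (1 + x) ^ n := pow_le_pow_right₀ (by linarith) hj
      _ ≤ Real.exp x ^ n := pow_le_pow_left₀ hx.le (by linarith [Real.add_one_le_exp x]) _
      _ = Real.exp (n * x) := (Real.exp_nat_mul _ _).symm
      _ ≤ 1 + |Real.exp (n * x) - 1| := by linarith [le_abs_self (Real.exp (n * x) - 1)]
  · have := pow_le_one₀ (n := j) hx.le (by linarith)
    linarith [abs_nonneg (Real.exp (n * x) - 1)]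

/-! ### Truncated likelihood ratios -/

section Testing

variable {Ω : Type*} {K n n₁ n₂ : ℕ} {ε s : ℝ} {N F : Ω → ℕ}

/-- Bias of the signals that a truncated likelihood ratio still takes into account: it is switched
off once the episodes in `l` contain `n` occurrences of `N`. -/
def activeBias (ε : ℝ) (n : ℕ) (N : Ω → ℕ) (l : List Ω) : ℝ := if total N l < n then ε else 0

lemma activeBias_mem_Icc (hε : 0 ≤ ε) (hε1 : ε < 1) (l : List Ω) :
    activeBias ε n N l ∈ Set.Icc 0 1 := by
  unfold activeBias
  split_ifs
  · exact ⟨hε, hε1.le⟩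
  · simp

lemma one_add_pow_min_total_cons (c : ℝ) {x : Ω} (hx : N x ≤ 1) (l : List Ω) :
    (1 + c * ε ^ 2) ^ min (total N (x :: l)) n =
      (1 + c * ε ^ 2) ^ min (total N l) n * (1 + c * activeBias ε n N l ^ 2) ^ N x := by
  rw [total_cons, activeBias]
  have : N x = 0 ∨ N x = 1 := by omega
  rcases this with h | h <;> rw [h]
  · simp
  · split_ifs with hlt
    · rw [← pow_add]; congr 1; omega
    · rw [min_eq_right (by omega), min_eq_right (by omega)]; simp

lemma one_add_mul_nonneg_of_abs_le_one {c y : ℝ} (hc : c ∈ Set.Icc 0 1) (hy : |y| ≤ 1) :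
    0 ≤ 1 + c * y := by
  have := abs_le.1 hy
  nlinarith [hc.1, hc.2]

/-- Likelihood ratio of the process with signals `X` biased by `ε` against the unbiased one, where
only the first `n₁` occurrences of `N` and the first `n₂` occurrences of `F` are biased. -/
def truncLR (ε : ℝ) (n₁ n₂ : ℕ) (N F : Ω → ℕ) (X : Ω → ℝ) : List Ω → ℝ
  | [] => 1
  | x :: l => truncLR ε n₁ n₂ N F X l *
      (1 + (activeBias ε n₁ N l * N x + activeBias ε n₂ F l * F x) * X x)

/-- Average of the truncated likelihood ratios over the sign vectors. -/
def mixtureLR (ε : ℝ) (n₁ n₂ : ℕ) (N F : Ω → ℕ) (X : (Fin K → Bool) → Ω → ℝ) (l : List Ω) : ℝ :=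
  (2 ^ K)⁻¹ * ∑ v, truncLR ε n₁ n₂ N F (X v) l

/-- An episode carries at most one signal `X v`, a probe (counted by `N`) or an unlock (counted by
`F`). Signals are centred; for two sign vectors `v`, `v'`, probes have conditional covariance
`s ^ 2 * corr v v'`, while unlocks do not depend on the sign vector. -/
structure IsSignal [Fintype Ω] (q : List Ω → Ω → ℝ) (s : ℝ) (N F : Ω → ℕ)
    (X : (Fin K → Bool) → Ω → ℝ) : Prop where
  count_le_one : ∀ x, N x + F x ≤ 1
  abs_le_one : ∀ v x, |X v x| ≤ 1
  eq_zero : ∀ v x, N x + F x = 0 → X v x = 0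
  sum_probe : ∀ v l, ∑ x, q l x * (N x * X v x) = 0
  sum_unlock : ∀ v l, ∑ x, q l x * (F x * X v x) = 0
  sum_probe_mul : ∀ v v' l,
    ∑ x, q l x * (N x * (X v x * X v' x - s ^ 2 * corr v v')) = 0
  sum_unlock_mul : ∀ v v' l, ∑ x, q l x * (F x * (X v x * X v' x - 1)) = 0

namespace IsSignal

variable [Fintype Ω] {q : List Ω → Ω → ℝ} {X : (Fin K → Bool) → Ω → ℝ} (hX : IsSignal q s N F X)

include hX

lemma count_cases (x : Ω) : N x = 0 ∧ F x = 0 ∨ N x = 1 ∧ F x = 0 ∨ N x = 0 ∧ F x = 1 := by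
  have := hX.count_le_one x
  omega

lemma truncLR_nonneg (hε : 0 ≤ ε) (hε1 : ε < 1) (v : Fin K → Bool) (l : List Ω) :
    0 ≤ truncLR ε n₁ n₂ N F (X v) l := by
  induction l with
  | nil => simp [truncLR]
  | cons x l ih =>
    refine mul_nonneg ih (one_add_mul_nonneg_of_abs_le_one ?_ (hX.abs_le_one v x))
    rcases hX.count_cases x with ⟨hN, hF⟩ | ⟨hN, hF⟩ | ⟨hN, hF⟩
    · simp [hN, hF]
    · simpa [hN, hF] using activeBias_mem_Icc (n := n₁) (N := N) hε hε1 l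
    · simpa [hN, hF] using activeBias_mem_Icc (n := n₂) (N := F) hε hε1 l

lemma truncLR_eq_prod (v : Fin K → Bool) (l : List Ω) (hN : total N l ≤ n₁) (hF : total F l ≤ n₂) :
    truncLR ε n₁ n₂ N F (X v) l = (l.map fun x => 1 + ε * X v x).prod := by
  induction l with
  | nil => simp [truncLR]
  | cons x l ih =>
    rw [total_cons] at hN hF
    rw [truncLR, ih (by omega) (by omega), List.map_cons, List.prod_cons, mul_comm]
    congr 1
    rcases hX.count_cases x with ⟨hNx, hFx⟩ | ⟨hNx, hFx⟩ | ⟨hNx, hFx⟩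
    · rw [hX.eq_zero v x (by omega)]; simp
    · simp [hNx, hFx, activeBias, show total N l < n₁ by omega]
    · simp [hNx, hFx, activeBias, show total F l < n₂ by omega]

variable (hq : IsEpisodeLaw q)

section

include hq

lemma sum_mul_one_add (v : Fin K → Bool) (l : List Ω) (c₁ c₂ : ℝ) :
    ∑ x, q l x * (1 + (c₁ * N x + c₂ * F x) * X v x) = 1 := by
  have expand (x : Ω) : q l x * (1 + (c₁ * N x + c₂ * F x) * X v x) =
      q l x + c₁ * (q l x * (N x * X v x)) + c₂ * (q l x * (F x * X v x)) := by ring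
  simp only [expand, sum_add_distrib, ← mul_sum, hq.sum_eq_one, hX.sum_probe, hX.sum_unlock]
  ring

lemma sum_mul_one_add_mul_one_add_div (v v' : Fin K → Bool) (l : List Ω) (c₁ c₂ : ℝ)
    (hpos : 0 < 1 + s ^ 2 * corr v v' * c₁ ^ 2) :
    ∑ x, q l x * ((1 + (c₁ * N x + c₂ * F x) * X v x) * (1 + (c₁ * N x + c₂ * F x) * X v' x) /
      ((1 + s ^ 2 * corr v v' * c₁ ^ 2) ^ N x * (1 + c₂ ^ 2) ^ F x)) = 1 := by
  have expand (κ : ℝ) (hκ : 1 + κ * c₁ ^ 2 ≠ 0) (x : Ω) : q l x *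
      ((1 + (c₁ * N x + c₂ * F x) * X v x) * (1 + (c₁ * N x + c₂ * F x) * X v' x) /
        ((1 + κ * c₁ ^ 2) ^ N x * (1 + c₂ ^ 2) ^ F x)) =
      q l x + c₁ / (1 + κ * c₁ ^ 2) * (q l x * (N x * X v x)) +
        c₁ / (1 + κ * c₁ ^ 2) * (q l x * (N x * X v' x)) +
        c₁ ^ 2 / (1 + κ * c₁ ^ 2) * (q l x * (N x * (X v x * X v' x - κ))) +
        c₂ / (1 + c₂ ^ 2) * (q l x * (F x * X v x)) +
        c₂ / (1 + c₂ ^ 2) * (q l x * (F x * X v' x)) +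
        c₂ ^ 2 / (1 + c₂ ^ 2) * (q l x * (F x * (X v x * X v' x - 1))) := by
    have : 1 + c₂ ^ 2 ≠ 0 := by positivity
    rw [mul_comm κ] at hκ ⊢
    rcases hX.count_cases x with ⟨hN, hF⟩ | ⟨hN, hF⟩ | ⟨hN, hF⟩ <;>
      simp only [hN, hF, pow_zero, pow_one, Nat.cast_zero, Nat.cast_one] <;> field_simp <;> ring
  simp only [expand _ hpos.ne', sum_add_distrib, ← mul_sum, hq.sum_eq_one, hX.sum_probe,
    hX.sum_unlock, hX.sum_probe_mul, hX.sum_unlock_mul]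
  ring

lemma episodeExpect_truncLR (v : Fin K → Bool) (T : ℕ) :
    episodeExpect q T (truncLR ε n₁ n₂ N F (X v)) = 1 := by
  refine episodeExpect_eq_of_martingale (fun l => ?_) T
  simp only [truncLR, mul_left_comm (q l _), ← mul_sum, hX.sum_mul_one_add hq, mul_one]

/-- The product of two truncated likelihood ratios becomes a martingale after division by its
predictable growth. -/
lemma episodeExpect_truncLR_mul_div (v v' : Fin K → Bool)
    (hpos : 0 < 1 + s ^ 2 * corr v v' * ε ^ 2) (T : ℕ) :
    episodeExpect q T (fun l => truncLR ε n₁ n₂ N F (X v) l * truncLR ε n₁ n₂ N F (X v') l /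
      ((1 + s ^ 2 * corr v v' * ε ^ 2) ^ min (total N l) n₁ *
        (1 + 1 * ε ^ 2) ^ min (total F l) n₂)) = 1 := by
  rw [episodeExpect_eq_of_martingale]
  · simp [truncLR]
  intro l
  have hNF (x : Ω) : N x ≤ 1 ∧ F x ≤ 1 := by have := hX.count_le_one x; omega
  have active_pos : 0 < 1 + s ^ 2 * corr v v' * activeBias ε n₁ N l ^ 2 := by
    unfold activeBias
    split_ifs
    · exact hpos
    · norm_num
  have one_step := hX.sum_mul_one_add_mul_one_add_div hq v v' l _ (activeBias ε n₂ F l) active_pos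
  refine Eq.trans ?_ ((congrArg (_ * ·) one_step).trans (mul_one _))
  rw [mul_sum]
  refine sum_congr rfl fun x _ => ?_
  rw [one_add_pow_min_total_cons _ (hNF x).1, one_add_pow_min_total_cons _ (hNF x).2, truncLR,
    truncLR, one_mul (activeBias ε n₂ F l ^ 2)]
  ring

end

include hq

lemma episodeExpect_truncLR_mul_le (hε : 0 ≤ ε) (hε1 : ε < 1) (v v' : Fin K → Bool)
    (hpos : 0 < 1 + s ^ 2 * corr v v' * ε ^ 2) {B : ℝ}
    (hB : ∀ j ≤ n₁, (1 + s ^ 2 * corr v v' * ε ^ 2) ^ j ≤ B) (T : ℕ) :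
    episodeExpect q T (fun l => truncLR ε n₁ n₂ N F (X v) l * truncLR ε n₁ n₂ N F (X v') l) ≤
      B * (1 + ε ^ 2) ^ n₂ := by
  have normalized := hX.episodeExpect_truncLR_mul_div (n₁ := n₁) (n₂ := n₂) hq v v' hpos T
  replace normalized := congrArg (B * (1 + ε ^ 2) ^ n₂ * ·) normalized
  simp only [mul_one, ← episodeExpect_const_mul] at normalized
  refine (hq.episodeExpect_mono T fun l => ?_).trans_eq normalized
  have growth_pos : 0 < (1 + s ^ 2 * corr v v' * ε ^ 2) ^ min (total N l) n₁ *
      (1 + 1 * ε ^ 2) ^ min (total F l) n₂ := by positivity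
  rw [mul_div_assoc', le_div_iff₀ growth_pos, mul_comm]
  refine mul_le_mul_of_nonneg_right (mul_le_mul (hB _ (min_le_right _ _)) ?_ (by positivity) ?_)
    (mul_nonneg (hX.truncLR_nonneg hε hε1 v l) (hX.truncLR_nonneg hε hε1 v' l))
  · rw [one_mul]
    exact pow_le_pow_right₀ (le_add_of_nonneg_right (sq_nonneg ε)) (min_le_right _ _)
  · exact zero_le_one.trans (by simpa using hB 0 (Nat.zero_le _))

lemma episodeExpect_mixtureLR (T : ℕ) :
    episodeExpect q T (mixtureLR ε n₁ n₂ N F X) = 1 := by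
  unfold mixtureLR
  rw [episodeExpect_const_mul, episodeExpect_sum]
  simp [hX.episodeExpect_truncLR hq]

variable (hε : 0 ≤ ε) (hε1 : ε < 1) (hs : |s| ≤ 1) (hK : 1 ≤ K)
  (hn₁ : n₁ * (ε ^ 2 * s ^ 2) ≤ √K / 10) (hn₂ : n₂ * ε ^ 2 ≤ 1 / 50)

include hε hε1 hs hK hn₁ hn₂

lemma sum_episodeExpect_truncLR_mul_le (v : Fin K → Bool) (T : ℕ) :
    ∑ v', episodeExpect q T
        (fun l => truncLR ε n₁ n₂ N F (X v) l * truncLR ε n₁ n₂ N F (X v') l) ≤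
      2 ^ K * 1.15 * 1.0203 := by
  have unlock_growth : (1 + ε ^ 2) ^ n₂ ≤ 1.0203 :=
    calc (1 + ε ^ 2) ^ n₂ ≤ Real.exp (ε ^ 2) ^ n₂ :=
          pow_le_pow_left₀ (by positivity) (by linarith [Real.add_one_le_exp (ε ^ 2)]) _
      _ = Real.exp (n₂ * ε ^ 2) := (Real.exp_nat_mul _ _).symm
      _ ≤ Real.exp (1 / 50) := Real.exp_le_exp.2 hn₂
      _ ≤ 1.0203 := exp_one_div_fifty_le
  have probe_growth (v' : Fin K → Bool) : episodeExpect q T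
      (fun l => truncLR ε n₁ n₂ N F (X v) l * truncLR ε n₁ n₂ N F (X v') l) ≤
        (1 + |Real.exp (n₁ * (ε ^ 2 * s ^ 2) * corr v v') - 1|) * 1.0203 := by
    have hpos : 0 < 1 + s ^ 2 * corr v v' * ε ^ 2 := by
      have hs2 : s ^ 2 ≤ 1 := (sq_le_one_iff_abs_le_one s).2 hs
      have : s ^ 2 * ε ^ 2 < 1 := by nlinarith [sq_nonneg s]
      nlinarith [(abs_le.1 (abs_corr_le_one v v')).1, mul_nonneg (sq_nonneg s) (sq_nonneg ε)]
    refine (hX.episodeExpect_truncLR_mul_le hq hε hε1 v v' hpos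
      (fun j hj => one_add_pow_le_one_add_abs_exp hpos hj) T).trans ?_
    rw [show n₁ * (s ^ 2 * corr v v' * ε ^ 2) = n₁ * (ε ^ 2 * s ^ 2) * corr v v' by ring]
    gcongr
  refine (sum_le_sum fun v' _ => probe_growth v').trans ?_
  rw [← sum_mul]
  gcongr
  exact sum_one_add_abs_exp_corr_sub_one_le hK v (by positivity) hn₁

lemma episodeExpect_mixtureLR_sq_le (T : ℕ) :
    episodeExpect q T (fun l => mixtureLR ε n₁ n₂ N F X l ^ 2) ≤ 1.15 * 1.0203 := by
  have expand (l : List Ω) : mixtureLR ε n₁ n₂ N F X l ^ 2 = (2 ^ K)⁻¹ * ((2 ^ K)⁻¹ *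
      ∑ v, ∑ v', truncLR ε n₁ n₂ N F (X v) l * truncLR ε n₁ n₂ N F (X v') l) := by
    rw [mixtureLR, ← sum_mul_sum]
    ring
  simp only [expand, episodeExpect_const_mul, episodeExpect_sum]
  calc (2 ^ K : ℝ)⁻¹ * ((2 ^ K)⁻¹ * ∑ v, ∑ v', episodeExpect q T
        (fun l => truncLR ε n₁ n₂ N F (X v) l * truncLR ε n₁ n₂ N F (X v') l))
      ≤ (2 ^ K)⁻¹ * ((2 ^ K)⁻¹ * ∑ _v : Fin K → Bool, 2 ^ K * 1.15 * 1.0203) := by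
        gcongr with v
        exact hX.sum_episodeExpect_truncLR_mul_le hq hε hε1 hs hK hn₁ hn₂ v T
    _ = 1.15 * 1.0203 := by simp; field_simp

lemma episodeExpect_abs_mixtureLR_sub_one_le (T : ℕ) :
    episodeExpect q T (fun l => |mixtureLR ε n₁ n₂ N F X l - 1|) ≤ 0.42 :=
  hq.episodeExpect_abs_sub_one_le (by norm_num) (hX.episodeExpect_mixtureLR hq T)
    ((hX.episodeExpect_mixtureLR_sq_le hq hε hε1 hs hK hn₁ hn₂ T).trans (by norm_num))

omit hq hs hK hn₁ hn₂ in
/-- Pathwise, the biased mixture dominates the reference up to the truncation events and the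
deviation of the mixture from `1`. -/
lemma sub_le_average_prod_mul {Y : ℝ} (hY0 : 0 ≤ Y) (hY1 : Y ≤ 1) (l : List Ω) :
    Y - (total N l : ℝ) / (n₁ + 1) - (total F l : ℝ) / (n₂ + 1) - |mixtureLR ε n₁ n₂ N F X l - 1| ≤
      (2 ^ K)⁻¹ * ∑ v, (l.map fun x => 1 + ε * X v x).prod * Y := by
  have hN0 : (0 : ℝ) ≤ total N l / (n₁ + 1) := by positivity
  have hF0 : (0 : ℝ) ≤ total F l / (n₂ + 1) := by positivity
  by_cases untruncated : total N l ≤ n₁ ∧ total F l ≤ n₂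
  · simp only [← hX.truncLR_eq_prod _ l untruncated.1 untruncated.2]
    rw [← sum_mul, ← mul_assoc, ← mixtureLR]
    nlinarith [neg_abs_le (mixtureLR ε n₁ n₂ N F X l - 1),
      abs_nonneg (mixtureLR ε n₁ n₂ N F X l - 1)]
  · have truncated : (1 : ℝ) ≤ total N l / (n₁ + 1) + total F l / (n₂ + 1) := by
      rcases not_and_or.1 untruncated with h | h
      · have : (1 : ℝ) ≤ total N l / (n₁ + 1) := by
          rw [one_le_div (by positivity)]; exact_mod_cast not_le.1 h
        linarith
      · have : (1 : ℝ) ≤ total F l / (n₂ + 1) := by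
          rw [one_le_div (by positivity)]; exact_mod_cast not_le.1 h
        linarith
    have prod_nonneg (v : Fin K → Bool) : 0 ≤ (l.map fun x => 1 + ε * X v x).prod := by
      refine List.prod_nonneg fun y hy => ?_
      obtain ⟨x, _, rfl⟩ := List.mem_map.1 hy
      exact one_add_mul_nonneg_of_abs_le_one ⟨hε, hε1.le⟩ (hX.abs_le_one v x)
    have : 0 ≤ (2 ^ K)⁻¹ * ∑ v, (l.map fun x => 1 + ε * X v x).prod * Y :=
      mul_nonneg (by positivity) (sum_nonneg fun v _ => mul_nonneg (prod_nonneg v) hY0)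
    linarith [abs_nonneg (mixtureLR ε n₁ n₂ N F X l - 1)]

lemma episodeExpect_sub_le_average {Y : List Ω → ℝ} (hY0 : ∀ l, 0 ≤ Y l) (hY1 : ∀ l, Y l ≤ 1)
    (T : ℕ) :
    episodeExpect q T Y - episodeExpect q T (fun l => (total N l : ℝ)) / (n₁ + 1) -
        episodeExpect q T (fun l => (total F l : ℝ)) / (n₂ + 1) - 0.42 ≤
      (2 ^ K)⁻¹ * ∑ v, episodeExpect (fun l x => q l x * (1 + ε * X v x)) T Y := by
  have dev := hX.episodeExpect_abs_mixtureLR_sub_one_le hq hε hε1 hs hK hn₁ hn₂ T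
  have pathwise := hq.episodeExpect_mono T fun l =>
    hX.sub_le_average_prod_mul (n₁ := n₁) (n₂ := n₂) hε hε1 (hY0 l) (hY1 l) l
  simp only [episodeExpect_sub, episodeExpect_div_const, episodeExpect_const_mul,
    episodeExpect_sum, ← episodeExpect_mul_likelihood] at pathwise
  linarith

end IsSignal

end Testing

/-! ### Averaging over the secrets -/

section AveragingOverSecrets

variable {Ω E P : Type*} [Fintype Ω] [Fintype E] [Fintype P] {K n₁ n₂ : ℕ} {ε s : ℝ}
  {q : List Ω → Ω → ℝ} {N F : E × P → Ω → ℕ}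

lemma IsEpisodeLaw.sum_episodeExpect_total_le_of_probes (hq : IsEpisodeLaw q) {R : Ω → ℕ}
    (hR : ∀ w x, ∑ e, N (e, w) x ≤ R x) (T : ℕ) :
    ∑ θ, episodeExpect q T (fun l => (total (N θ) l : ℝ)) ≤
      Fintype.card P * episodeExpect q T (fun l => (total R l : ℝ)) := by
  rw [← episodeExpect_sum, ← episodeExpect_const_mul]
  refine hq.episodeExpect_mono T fun l => ?_
  rw [Fintype.sum_prod_type_right]
  calc ∑ w, ∑ e, (total (N (e, w)) l : ℝ) ≤ ∑ _w : P, (total R l : ℝ) := by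
        refine sum_le_sum fun w _ => ?_
        exact_mod_cast (total_sum univ (fun e => N (e, w)) l).symm.le.trans (total_mono (hR w) l)
    _ = Fintype.card P * (total R l : ℝ) := by simp

lemma IsEpisodeLaw.sum_episodeExpect_total_le_of_unlocks {ι : Type*} [Fintype ι] {F : ι → Ω → ℕ}
    (hq : IsEpisodeLaw q) (hF : ∀ x, ∑ i, F i x ≤ 1) (T : ℕ) :
    ∑ i, episodeExpect q T (fun l => (total (F i) l : ℝ)) ≤ T := by
  rw [← episodeExpect_sum, ← hq.episodeExpect_length T]
  refine hq.episodeExpect_mono T fun l => ?_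
  have := (total_sum univ F l).symm.le.trans (total_mono hF l)
  rw [total_one] at this
  exact_mod_cast this

/-- The statistical core. The reference law `q` is perturbed according to a secret entry `e`, a
secret password `w` and a sign vector. If the reference process rarely probes and lasts few
episodes, then some perturbed process keeps the failure indicator `Y` of its secret large. -/
theorem IsEpisodeLaw.exists_lt_episodeExpect_perturbed (hq : IsEpisodeLaw q)
    {X : E × P → (Fin K → Bool) → Ω → ℝ} (hX : ∀ θ, IsSignal q s (N θ) (F θ) (X θ))
    (hε : 0 ≤ ε) (hε1 : ε < 1) (hs : |s| ≤ 1) (hK : 1 ≤ K)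
    (hn₁ : n₁ * (ε ^ 2 * s ^ 2) ≤ √K / 10) (hn₂ : n₂ * ε ^ 2 ≤ 1 / 50)
    {R : Ω → ℕ} (hR : ∀ w x, ∑ e, N (e, w) x ≤ R x) (hF : ∀ x, ∑ θ, F θ x ≤ 1) {T : ℕ}
    (hprobes : episodeExpect q T (fun l => (total R l : ℝ)) ≤ Fintype.card E * (n₁ + 1) / 8)
    (hT : T ≤ (Fintype.card (E × P) * (n₂ + 1) / 8 : ℝ)) (hcard : 32 ≤ Fintype.card (E × P))
    {Y : E × P → List Ω → ℝ} (hY0 : ∀ θ l, 0 ≤ Y θ l) (hY1 : ∀ θ l, Y θ l ≤ 1)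
    (hY : ∀ l, ∑ θ, (1 - Y θ l) ≤ 4 / 3) :
    ∃ θ v, 1 / 4 < episodeExpect (fun l x => q l x * (1 + ε * X θ v x)) T (Y θ) := by
  by_contra! small
  have average_small (θ : E × P) :
      (2 ^ K)⁻¹ * ∑ v, episodeExpect (fun l x => q l x * (1 + ε * X θ v x)) T (Y θ) ≤ 1 / 4 :=
    calc _ ≤ (2 ^ K)⁻¹ * ∑ _v : Fin K → Bool, (1 / 4 : ℝ) := by gcongr with v; exact small θ v
      _ = 1 / 4 := by simp
  have summed := sum_le_sum fun θ (_ : θ ∈ univ) =>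
    ((hX θ).episodeExpect_sub_le_average hq hε hε1 hs hK hn₁ hn₂ (hY0 θ) (hY1 θ) T).trans
      (average_small θ)
  simp only [sum_sub_distrib, ← sum_div, sum_const, card_univ, nsmul_eq_mul] at summed
  set C : ℝ := (Fintype.card (E × P) : ℝ) with hC
  have C_ge : 32 ≤ C := by rw [hC]; exact_mod_cast hcard
  have reference : C - 4 / 3 ≤ ∑ θ, episodeExpect q T (Y θ) := by
    rw [← episodeExpect_sum, ← hq.episodeExpect_const T (C - 4 / 3)]
    refine hq.episodeExpect_mono T fun l => ?_
    have := hY l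
    simp only [sum_sub_distrib, sum_const, card_univ, nsmul_eq_mul, mul_one, ← hC] at this
    linarith
  have probes : (∑ θ, episodeExpect q T fun l => (total (N θ) l : ℝ)) / (n₁ + 1) ≤ C / 8 := by
    rw [div_le_iff₀ (by positivity)]
    calc _ ≤ Fintype.card P * (Fintype.card E * (n₁ + 1) / 8 : ℝ) :=
          (hq.sum_episodeExpect_total_le_of_probes hR T).trans (by gcongr)
      _ = C / 8 * (n₁ + 1) := by rw [hC, Fintype.card_prod]; push_cast; ring
  have unlocks : (∑ θ, episodeExpect q T fun l => (total (F θ) l : ℝ)) / (n₂ + 1) ≤ C / 8 := by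
    rw [div_le_iff₀ (by positivity)]
    linarith [hq.sum_episodeExpect_total_le_of_unlocks hF T]
  norm_num at summed
  linarith

end AveragingOverSecrets

/-! ### Deterministic automata with random emissions -/

section Automaton

variable {S St C O A : Type}

/-- The signal carried by a trajectory segment read by the automaton with moves `nx` from state `st`
at step `h`: the class of the first visited state on which `cls` is defined, together with the
observation made there. -/
def firstSignal (cls : ℕ → St → Option C) (nx : ℕ → St → A → St) :
    ℕ → St → List (O × A) → Option (C × O)
  | _, _, [] => none
  | h, st, p :: l =>
    match cls h st with
    | some c => some (c, p.1)
    | none => firstSignal cls nx (h + 1) (nx h st p.2) l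

/-- Every observation of the trajectory segment has positive probability under the emissions `em`
of the states visited by the automaton with moves `nx`. -/
def IsRun (em : ℕ → St → O → ℝ) (nx : ℕ → St → A → St) : ℕ → St → List (O × A) → Prop
  | _, _, [] => True
  | h, st, p :: l => em h st p.1 ≠ 0 ∧ IsRun em nx (h + 1) (nx h st p.2) l

/-- Expectation of a function `G` of the remaining trajectory when `π` plays `k` further steps from
state `st` at step `h`, after the history `hist`, and the state moves deterministically by `nx` and
emits by `em`. -/
def automatonExpect [Fintype O] [Fintype A] (em : ℕ → St → O → ℝ) (nx : ℕ → St → A → St)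
    (π : Policy O A) : ℕ → ℕ → List (O × A) → St → (List (O × A) → ℝ) → ℝ
  | 0, _, _, _, G => G []
  | k + 1, h, hist, st, G =>
    ∑ o, em h st o * ∑ a, π.act hist o a *
      automatonExpect em nx π k (h + 1) (hist ++ [(o, a)]) (nx h st a) (fun l => G ((o, a) :: l))

section FirstSignal

variable {cls : ℕ → St → Option C} {nx : ℕ → St → A → St} {h : ℕ} {st : St}

lemma firstSignal_cons_of_some {c : C} (hc : cls h st = some c) (p : O × A) (l : List (O × A)) :
    firstSignal cls nx h st (p :: l) = some (c, p.1) := by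
  simp [firstSignal, hc]

lemma firstSignal_cons_of_none (hc : cls h st = none) (p : O × A) (l : List (O × A)) :
    firstSignal cls nx h st (p :: l) = firstSignal cls nx (h + 1) (nx h st p.2) l := by
  simp [firstSignal, hc]

lemma forall_mem_firstSignal {I : ℕ → St → Prop} {Q : C → Prop}
    (cls_some : ∀ h st c, I h st → cls h st = some c → Q c)
    (next : ∀ h st a, I h st → I (h + 1) (nx h st a)) (l : List (O × A)) (hI : I h st) :
    ∀ c ∈ firstSignal cls nx h st l, Q c.1 := by
  induction l generalizing h st with
  | nil => simp [firstSignal]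
  | cons p l ih =>
    rcases hc : cls h st with _ | c
    · rw [firstSignal_cons_of_none hc]
      exact ih (next h st p.2 hI)
    · rw [firstSignal_cons_of_some hc]
      rintro _ ⟨⟩
      exact cls_some h st c hI hc

lemma firstSignal_eq_none_of_invariant {D : ℕ → St → Prop}
    (cls_none : ∀ h st, D h st → cls h st = none)
    (next : ∀ h st a, D h st → D (h + 1) (nx h st a)) (l : List (O × A)) (hD : D h st) :
    firstSignal cls nx h st l = none :=
  Option.eq_none_iff_forall_not_mem.2 <| forall_mem_firstSignal (Q := fun _ => False)
    (fun h st c hD hc => by simp [cls_none h st hD] at hc) next l hD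

lemma firstSignal_semiconj {nx' : ℕ → St → A → St} {f : St → St} {g : C → C}
    (cls_comp : ∀ h st, cls h (f st) = (cls h st).map g)
    (nx_comp : ∀ h st a, f (nx h st a) = nx' h (f st) a) (l : List (O × A)) :
    firstSignal cls nx' h (f st) l = (firstSignal cls nx h st l).map (Prod.map g id) := by
  induction l generalizing h st with
  | nil => rfl
  | cons p l ih =>
    rcases hc : cls h st with _ | c
    · rw [firstSignal_cons_of_none hc, firstSignal_cons_of_none (by simp [cls_comp, hc]),
        ← nx_comp, ih]
    · rw [firstSignal_cons_of_some hc, firstSignal_cons_of_some (by rw [cls_comp, hc]; rfl)]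
      rfl

end FirstSignal

variable [Fintype O] [Fintype A] {em em' : ℕ → St → O → ℝ} {nx nx' : ℕ → St → A → St}
  {π : Policy O A}

lemma automatonExpect_congr (k : ℕ) :
    ∀ (h : ℕ) (hist : List (O × A)) (st : St) {G G' : List (O × A) → ℝ},
      (∀ l, l.length = k → IsRun em nx h st l → G l = G' l) →
      automatonExpect em nx π k h hist st G = automatonExpect em nx π k h hist st G' := by
  induction k with
  | zero => exact fun _ _ _ _ _ hG => hG [] rfl trivial
  | succ k ih =>
    intro h hist st G G' hG
    refine sum_congr rfl fun o _ => ?_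
    by_cases ho : em h st o = 0
    · simp [ho]
    · congr 1
      refine sum_congr rfl fun a _ => ?_
      rw [ih _ _ _ fun l hl hrun => hG ((o, a) :: l) (by simp [hl]) ⟨ho, hrun⟩]

lemma automatonExpect_mono (em_nonneg : ∀ h st o, 0 ≤ em h st o) (k : ℕ) :
    ∀ (h : ℕ) (hist : List (O × A)) (st : St) {G G' : List (O × A) → ℝ}, (∀ l, G l ≤ G' l) →
      automatonExpect em nx π k h hist st G ≤ automatonExpect em nx π k h hist st G' := by
  induction k with
  | zero => exact fun _ _ _ _ _ hG => hG []
  | succ k ih =>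
    intro h hist st G G' hG
    refine sum_le_sum fun o _ => mul_le_mul_of_nonneg_left ?_ (em_nonneg _ _ _)
    refine sum_le_sum fun a _ => mul_le_mul_of_nonneg_left ?_ (π.act_nonneg _ _ _)
    exact ih _ _ _ fun l => hG _

lemma automatonExpect_const (em_sum : ∀ h st, ∑ o, em h st o = 1) (c : ℝ) (k : ℕ) :
    ∀ (h : ℕ) (hist : List (O × A)) (st : St),
      automatonExpect em nx π k h hist st (fun _ => c) = c := by
  induction k with
  | zero => intros; rfl
  | succ k ih => intro h hist st; simp [automatonExpect, ih, ← sum_mul, π.act_sum, em_sum]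

lemma automatonExpect_const_mul (c : ℝ) (k : ℕ) :
    ∀ (h : ℕ) (hist : List (O × A)) (st : St) (G : List (O × A) → ℝ),
      automatonExpect em nx π k h hist st (fun l => c * G l) =
        c * automatonExpect em nx π k h hist st G := by
  induction k with
  | zero => intros; rfl
  | succ k ih =>
    intro h hist st G
    simp only [automatonExpect, ih, mul_sum]
    exact sum_congr rfl fun o _ => sum_congr rfl fun a _ => by ring

lemma automatonExpect_add (k : ℕ) :
    ∀ (h : ℕ) (hist : List (O × A)) (st : St) (G G' : List (O × A) → ℝ),
      automatonExpect em nx π k h hist st (fun l => G l + G' l) =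
        automatonExpect em nx π k h hist st G + automatonExpect em nx π k h hist st G' := by
  induction k with
  | zero => intros; rfl
  | succ k ih =>
    intro h hist st G G'
    simp only [automatonExpect, ih, mul_add, sum_add_distrib]

lemma automatonExpect_congr_invariant {I : ℕ → St → Prop}
    (em_eq : ∀ h st o, I h st → em' h st o = em h st o)
    (nx_eq : ∀ h st a, I h st → nx h st a = nx' h st a)
    (next : ∀ h st a, I h st → I (h + 1) (nx h st a)) (k : ℕ) :
    ∀ (h : ℕ) (hist : List (O × A)) (st : St) (G : List (O × A) → ℝ), I h st →
      automatonExpect em' nx π k h hist st G = automatonExpect em nx' π k h hist st G := by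
  induction k with
  | zero => intros; rfl
  | succ k ih =>
    intro h hist st G hI
    refine sum_congr rfl fun o _ => ?_
    rw [em_eq h st o hI]
    congr 1
    refine sum_congr rfl fun a _ => ?_
    rw [ih _ _ _ _ (next h st a hI), nx_eq h st a hI]

lemma automatonExpect_semiconj {f : St → St} (em_comp : ∀ h st o, em h (f st) o = em h st o)
    (nx_comp : ∀ h st a, f (nx h st a) = nx' h (f st) a) (k : ℕ) :
    ∀ (h : ℕ) (hist : List (O × A)) (st : St) (G : List (O × A) → ℝ),
      automatonExpect em nx π k h hist st G = automatonExpect em nx' π k h hist (f st) G := by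
  induction k with
  | zero => intros; rfl
  | succ k ih =>
    intro h hist st G
    simp only [automatonExpect, em_comp, ← nx_comp, ih]

variable {cls : ℕ → St → Option C}

/-- Change of measure. `D` is a set of states from which no further signal can be emitted. -/
lemma automatonExpect_eq_of_emission_eq_mul {R : Option (C × O) → ℝ} (R_none : R none = 1)
    {D : ℕ → St → Prop} (D_none : ∀ h st, D h st → cls h st = none)
    (D_next : ∀ h st a, D h st → D (h + 1) (nx h st a))
    (D_of_some : ∀ h st c a, cls h st = some c → D (h + 1) (nx h st a))
    (em_none : ∀ h st o, cls h st = none → em' h st o = em h st o)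
    (em_some : ∀ h st o c, cls h st = some c → em' h st o = em h st o * R (some (c, o))) (k : ℕ) :
    ∀ (h : ℕ) (hist : List (O × A)) (st : St) (G : List (O × A) → ℝ),
      automatonExpect em' nx π k h hist st G =
        automatonExpect em nx π k h hist st (fun l => R (firstSignal cls nx h st l) * G l) := by
  induction k with
  | zero => intro h hist st G; simp [automatonExpect, firstSignal, R_none]
  | succ k ih =>
    intro h hist st G
    simp only [automatonExpect]
    refine sum_congr rfl fun o _ => ?_
    rcases hc : cls h st with _ | c
    · simp only [em_none h st o hc, firstSignal_cons_of_none hc, ih]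
    · have after_signal (a : A) (G : List (O × A) → ℝ) :
          automatonExpect em' nx π k (h + 1) (hist ++ [(o, a)]) (nx h st a) G =
            automatonExpect em nx π k (h + 1) (hist ++ [(o, a)]) (nx h st a) G :=
        automatonExpect_congr_invariant (fun h st o hD => em_none h st o (D_none h st hD))
          (fun _ _ _ _ => rfl) D_next k _ _ _ _ (D_of_some h st c a hc)
      simp only [em_some h st o c hc, firstSignal_cons_of_some hc, automatonExpect_const_mul,
        after_signal, mul_left_comm (_ : ℝ) (R _), ← mul_sum]
      ring

lemma automatonExpect_firstSignal_congr (em_sum : ∀ h st, ∑ o, em h st o = 1)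
    {φ ψ : Option (C × O) → ℝ} (h_none : φ none = ψ none)
    (h_some : ∀ h st c, cls h st = some c →
      ∑ o, em h st o * φ (some (c, o)) = ∑ o, em h st o * ψ (some (c, o))) (k : ℕ) :
    ∀ (h : ℕ) (hist : List (O × A)) (st : St),
      automatonExpect em nx π k h hist st (fun l => φ (firstSignal cls nx h st l)) =
        automatonExpect em nx π k h hist st (fun l => ψ (firstSignal cls nx h st l)) := by
  induction k with
  | zero => intro h hist st; simp [automatonExpect, firstSignal, h_none]
  | succ k ih =>
    intro h hist st
    simp only [automatonExpect]
    rcases hc : cls h st with _ | c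
    · simp only [firstSignal_cons_of_none hc, ih]
    · simp only [firstSignal_cons_of_some hc, automatonExpect_const em_sum, ← sum_mul, π.act_sum,
        one_mul]
      exact h_some h st c hc

namespace POMDP

variable [Fintype S] {H : ℕ}

lemma rollout_eq_mixture [DecidableEq St] (M : POMDP S O A H) (e : S ≃ St)
    {nx₀ nx₁ : ℕ → St → A → St} {b : ℝ} {h₀ : ℕ} (nx_eq : ∀ h, h ≠ h₀ → nx₀ h = nx₁ h)
    (emit_eq : ∀ h s o, M.emit h s o = em h (e s) o)
    (trans_eq : ∀ h s a s', M.trans h s a s' =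
      (1 - b) * (if e s' = nx₀ h (e s) a then 1 else 0) +
        b * (if e s' = nx₁ h (e s) a then 1 else 0)) (k : ℕ) :
    ∀ (h : ℕ) (hist : List (O × A)) (s : S) (G : List (O × A) → ℝ),
      M.rollout π k h hist s G = (1 - b) * automatonExpect em nx₀ π k h hist (e s) G +
        b * automatonExpect em nx₁ π k h hist (e s) G := by
  induction k with
  | zero => intro h hist s G; simp only [rollout, automatonExpect]; ring
  | succ k ih =>
    intro h hist s G
    have sum_trans_mul (a : A) (f : St → ℝ) : ∑ s', M.trans h s a s' * f (e s') =
        (1 - b) * f (nx₀ h (e s) a) + b * f (nx₁ h (e s) a) := by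
      have := Fintype.ofEquiv S e
      rw [← e.symm.sum_comp]
      simp [trans_eq, add_mul, sum_add_distrib]
    have next_step (o : O) (a : A) (G : List (O × A) → ℝ) :
        ∑ s', M.trans h s a s' * M.rollout π k (h + 1) (hist ++ [(o, a)]) s' G =
          (1 - b) * automatonExpect em nx₀ π k (h + 1) (hist ++ [(o, a)]) (nx₀ h (e s) a) G +
            b * automatonExpect em nx₁ π k (h + 1) (hist ++ [(o, a)]) (nx₁ h (e s) a) G := by
      simp only [ih]
      rw [sum_trans_mul a fun st =>
        (1 - b) * automatonExpect em nx₀ π k (h + 1) (hist ++ [(o, a)]) st G +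
          b * automatonExpect em nx₁ π k (h + 1) (hist ++ [(o, a)]) st G]
      obtain rfl | hh := eq_or_ne h h₀
      · have same_law (st : St) : automatonExpect em nx₀ π k (h + 1) (hist ++ [(o, a)]) st G =
            automatonExpect em nx₁ π k (h + 1) (hist ++ [(o, a)]) st G :=
          automatonExpect_congr_invariant (I := fun g _ => h < g) (fun _ _ _ _ => rfl)
            (fun g st a hg => by rw [nx_eq g hg.ne']) (fun g _ _ hg => by omega) k _ _ _ _ (by simp)
        simp only [same_law]
        ring
      · rw [nx_eq h hh]
        ring
    simp only [automatonExpect, rollout, emit_eq, next_step, mul_add, sum_add_distrib, mul_sum,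
      mul_left_comm (_ : ℝ) (1 - b), mul_left_comm (_ : ℝ) b]

lemma trajProb_eq_mul_of_forall_sum_eq {M M' : POMDP S O A H} {r : List (O × A) → ℝ}
    (h : ∀ G : List (O × A) → ℝ, ∑ τ, M.trajProb π τ * G (List.ofFn τ) =
      ∑ τ, M'.trajProb π τ * (r (List.ofFn τ) * G (List.ofFn τ))) (τ : Fin H → O × A) :
    M.trajProb π τ = M'.trajProb π τ * r (List.ofFn τ) := by
  classical
  simpa [List.ofFn_injective.eq_iff] using h fun l => if l = List.ofFn τ then 1 else 0

end POMDP

end Automaton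

/-! ### The combination-lock models -/

/-- Sizes of a family of POMDPs in which a binary tree of depth `n` leads to a lock: the agent
receives one of `2 * K` random signs when it reveals the state of the lock, has `A` actions and
plays `H` steps. -/
structure LockTree where
  n : ℕ
  K : ℕ
  A : ℕ
  H : ℕ
  one_le_n : 1 ≤ n
  one_le_K : 1 ≤ K
  three_le_A : 3 ≤ A
  le_H : 8 * n + 2 ≤ H

namespace LockTree

/-- Latent states over a tree with `N` nodes: the nodes, the lock, the revealing state and a
terminal state. The flag of the lock and of the revealing state records that the lock was entered
through the secret entry. -/
inductive State (N : ℕ)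
  | tree (i : Fin N)
  | lock (f : Bool)
  | reveal (f : Bool)
  | term
  deriving DecidableEq

/-- Observations: the nodes, the lock, the outcomes `good` and `bad` at the last step, the terminal
state, and the signs `g` of the bits `k` shown by the revealing state. -/
inductive Obs (N K : ℕ)
  | tree (i : Fin N)
  | lock
  | good
  | bad
  | term
  | sign (k : Fin K) (g : Bool)
  deriving DecidableEq

/-- Kinds of signals that an episode can produce: the revealing state, or the lock at the last step,
each with its flag. -/
inductive SignalClass
  | reveal (f : Bool)
  | final (f : Bool)

section Enumerations

variable {N K : ℕ}

/-- Enumeration of the states, by which they inherit finiteness. -/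
def stateEquivSum (N : ℕ) : State N ≃ Fin N ⊕ Bool ⊕ Bool ⊕ Unit where
  toFun
    | .tree i => .inl i
    | .lock f => .inr (.inl f)
    | .reveal f => .inr (.inr (.inl f))
    | .term => .inr (.inr (.inr ()))
  invFun
    | .inl i => .tree i
    | .inr (.inl f) => .lock f
    | .inr (.inr (.inl f)) => .reveal f
    | .inr (.inr (.inr ())) => .term
  left_inv x := by cases x <;> rfl
  right_inv x := by rcases x with _ | _ | _ | _ <;> rfl

/-- Enumeration of the observations, by which they inherit finiteness. -/
def obsEquivSum (N K : ℕ) : Obs N K ≃ Fin N ⊕ Fin 4 ⊕ Fin K × Bool where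
  toFun
    | .tree i => .inl i
    | .lock => .inr (.inl 0)
    | .good => .inr (.inl 1)
    | .bad => .inr (.inl 2)
    | .term => .inr (.inl 3)
    | .sign k g => .inr (.inr (k, g))
  invFun
    | .inl i => .tree i
    | .inr (.inl 0) => .lock
    | .inr (.inl 1) => .good
    | .inr (.inl 2) => .bad
    | .inr (.inl 3) => .term
    | .inr (.inr (k, g)) => .sign k g
  left_inv x := by cases x <;> rfl
  right_inv x := by rcases x with _ | j | _ <;> try fin_cases j
                    all_goals rfl

instance (N : ℕ) : Fintype (State N) := .ofEquiv _ (stateEquivSum N).symm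

instance (N K : ℕ) : Fintype (Obs N K) := .ofEquiv _ (obsEquivSum N K).symm

lemma card_state : Fintype.card (State N) = N + 5 := by
  simp [Fintype.card_congr (stateEquivSum N)]

lemma card_obs : Fintype.card (Obs N K) = N + 4 + 2 * K := by
  simp [Fintype.card_congr (obsEquivSum N K)]
  ring

lemma sum_state (f : State N → ℝ) : ∑ x, f x = ∑ i, f (.tree i) +
    (f (.lock true) + f (.lock false) + (f (.reveal true) + f (.reveal false) + f .term)) := by
  rw [← (stateEquivSum N).symm.sum_comp]
  simp [Fintype.sum_sum_type, stateEquivSum]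

lemma sum_obs (f : Obs N K → ℝ) : ∑ x, f x = ∑ i, f (.tree i) +
    (f .lock + f .good + f .bad + f .term + ∑ k, (f (.sign k true) + f (.sign k false))) := by
  rw [← (obsEquivSum N K).symm.sum_comp]
  simp [Fintype.sum_sum_type, obsEquivSum, Fintype.sum_prod_type, Fin.sum_univ_four]

end Enumerations

variable (p : LockTree)

/-- Number of tree nodes. -/
abbrev treeSize : ℕ := 2 ^ p.n - 1

/-- Number of actions that move from the lock to the revealing state; they are the smallest ones. -/
abbrev numReveal : ℕ := p.A / 3

/-- Last step at which the lock can be entered through the secret entry. -/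
abbrev lastEntry : ℕ := p.H / 5

/-- Length of the password, which is dialed at the steps `lastEntry < h < H`. -/
abbrev passwordLength : ℕ := p.H - 1 - p.lastEntry

/-- The secret entry: a step counted from `n`, a tree node of the deepest level, and an action
counted from `2`. -/
abbrev Entry : Type := Fin (p.lastEntry - p.n + 1) × Fin (2 ^ (p.n - 1)) × Fin (p.A - 2)

/-- Passwords: the non-revealing actions, counted from `numReveal`, that keep the lock flagged. -/
abbrev Password : Type := Fin p.passwordLength → Fin (p.A - p.numReveal)

/-- What distinguishes two models apart from the bits shown by the revealing state. -/
abbrev Secret : Type := p.Entry × p.Password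

/-- Latent states encoded by numbers. -/
abbrev RawState : Type := Fin (2 ^ p.n + 4)

/-- Observations encoded by numbers. -/
abbrev RawObs : Type := Fin (2 ^ p.n + 2 * p.K + 3)

lemma treeSize_pos : 0 < p.treeSize := by
  have := Nat.pow_le_pow_right two_pos p.one_le_n
  simp only [treeSize]
  omega

lemma two_pow_pred_le_treeSize : 2 ^ (p.n - 1) ≤ p.treeSize := by
  have two_pow : 2 * 2 ^ (p.n - 1) = 2 ^ p.n :=
    mul_pow_sub_one (Nat.one_le_iff_ne_zero.1 p.one_le_n) 2
  have := Nat.one_le_two_pow (n := p.n - 1)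
  simp only [treeSize]
  omega

lemma K_pos : (0 : ℝ) < p.K := by exact_mod_cast p.one_le_K

/-- An arbitrary numbering of the latent states, since the models live on the types `Fin k`. -/
def decodeState : p.RawState ≃ State p.treeSize := Fintype.equivOfCardEq (by
  have := p.treeSize_pos
  rw [card_state, Fintype.card_fin]
  simp only [treeSize] at *
  omega)

/-- An arbitrary numbering of the observations, since the models live on the types `Fin k`. -/
def decodeObs : p.RawObs ≃ Obs p.treeSize p.K := Fintype.equivOfCardEq (by
  have := p.treeSize_pos
  rw [card_obs, Fintype.card_fin]
  simp only [treeSize] at *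
  omega)

/-- The initial latent state, the root of the tree. -/
def root : State p.treeSize := .tree ⟨0, p.treeSize_pos⟩

/-- Nodes are numbered so that the root `0` is its own left child, which lets the agent wait. -/
def child (i : Fin p.treeSize) (j : ℕ) : Fin p.treeSize :=
  if h : 2 * i.1 + j < p.treeSize then ⟨2 * i.1 + j, h⟩ else i

/-- Playing `a` at node `i` at step `h` is the secret entry `e`. -/
def IsEntry (e : p.Entry) (h : ℕ) (i : Fin p.treeSize) (a : Fin p.A) : Prop :=
  h = p.n + e.1.1 ∧ i.1 = e.2.1.1 ∧ a.1 = 2 + e.2.2.1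

/-- The action `a` at step `h` is compatible with the password `w`. -/
def Matches (w : p.Password) (h : ℕ) (a : Fin p.A) : Prop :=
  ∀ j : Fin p.passwordLength, h = p.lastEntry + 1 + j.1 → a.1 = p.numReveal + (w j).1

instance (e : p.Entry) (h : ℕ) (i : Fin p.treeSize) (a : Fin p.A) :
    Decidable (p.IsEntry e h i a) := by
  unfold IsEntry
  infer_instance

instance (w : p.Password) (h : ℕ) (a : Fin p.A) : Decidable (p.Matches w h a) := by
  unfold Matches
  infer_instance

/-- Deterministic dynamics with secret `θ`; the secret entry works only if `on`. -/
def move (on : Bool) (θ : p.Secret) (h : ℕ) : State p.treeSize → Fin p.A → State p.treeSize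
  | .tree i, a => if a.1 < 2 then .tree (p.child i a.1) else
      if on = true ∧ p.IsEntry θ.1 h i a then .lock true else .lock false
  | .lock f, a => if a.1 < p.numReveal then .reveal f else
      if f = true ∧ p.Matches θ.2 h a then .lock true else .lock false
  | .reveal _, _ => .term
  | .term, _ => .term

/-- Dynamics of the reference model, which has no secret and never sets the flag. -/
def refMove (_h : ℕ) : State p.treeSize → Fin p.A → State p.treeSize
  | .tree i, a => if a.1 < 2 then .tree (p.child i a.1) else .lock false
  | .lock _, a => if a.1 < p.numReveal then .reveal false else .lock false
  | .reveal _, _ => .term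
  | .term, _ => .term

/-- Emissions of the reference model. -/
def refEmission (h : ℕ) : State p.treeSize → Obs p.treeSize p.K → ℝ
  | .tree i, x => if x = .tree i then 1 else 0
  | .lock _, x => if h = p.H then (if x = .good ∨ x = .bad then 1 / 2 else 0)
      else if x = .lock then 1 else 0
  | .reveal _, .sign _ _ => 1 / (2 * p.K)
  | .reveal _, _ => 0
  | .term, x => if x = .term then 1 else 0

/-- The class of the signal emitted by a state at step `h`, if any. -/
def signalClass (h : ℕ) : State p.treeSize → Option SignalClass
  | .reveal f => if h ≤ p.H then some (.reveal f) else none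
  | .lock f => if h = p.H then some (.final f) else none
  | _ => none

variable {p}

/-- Relative excess of the probability of an observation at a signal of the given class, when the
revealing state shows the bits `v` with strength `s`. -/
def excess (s : ℝ) (v : Fin p.K → Bool) : SignalClass → Obs p.treeSize p.K → ℝ
  | .reveal true, .sign k g => s * (boolSign (v k) * boolSign g)
  | .final true, .good => 1
  | .final true, .bad => -1
  | _, _ => 0

/-- Emissions of the model whose revealing state shows the bits `v` with strength `s`. -/
def emission (s : ℝ) (v : Fin p.K → Bool) (h : ℕ) (st : State p.treeSize)
    (x : Obs p.treeSize p.K) : ℝ :=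
  p.refEmission h st x * (1 + (p.signalClass h st).elim 0 (excess s v · x))

/-- Mean of `φ` under the reference law of the observation at a signal of the given class. -/
def classMean : SignalClass → (Obs p.treeSize p.K → ℝ) → ℝ
  | .reveal _, φ => (∑ k, (φ (.sign k true) + φ (.sign k false))) / (2 * p.K)
  | .final _, φ => (φ .good + φ .bad) / 2

lemma sum_refEmission_mul {h : ℕ} {st : State p.treeSize} {c : SignalClass}
    (hc : p.signalClass h st = some c) (φ : Obs p.treeSize p.K → ℝ) :
    ∑ x, p.refEmission h st x * φ x = classMean c φ := by
  rcases st with i | f | f | _ <;> simp only [signalClass, reduceCtorEq] at hc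
  · obtain ⟨rfl, rfl⟩ : h = p.H ∧ .final f = c := by simpa using hc
    simp [sum_obs, refEmission, classMean]
    ring
  · obtain ⟨-, rfl⟩ : h ≤ p.H ∧ .reveal f = c := by simpa using hc
    simp only [refEmission, one_div, mul_inv_rev, sum_obs, zero_mul, sum_const_zero, add_zero,
      zero_add, classMean, sum_div]
    exact sum_congr rfl fun k _ => by ring

lemma sum_refEmission (h : ℕ) (st : State p.treeSize) : ∑ x, p.refEmission h st x = 1 := by
  have := p.K_pos
  rcases st with i | f | f | _ <;> simp [sum_obs, refEmission]
  · norm_num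
  · field_simp
    norm_num

lemma refEmission_nonneg (h : ℕ) (st : State p.treeSize) (x : Obs p.treeSize p.K) :
    0 ≤ p.refEmission h st x := by
  unfold refEmission
  split <;> positivity

lemma abs_excess_le_one {s : ℝ} (hs : |s| ≤ 1) (v : Fin p.K → Bool) (c : SignalClass)
    (x : Obs p.treeSize p.K) : |excess s v c x| ≤ 1 := by
  unfold excess
  split <;> simp [abs_mul, abs_boolSign, hs]

lemma classMean_excess (s : ℝ) (v : Fin p.K → Bool) (c : SignalClass) :
    classMean c (excess s v c) = 0 := by
  rcases c with (_ | _) | (_ | _) <;> simp [classMean, excess, boolSign]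

lemma sum_emission (s : ℝ) (v : Fin p.K → Bool) (h : ℕ) (st : State p.treeSize) :
    ∑ x, emission s v h st x = 1 := by
  simp only [emission, mul_add, mul_one, sum_add_distrib, sum_refEmission]
  rcases hc : p.signalClass h st with _ | c
  · simp
  · simp [sum_refEmission_mul hc, classMean_excess]

lemma emission_nonneg {s : ℝ} (hs : |s| ≤ 1) (v : Fin p.K → Bool) (h : ℕ) (st : State p.treeSize)
    (x : Obs p.treeSize p.K) : 0 ≤ emission s v h st x := by
  refine mul_nonneg (refEmission_nonneg h st x) ?_
  rcases p.signalClass h st with _ | c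
  · simp
  · exact neg_le_iff_add_nonneg'.1 (abs_le.1 (abs_excess_le_one hs v c x)).1

variable (p) in
/-- The model with secret `θ` and bits `v`, shown with strength `s`, in which the secret entry works
with probability `b`. -/
def model {s : ℝ} (hs : |s| ≤ 1) {b : ℝ} (hb : b ∈ Set.Icc 0 1) (θ : p.Secret)
    (v : Fin p.K → Bool) : POMDP p.RawState p.RawObs (Fin p.A) p.H where
  init x := if p.decodeState x = p.root then 1 else 0
  init_nonneg x := by split_ifs <;> norm_num
  init_sum := by
    rw [p.decodeState.sum_comp fun x => if x = p.root then (1 : ℝ) else 0]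
    simp
  trans h x a y :=
    (1 - b) * (if p.decodeState y = p.move false θ h (p.decodeState x) a then 1 else 0) +
      b * (if p.decodeState y = p.move true θ h (p.decodeState x) a then 1 else 0)
  trans_nonneg h x a y := by
    have := sub_nonneg.2 hb.2
    have := hb.1
    split_ifs <;> simp <;> linarith
  trans_sum h x a := by
    rw [← p.decodeState.symm.sum_comp]
    simp [sum_add_distrib]
  emit h x o := emission s v h (p.decodeState x) (p.decodeObs o)
  emit_nonneg h x o := emission_nonneg hs _ _ _ _
  emit_sum h x := by
    rw [p.decodeObs.sum_comp (emission s v h _), sum_emission]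
  reward h o _ := if h = p.H ∧ p.decodeObs o = .good then 1 else 0
  reward_nonneg _ _ _ := by split_ifs <;> norm_num
  reward_le_one _ _ _ := by split_ifs <;> norm_num
  reward_total τ := by
    calc _ ≤ ∑ h : Fin p.H, (if h = ⟨p.H - 1, by have := p.le_H; omega⟩ then (1 : ℝ) else 0) := by
          refine sum_le_sum fun h _ => ?_
          split_ifs with h₁ h₂
          · norm_num
          · exact absurd (Fin.ext (by simp only; omega)) h₂
          all_goals norm_num
      _ = 1 := by simp

end LockTree

/-! ### Likelihood ratios against the reference model -/

namespace LockTree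

variable {p : LockTree}

/-- Forgetting the flag maps every model to the reference dynamics. -/
def unflag : State p.treeSize → State p.treeSize
  | .lock _ => .lock false
  | .reveal _ => .reveal false
  | st => st

lemma refEmission_unflag (h : ℕ) (st : State p.treeSize) (x : Obs p.treeSize p.K) :
    p.refEmission h (unflag st) x = p.refEmission h st x := by
  rcases st with i | f | f | _ <;> cases x <;> rfl

lemma unflag_move (on : Bool) (θ : p.Secret) (h : ℕ) (st : State p.treeSize) (a : Fin p.A) :
    unflag (p.move on θ h st a) = p.refMove h (unflag st) a := by
  rcases st with _ | _ | _ | _ <;> simp only [move, refMove, unflag] <;> split_ifs <;> rfl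

lemma move_false_of_unflag_eq {st : State p.treeSize} (hst : unflag st = st) (θ : p.Secret) (h : ℕ)
    (a : Fin p.A) : p.move false θ h st a = p.refMove h st a := by
  rcases st with i | f | f | _
  · simp [move, refMove]
  · obtain rfl : false = f := by simpa [unflag] using hst
    simp [move, refMove]
  all_goals rfl

lemma emission_of_unflag_eq {st : State p.treeSize} (hst : unflag st = st) (s : ℝ)
    (v : Fin p.K → Bool) (h : ℕ) (x : Obs p.treeSize p.K) :
    emission s v h st x = p.refEmission h st x := by
  rcases st with i | f | f | _ <;> simp only [unflag, State.lock.injEq, State.reveal.injEq] at hst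
  · simp [emission, signalClass]
  · subst hst
    simp only [emission, signalClass]
    split_ifs <;> simp [excess]
  · subst hst
    simp only [emission, signalClass]
    split_ifs <;> simp [excess]
  · simp [emission, signalClass]

/-- The signal of an episode read with the secret `θ`: the class of the first state that emits a
signal, and the observation made there. -/
def signal (θ : p.Secret) (l : List (p.RawObs × Fin p.A)) :
    Option (SignalClass × Obs p.treeSize p.K) :=
  (firstSignal p.signalClass (p.move true θ) 1 p.root l).map (Prod.map id p.decodeObs)

/-- Relative excess of the likelihood of an episode as a function of its signal. -/
def signalExcess (s : ℝ) (v : Fin p.K → Bool) :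
    Option (SignalClass × Obs p.treeSize p.K) → ℝ
  | none => 0
  | some (c, x) => excess s v c x

/-- Expectation over an episode of `π` in the reference model, as a linear functional. -/
def refExpect (π : Policy p.RawObs (Fin p.A)) : (List (p.RawObs × Fin p.A) → ℝ) →ₗ[ℝ] ℝ where
  toFun := automatonExpect (fun h st o => p.refEmission h st (p.decodeObs o)) p.refMove π p.H 1 []
    p.root
  map_add' := automatonExpect_add _ _ _ _
  map_smul' c := automatonExpect_const_mul c _ _ _ _

lemma refExpect_eq_automatonExpect_move (θ : p.Secret) (π : Policy p.RawObs (Fin p.A))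
    (G : List (p.RawObs × Fin p.A) → ℝ) :
    refExpect π G = automatonExpect (fun h st o => p.refEmission h st (p.decodeObs o))
      (p.move true θ) π p.H 1 [] p.root G :=
  (automatonExpect_semiconj (fun h st o => refEmission_unflag h st (p.decodeObs o))
    (unflag_move true θ) _ _ _ p.root G).symm

lemma sum_refEmission_decodeObs (h : ℕ) (st : State p.treeSize) :
    ∑ o, p.refEmission h st (p.decodeObs o) = 1 := by
  rw [p.decodeObs.sum_comp (p.refEmission h st), sum_refEmission]

lemma automatonExpect_move_false (s : ℝ) (θ : p.Secret) (v : Fin p.K → Bool)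
    (π : Policy p.RawObs (Fin p.A)) (G : List (p.RawObs × Fin p.A) → ℝ) :
    automatonExpect (fun h st o => emission s v h st (p.decodeObs o)) (p.move false θ) π p.H 1 []
      p.root G = refExpect π G := by
  refine automatonExpect_congr_invariant (I := fun _ st => unflag st = st)
    (fun h st o hst => emission_of_unflag_eq hst s v h _)
    (fun h st a hst => move_false_of_unflag_eq hst θ h a) (fun h st a hst => ?_) _ _ _ _ _ rfl
  rw [unflag_move, hst, move_false_of_unflag_eq hst]

lemma automatonExpect_move_true (s : ℝ) (θ : p.Secret) (v : Fin p.K → Bool)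
    (π : Policy p.RawObs (Fin p.A)) (G : List (p.RawObs × Fin p.A) → ℝ) :
    automatonExpect (fun h st o => emission s v h st (p.decodeObs o)) (p.move true θ) π p.H 1 []
      p.root G = refExpect π (fun l => (1 + signalExcess s v (signal θ l)) * G l) := by
  rw [refExpect_eq_automatonExpect_move θ]
  refine automatonExpect_eq_of_emission_eq_mul (cls := p.signalClass)
    (R := fun c => 1 + signalExcess s v (c.map (Prod.map id p.decodeObs)))
    (D := fun h st => st = .term ∨ p.H < h) (by simp [signalExcess]) ?_ ?_ ?_ ?_ ?_ _ _ _ _ _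
  · rintro h st (rfl | hh)
    · rfl
    · rcases st with _ | _ | _ | _ <;> simp only [signalClass] <;> rw [if_neg (by omega)]
  · rintro h st a (rfl | hh)
    · exact Or.inl rfl
    · exact Or.inr (by omega)
  · intro h st c a hc
    rcases st with i | f | f | _ <;> simp only [signalClass, reduceCtorEq] at hc
    · split_ifs at hc
      exact Or.inr (by omega)
    · exact Or.inl rfl
  · intro h st o hc
    simp [emission, hc]
  · intro h st o c hc
    simp [emission, hc, signalExcess]

section Model

variable {s : ℝ} (hs : |s| ≤ 1) {b : ℝ} (hb : b ∈ Set.Icc 0 1) (θ : p.Secret) (v : Fin p.K → Bool)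

lemma sum_trajProb_model_mul (π : Policy p.RawObs (Fin p.A))
    (G : List (p.RawObs × Fin p.A) → ℝ) :
    ∑ τ, (p.model hs hb θ v).trajProb π τ * G (List.ofFn τ) =
      refExpect π (fun l => (1 + b * signalExcess s v (signal θ l)) * G l) := by
  have sum_init (f : State p.treeSize → ℝ) :
      ∑ x, (p.model hs hb θ v).init x * f (p.decodeState x) = f p.root := by
    simp only [model]
    rw [p.decodeState.sum_comp fun y => (if y = p.root then 1 else 0) * f y]
    simp
  have nx_eq (h : ℕ) (hh : h ≠ p.n + θ.1.1.1) : p.move false θ h = p.move true θ h := by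
    funext st a
    rcases st with _ | _ | _ | _ <;> simp [move, IsEntry, hh]
  simp only [POMDP.sum_trajProb_mul, POMDP.rollout_eq_mixture (p.model hs hb θ v) p.decodeState
    (em := fun h st o => emission s v h st (p.decodeObs o)) nx_eq (fun _ _ _ => rfl)
    (fun _ _ _ _ => rfl)]
  rw [sum_init fun st => (1 - b) * automatonExpect _ (p.move false θ) π p.H 1 [] st G +
    b * automatonExpect _ (p.move true θ) π p.H 1 [] st G, automatonExpect_move_false,
    automatonExpect_move_true, ← smul_eq_mul, ← smul_eq_mul, ← map_smul, ← map_smul, ← map_add]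
  congr 1
  funext l
  simp only [Pi.add_apply, Pi.smul_apply, smul_eq_mul]
  ring

/-- The secret of the reference model, where it has no influence. -/
def refSecret (p : LockTree) : p.Secret :=
  ((⟨0, by omega⟩, ⟨0, by positivity⟩, ⟨0, by have := p.three_le_A; omega⟩),
    fun _ => ⟨0, by have := p.three_le_A; simp only [numReveal]; omega⟩)

variable (p) in
/-- The reference model, in which the secret entry never works. -/
def refModel {s : ℝ} (hs : |s| ≤ 1) : POMDP p.RawState p.RawObs (Fin p.A) p.H :=
  p.model hs (b := 0) ⟨le_rfl, zero_le_one⟩ p.refSecret fun _ => true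

lemma sum_trajProb_refModel_mul (π : Policy p.RawObs (Fin p.A))
    (G : List (p.RawObs × Fin p.A) → ℝ) :
    ∑ τ, (p.refModel hs).trajProb π τ * G (List.ofFn τ) = refExpect π G := by
  simpa [refModel] using sum_trajProb_model_mul hs ⟨le_rfl, zero_le_one⟩ p.refSecret _ π G

lemma trajProb_model (π : Policy p.RawObs (Fin p.A)) (τ : Fin p.H → p.RawObs × Fin p.A) :
    (p.model hs hb θ v).trajProb π τ =
      (p.refModel hs).trajProb π τ * (1 + b * signalExcess s v (signal θ (List.ofFn τ))) := by
  refine POMDP.trajProb_eq_mul_of_forall_sum_eq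
    (r := fun l => 1 + b * signalExcess s v (signal θ l)) (fun G => ?_) τ
  rw [sum_trajProb_model_mul,
    sum_trajProb_refModel_mul hs π fun l => (1 + b * signalExcess s v (signal θ l)) * G l]

end Model

lemma refExpect_const (π : Policy p.RawObs (Fin p.A)) (c : ℝ) : refExpect π (fun _ => c) = c :=
  automatonExpect_const sum_refEmission_decodeObs _ _ _ _ _

lemma refExpect_mono (π : Policy p.RawObs (Fin p.A)) {G G' : List (p.RawObs × Fin p.A) → ℝ}
    (h : ∀ l, G l ≤ G' l) : refExpect π G ≤ refExpect π G' :=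
  automatonExpect_mono (fun _ _ _ => refEmission_nonneg _ _ _) _ _ _ _ h

lemma refExpect_signal_congr (θ : p.Secret) (π : Policy p.RawObs (Fin p.A))
    {φ ψ : Option (SignalClass × Obs p.treeSize p.K) → ℝ} (h_none : φ none = ψ none)
    (h_some : ∀ c, classMean c (fun x => φ (some (c, x))) = classMean c fun x => ψ (some (c, x))) :
    refExpect π (fun l => φ (signal θ l)) = refExpect π fun l => ψ (signal θ l) := by
  rw [refExpect_eq_automatonExpect_move θ, refExpect_eq_automatonExpect_move θ]
  refine automatonExpect_firstSignal_congr (φ := fun c => φ (c.map (Prod.map id p.decodeObs)))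
    (ψ := fun c => ψ (c.map (Prod.map id p.decodeObs))) sum_refEmission_decodeObs h_none
    (fun h st c hc => ?_) _ _ _ _
  simp only [Option.map_some, Prod.map_apply, id]
  rw [p.decodeObs.sum_comp fun x => p.refEmission h st x * φ (some (c, x)),
    p.decodeObs.sum_comp fun x => p.refEmission h st x * ψ (some (c, x)), sum_refEmission_mul hc,
    sum_refEmission_mul hc, h_some]

lemma classMean_zero (c : SignalClass) : classMean c (fun _ : Obs p.treeSize p.K => 0) = 0 := by
  rcases c with _ | _ <;> simp [classMean]

lemma classMean_sub_const (c : SignalClass) (φ : Obs p.treeSize p.K → ℝ) (y : ℝ) :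
    classMean c (fun x => φ x - y) = classMean c φ - y := by
  have := p.K_pos
  rcases c with _ | _ <;> simp [classMean, sum_add_distrib] <;> field_simp <;> ring

lemma refExpect_signal_eq_zero (θ : p.Secret) (π : Policy p.RawObs (Fin p.A))
    {φ : Option (SignalClass × Obs p.treeSize p.K) → ℝ} (h_none : φ none = 0)
    (h_some : ∀ c, classMean c (fun x => φ (some (c, x))) = 0) :
    refExpect π (fun l => φ (signal θ l)) = 0 := by
  rw [refExpect_signal_congr θ π (ψ := fun _ => 0) h_none fun c => ?_, refExpect_const]
  rw [h_some, classMean_zero]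

lemma sum_trajProb_refModel_mul_signal {s : ℝ} (hs : |s| ≤ 1) (π : Policy p.RawObs (Fin p.A))
    (θ : p.Secret) {φ : Option (SignalClass × Obs p.treeSize p.K) → ℝ} (h_none : φ none = 0)
    (h_some : ∀ c, classMean c (fun x => φ (some (c, x))) = 0) :
    ∑ τ, (p.refModel hs).trajProb π τ * φ (signal θ (List.ofFn τ)) = 0 := by
  rw [sum_trajProb_refModel_mul hs π fun l => φ (signal θ l),
    refExpect_signal_eq_zero θ π h_none h_some]

/-- Indicator of a flagged revealing state. -/
def probe {X : Type} : Option (SignalClass × X) → ℕ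
  | some (.reveal true, _) => 1
  | _ => 0

/-- Indicator of the flagged lock at the last step. -/
def unlock {X : Type} : Option (SignalClass × X) → ℕ
  | some (.final true, _) => 1
  | _ => 0

/-- Indicator of a revealing state. -/
def anyReveal {X : Type} : Option (SignalClass × X) → ℕ
  | some (.reveal _, _) => 1
  | _ => 0

lemma classMean_reveal_excess_mul (s : ℝ) (v v' : Fin p.K → Bool) :
    classMean (.reveal true) (fun x => excess s v (.reveal true) x * excess s v' (.reveal true) x) =
      s ^ 2 * corr v v' := by
  have (k : Fin p.K) :
      s * (boolSign (v k) * boolSign true) * (s * (boolSign (v' k) * boolSign true)) +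
      s * (boolSign (v k) * boolSign false) * (s * (boolSign (v' k) * boolSign false)) =
        2 * s ^ 2 * (boolSign (v k) * boolSign (v' k)) := by
    simp only [boolSign, if_true, Bool.false_eq_true, if_false]
    ring
  simp only [classMean, excess, corr, this, ← mul_sum]
  ring

lemma isSignal_refModel {s : ℝ} (hs : |s| ≤ 1) (𝔄 : Algorithm p.RawObs (Fin p.A) p.H)
    (θ : p.Secret) :
    IsSignal ((p.refModel hs).episodeLaw 𝔄) s (fun τ => probe (signal θ (List.ofFn τ)))
      (fun τ => unlock (signal θ (List.ofFn τ)))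
      (fun v τ => signalExcess s v (signal θ (List.ofFn τ))) where
  count_le_one τ := by
    rcases signal θ (List.ofFn τ) with _ | ⟨(_ | _) | (_ | _), x⟩ <;> simp [probe, unlock]
  abs_le_one v τ := by
    rcases signal θ (List.ofFn τ) with _ | ⟨c, x⟩
    · simp [signalExcess]
    · exact abs_excess_le_one hs v c x
  eq_zero v τ h := by
    rcases hc : signal θ (List.ofFn τ) with _ | ⟨(_ | _) | (_ | _), x⟩ <;>
      simp [hc, probe, unlock, signalExcess, excess] at h ⊢
  sum_probe v l := by
    refine sum_trajProb_refModel_mul_signal hs _ θ (φ := fun c => probe c * signalExcess s v c)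
      (by simp [probe]) ?_
    rintro ((_ | _) | (_ | _)) <;> simp [probe, signalExcess, classMean_zero, classMean_excess]
  sum_unlock v l := by
    refine sum_trajProb_refModel_mul_signal hs _ θ (φ := fun c => unlock c * signalExcess s v c)
      (by simp [unlock]) ?_
    rintro ((_ | _) | (_ | _)) <;> simp [unlock, signalExcess, classMean_zero, classMean_excess]
  sum_probe_mul v v' l := by
    refine sum_trajProb_refModel_mul_signal hs _ θ
      (φ := fun c => probe c * (signalExcess s v c * signalExcess s v' c - s ^ 2 * corr v v'))
      (by simp [probe]) ?_
    rintro ((_ | _) | (_ | _)) <;> simp [probe, signalExcess, classMean_zero, classMean_sub_const,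
      classMean_reveal_excess_mul]
  sum_unlock_mul v v' l := by
    refine sum_trajProb_refModel_mul_signal hs _ θ
      (φ := fun c => unlock c * (signalExcess s v c * signalExcess s v' c - 1))
      (by simp [unlock]) ?_
    rintro ((_ | _) | (_ | _)) <;> simp [unlock, signalExcess, classMean, excess]

end LockTree

/-! ### Values and suboptimality gaps -/

namespace LockTree

variable {p : LockTree}

/-- Reward collected along a trajectory segment that starts at step `h`. -/
def rewardFrom : ℕ → List (p.RawObs × Fin p.A) → ℝ
  | _, [] => 0
  | h, q :: l => (if h = p.H ∧ p.decodeObs q.1 = .good then 1 else 0) + rewardFrom (h + 1) l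

lemma sum_reward_eq_rewardFrom (k : ℕ) : ∀ (h : ℕ) (τ : Fin k → p.RawObs × Fin p.A),
    ∑ i : Fin k, (if i.1 + h = p.H ∧ p.decodeObs (τ i).1 = .good then (1 : ℝ) else 0) =
      rewardFrom h (List.ofFn τ) := by
  induction k with
  | zero => intro h τ; simp [rewardFrom]
  | succ k ih =>
    intro h τ
    rw [Fin.sum_univ_succ, List.ofFn_succ, rewardFrom, ← ih]
    simp only [Fin.val_zero, zero_add, Fin.val_succ, add_right_comm, add_assoc]

/-- Reward as a function of the signal. -/
def signalReward : Option (SignalClass × Obs p.treeSize p.K) → ℝ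
  | some (.final _, .good) => 1
  | _ => 0

/-- Mean of the reward given the class of the signal, when the secret entry works with probability
`b`. -/
def meanReward (b : ℝ) : Option (SignalClass × Obs p.treeSize p.K) → ℝ
  | some (.final true, _) => (1 + b) / 2
  | some (.final false, _) => 1 / 2
  | _ => 0

lemma firstSignal_term (nx : ℕ → State p.treeSize → Fin p.A → State p.treeSize)
    (nx_term : ∀ h a, nx h .term a = .term) (h : ℕ) (l : List (p.RawObs × Fin p.A)) :
    firstSignal p.signalClass nx h .term l = none :=
  firstSignal_eq_none_of_invariant (D := fun _ st => st = .term) (by rintro h _ rfl; rfl)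
    (by rintro h _ a rfl; exact nx_term h a) l rfl

lemma rewardFrom_eq_signalReward (θ : p.Secret) (l : List (p.RawObs × Fin p.A)) :
    ∀ (h : ℕ) (st : State p.treeSize), l.length + h = p.H + 1 →
      IsRun (fun h st o => p.refEmission h st (p.decodeObs o)) (p.move true θ) h st l →
      rewardFrom h l = signalReward
        ((firstSignal p.signalClass (p.move true θ) h st l).map (Prod.map id p.decodeObs)) := by
  induction l with
  | nil => intros; rfl
  | cons q l ih =>
    intro h st hl ⟨hq, hrun⟩
    rw [List.length_cons] at hl
    rw [rewardFrom, ih (h + 1) _ (by omega) hrun]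
    rcases st with i | f | f | _
    · have obs : p.decodeObs q.1 = .tree i := by simpa [refEmission] using hq
      simp [firstSignal_cons_of_none (cls := p.signalClass) (st := .tree i) rfl, obs]
    · by_cases hh : h = p.H
      · obtain rfl : l = [] := List.length_eq_zero_iff.1 (by omega)
        rw [firstSignal_cons_of_some (c := .final f) (by simp [signalClass, hh])]
        rcases hx : p.decodeObs q.1 <;> simp [hh, hx, firstSignal, signalReward]
      · rw [firstSignal_cons_of_none (by simp [signalClass, hh])]
        simp [hh]
    · have obs : p.decodeObs q.1 ≠ .good := by
        intro hx
        simp [refEmission, hx] at hq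
      rw [firstSignal_cons_of_some (c := .reveal f) (by simp [signalClass]; omega), move,
        firstSignal_term _ fun _ _ => rfl]
      simp [obs, signalReward]
    · have obs : p.decodeObs q.1 = .term := by simpa [refEmission] using hq
      simp [firstSignal_cons_of_none (cls := p.signalClass) (st := .term) rfl, obs]

section Model

variable {s : ℝ} (hs : |s| ≤ 1) {b : ℝ} (hb : b ∈ Set.Icc 0 1) (θ : p.Secret) (v : Fin p.K → Bool)

lemma value_model (π : Policy p.RawObs (Fin p.A)) :
    (p.model hs hb θ v).value π = refExpect π fun l => meanReward b (signal θ l) :=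
  calc (p.model hs hb θ v).value π
      = ∑ τ, (p.model hs hb θ v).trajProb π τ * rewardFrom 1 (List.ofFn τ) :=
        sum_congr rfl fun τ _ => by rw [← sum_reward_eq_rewardFrom]; rfl
    _ = refExpect π fun l => (1 + b * signalExcess s v (signal θ l)) * rewardFrom 1 l := by
        rw [sum_trajProb_model_mul]
    _ = refExpect π fun l =>
          (1 + b * signalExcess s v (signal θ l)) * signalReward (signal θ l) := by
        simp only [refExpect_eq_automatonExpect_move θ]
        refine automatonExpect_congr _ _ _ _ fun l hl hrun => ?_
        rw [rewardFrom_eq_signalReward θ l 1 p.root (by rw [hl]) hrun, signal]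
    _ = refExpect π fun l => meanReward b (signal θ l) := by
        refine refExpect_signal_congr θ π
          (φ := fun c => (1 + b * signalExcess s v c) * signalReward c)
          (by simp [signalReward, meanReward]) ?_
        rintro ((_ | _) | (_ | _)) <;>
          simp [classMean, signalReward, meanReward, signalExcess, excess]

lemma value_model_le (π : Policy p.RawObs (Fin p.A)) :
    (p.model hs hb θ v).value π ≤ 1 / 2 * (1 - refExpect π fun l => (anyReveal (signal θ l) : ℝ)) +
      b / 2 * refExpect π fun l => (unlock (signal θ l) : ℝ) := by
  have pathwise (l : List (p.RawObs × Fin p.A)) : meanReward b (signal θ l) ≤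
      1 / 2 - 1 / 2 * anyReveal (signal θ l) + b / 2 * unlock (signal θ l) := by
    rcases signal θ l with _ | ⟨(_ | _) | (_ | _), x⟩ <;> simp [meanReward, anyReveal, unlock]
    ring_nf
    rfl
  calc (p.model hs hb θ v).value π
      ≤ refExpect π ((fun _ => 1 / 2) - (1 / 2 : ℝ) • (fun l => (anyReveal (signal θ l) : ℝ)) +
          (b / 2) • fun l => (unlock (signal θ l) : ℝ)) := by
        rw [value_model]
        exact refExpect_mono π pathwise
    _ = _ := by
        rw [map_add, map_sub, map_smul, map_smul, refExpect_const, smul_eq_mul, smul_eq_mul]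
        ring

end Model

variable (p) in
lemma lastEntry_bounds : p.n ≤ p.lastEntry ∧ p.lastEntry + 1 < p.H := by
  have := p.le_H
  have := p.one_le_n
  simp only [lastEntry]
  omega

/-- The action of the optimal open-loop policy at step `h`: wait at the root, descend to the node of
the secret entry along its binary digits, enter, and dial the password. -/
def optAction (θ : p.Secret) (h : ℕ) : Fin p.A :=
  if h < p.n + θ.1.1.1 then
    ⟨θ.1.2.1.1 / 2 ^ (p.n + θ.1.1.1 - (h + 1)) % 2, by have := p.three_le_A; omega⟩
  else if h = p.n + θ.1.1.1 then ⟨2 + θ.1.2.2.1, by have := θ.1.2.2.2; omega⟩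
  else if hw : p.lastEntry < h ∧ h < p.H then
    ⟨p.numReveal + (θ.2 ⟨h - p.lastEntry - 1, by simp only [passwordLength]; omega⟩).1, by
      have := (θ.2 ⟨h - p.lastEntry - 1, by simp only [passwordLength]; omega⟩).2; omega⟩
  else ⟨p.numReveal, by have := p.three_le_A; simp only [numReveal]; omega⟩

/-- The state visited at step `h` under the optimal open-loop policy. -/
def optPath (θ : p.Secret) (h : ℕ) : State p.treeSize :=
  if h ≤ p.n + θ.1.1.1 then
    .tree ⟨θ.1.2.1.1 / 2 ^ (p.n + θ.1.1.1 - h), (Nat.div_le_self _ _).trans_lt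
      (θ.1.2.1.2.trans_le p.two_pow_pred_le_treeSize)⟩
  else .lock true

lemma optPath_one (θ : p.Secret) : optPath θ 1 = p.root := by
  have hn := p.one_le_n
  rw [optPath, if_pos (by omega), root]
  congr 2
  exact Nat.div_eq_of_lt
    (θ.1.2.1.2.trans_le (Nat.pow_le_pow_right two_pos (by omega)))

lemma optPath_last (θ : p.Secret) : optPath θ p.H = .lock true := by
  have last_lt := p.lastEntry_bounds
  have entry_le := θ.1.1.2
  rw [optPath, if_neg (by omega)]

lemma move_optPath_of_lt (θ : p.Secret) {h : ℕ} (hh : h < p.n + θ.1.1.1) :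
    p.move true θ h (optPath θ h) (optAction θ h) = optPath θ (h + 1) := by
  have digits : 2 * (θ.1.2.1.1 / 2 ^ (p.n + θ.1.1.1 - h)) +
      θ.1.2.1.1 / 2 ^ (p.n + θ.1.1.1 - (h + 1)) % 2 =
        θ.1.2.1.1 / 2 ^ (p.n + θ.1.1.1 - (h + 1)) := by
    rw [show p.n + θ.1.1.1 - h = (p.n + θ.1.1.1 - (h + 1)) + 1 by omega, pow_succ,
      ← Nat.div_div_eq_div_mul]
    omega
  simp only [optPath, optAction, if_pos hh, if_pos hh.le, if_pos (Nat.succ_le_of_lt hh), move,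
    if_pos (Nat.mod_lt _ two_pos), child, digits]
  rw [dif_pos ((Nat.div_le_self _ _).trans_lt (θ.1.2.1.2.trans_le p.two_pow_pred_le_treeSize))]

lemma move_optPath_entry (θ : p.Secret) :
    p.move true θ (p.n + θ.1.1.1) (optPath θ (p.n + θ.1.1.1)) (optAction θ (p.n + θ.1.1.1)) =
      optPath θ (p.n + θ.1.1.1 + 1) := by
  simp [optPath, optAction, move, IsEntry]
  omega

lemma move_optPath_of_gt (θ : p.Secret) {h : ℕ} (hh : p.n + θ.1.1.1 < h) (hH : h < p.H) :
    p.move true θ h (optPath θ h) (optAction θ h) = optPath θ (h + 1) := by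
  have dials : p.numReveal ≤ (optAction θ h).1 ∧ p.Matches θ.2 h (optAction θ h) := by
    rw [optAction, if_neg hh.not_gt, if_neg hh.ne']
    split_ifs with hw
    · refine ⟨by simp, fun j hj => ?_⟩
      have : j = ⟨h - p.lastEntry - 1, by simp only [passwordLength]; omega⟩ :=
        Fin.ext (by simp only; omega)
      rw [this]
    · refine ⟨le_rfl, fun j hj => ?_⟩
      have := j.2
      simp only [passwordLength] at this
      omega
  rw [optPath, if_neg hh.not_ge, optPath, if_neg (by omega)]
  simp only [move]
  rw [if_neg (by omega), if_pos ⟨trivial, dials.2⟩]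

lemma move_optPath (θ : p.Secret) {h : ℕ} (hH : h < p.H) :
    p.move true θ h (optPath θ h) (optAction θ h) = optPath θ (h + 1) := by
  rcases lt_trichotomy h (p.n + θ.1.1.1) with hh | rfl | hh
  · exact move_optPath_of_lt θ hh
  · exact move_optPath_entry θ
  · exact move_optPath_of_gt θ hh hH

lemma signalClass_optPath_of_lt (θ : p.Secret) {h : ℕ} (hH : h < p.H) :
    p.signalClass h (optPath θ h) = none := by
  unfold optPath
  split_ifs
  · rfl
  · simp [signalClass, hH.ne]

/-- The optimal open-loop policy. -/
def optPolicy (θ : p.Secret) : Policy p.RawObs (Fin p.A) where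
  act hist _ a := if a = optAction θ (hist.length + 1) then 1 else 0
  act_nonneg _ _ _ := by split_ifs <;> norm_num
  act_sum _ _ := by simp

lemma automatonExpect_optPolicy (θ : p.Secret) (b : ℝ) (k : ℕ) :
    ∀ (h : ℕ) (hist : List (p.RawObs × Fin p.A)), k + h = p.H → hist.length + 1 = h →
      automatonExpect (fun h st o => p.refEmission h st (p.decodeObs o)) (p.move true θ)
        (optPolicy θ) (k + 1) h hist (optPath θ h) (fun l => meanReward b
          ((firstSignal p.signalClass (p.move true θ) h (optPath θ h) l).map
            (Prod.map id p.decodeObs))) = (1 + b) / 2 := by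
  induction k with
  | zero =>
    intro h hist hk hl
    obtain rfl : h = p.H := by omega
    have final : p.signalClass p.H (.lock true) = some (.final true) := by simp [signalClass]
    simp [optPath_last, automatonExpect, firstSignal_cons_of_some final, meanReward, ← sum_mul,
      (optPolicy θ).act_sum, sum_refEmission_decodeObs]
  | succ k ih =>
    intro h hist hk hl
    have next_step (o : p.RawObs) := ih (h + 1) (hist ++ [(o, optAction θ h)]) (by omega)
      (by simp; omega)
    rw [automatonExpect]
    simp only [firstSignal_cons_of_none (signalClass_optPath_of_lt θ (by omega : h < p.H))]
    simp only [optPolicy, hl, ite_mul, one_mul, zero_mul, sum_ite_eq', mem_univ, if_true,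
      move_optPath θ (by omega : h < p.H)]
    simp only [optPolicy] at next_step
    simp only [next_step, ← sum_mul, sum_refEmission_decodeObs, one_mul]

section Model

variable {s : ℝ} (hs : |s| ≤ 1) {b : ℝ} (hb : b ∈ Set.Icc 0 1) (θ : p.Secret) (v : Fin p.K → Bool)

lemma le_optValue_model : (1 + b) / 2 ≤ (p.model hs hb θ v).optValue :=
  calc (1 + b) / 2 = (p.model hs hb θ v).value (optPolicy θ) := by
        have := automatonExpect_optPolicy θ b (p.H - 1) 1 [] (by have := p.le_H; omega) rfl
        rw [optPath_one, Nat.sub_add_cancel (by have := p.le_H; omega)] at this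
        rw [value_model, refExpect_eq_automatonExpect_move θ, ← this]
        rfl
    _ ≤ _ := POMDP.value_le_optValue _ _

lemma gap_le_optValue_sub_value (π : Policy p.RawObs (Fin p.A)) :
    1 / 2 * (refExpect π fun l => (anyReveal (signal θ l) : ℝ)) +
      b / 2 * (1 - refExpect π fun l => (unlock (signal θ l) : ℝ)) ≤
        (p.model hs hb θ v).optValue - (p.model hs hb θ v).value π := by
  linarith [le_optValue_model hs hb θ v, value_model_le hs hb θ v π]

end Model

end LockTree

/-! ### Counting informative signals -/

lemma sum_le_one_of_forall_eq {ι : Type*} [Fintype ι] {f : ι → ℕ} (f_le_one : ∀ i, f i ≤ 1)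
    (unique : ∀ i j, f i ≠ 0 → f j ≠ 0 → i = j) : ∑ i, f i ≤ 1 := by
  by_cases h : ∃ i, f i ≠ 0
  · obtain ⟨i, hi⟩ := h
    rw [sum_eq_single i (fun j _ hj => not_not.1 fun hfj => hj (unique j i hfj hi)) (by simp)]
    exact f_le_one i
  · push Not at h
    simp [h]

namespace LockTree

variable {p : LockTree}

section Indicators

variable {X Y : Type}

lemma probe_add_unlock_le_one (c : Option (SignalClass × X)) : probe c + unlock c ≤ 1 := by
  rcases c with _ | ⟨(_ | _) | (_ | _), x⟩ <;> simp [probe, unlock]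

lemma probe_le_anyReveal (c : Option (SignalClass × X)) : probe c ≤ anyReveal c := by
  rcases c with _ | ⟨(_ | _) | (_ | _), x⟩ <;> simp [probe, anyReveal]

lemma probe_map (f : X → Y) (c : Option (SignalClass × X)) :
    probe (c.map (Prod.map id f)) = probe c := by
  rcases c with _ | ⟨(_ | _) | (_ | _), x⟩ <;> rfl

lemma unlock_map (f : X → Y) (c : Option (SignalClass × X)) :
    unlock (c.map (Prod.map id f)) = unlock c := by
  rcases c with _ | ⟨(_ | _) | (_ | _), x⟩ <;> rfl

/-- Forgetting the flag of a signal. -/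
def SignalClass.unflag : SignalClass → SignalClass
  | .reveal _ => .reveal false
  | .final _ => .final false

lemma anyReveal_map_unflag (f : X → Y) (c : Option (SignalClass × X)) :
    anyReveal (c.map (Prod.map SignalClass.unflag f)) = anyReveal c := by
  rcases c with _ | ⟨_ | _, x⟩ <;> rfl

end Indicators

/-- Indicator of a visit to the revealing state, which can be read off an episode without knowing
the secret. -/
def revealCount (p : LockTree) (l : List (p.RawObs × Fin p.A)) : ℕ :=
  anyReveal (firstSignal p.signalClass p.refMove 1 p.root l)

lemma signalClass_unflag (h : ℕ) (st : State p.treeSize) :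
    p.signalClass h (unflag st) = (p.signalClass h st).map SignalClass.unflag := by
  rcases st with i | f | f | _ <;> simp only [signalClass, unflag] <;> (try split_ifs) <;> rfl

lemma anyReveal_signal (θ : p.Secret) (l : List (p.RawObs × Fin p.A)) :
    anyReveal (signal θ l) = p.revealCount l := by
  have := firstSignal_semiconj (h := 1) (st := p.root) signalClass_unflag (unflag_move true θ) l
  rw [revealCount, show p.root = unflag p.root from rfl, this, anyReveal_map_unflag, signal]
  rcases firstSignal p.signalClass (p.move true θ) 1 p.root l with _ | ⟨_ | _, x⟩ <;> rfl

lemma unlock_firstSignal_reveal (θ : p.Secret) (h : ℕ) (f : Bool)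
    (l : List (p.RawObs × Fin p.A)) :
    unlock (firstSignal p.signalClass (p.move true θ) h (.reveal f) l) = 0 := by
  have class_eq := forall_mem_firstSignal (cls := p.signalClass) (nx := p.move true θ) (h := h)
    (I := fun _ st => st = .reveal f ∨ st = .term) (Q := fun c => c = .reveal f)
    (by rintro h _ c (rfl | rfl) hc <;> simp_all [signalClass])
    (by rintro h _ a (rfl | rfl) <;> exact Or.inr rfl) l (.inl rfl)
  rcases hc : firstSignal p.signalClass (p.move true θ) h (.reveal f) l with _ | ⟨c, x⟩
  · rfl
  · obtain rfl : c = .reveal f := class_eq (c, x) hc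
    rfl

lemma probe_add_unlock_firstSignal_lock_false (θ : p.Secret) (h : ℕ)
    (l : List (p.RawObs × Fin p.A)) :
    probe (firstSignal p.signalClass (p.move true θ) h (.lock false) l) +
      unlock (firstSignal p.signalClass (p.move true θ) h (.lock false) l) = 0 := by
  have class_eq := forall_mem_firstSignal (cls := p.signalClass) (nx := p.move true θ) (h := h)
    (I := fun _ st => st = .lock false ∨ st = .reveal false ∨ st = .term)
    (Q := fun c => c = .reveal false ∨ c = .final false)
    (by rintro h _ c (rfl | rfl | rfl) hc <;> simp_all [signalClass])
    (by
      rintro h _ a (rfl | rfl | rfl) <;> simp only [move]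
      · split_ifs <;> simp_all
      all_goals simp) l (.inl rfl)
  rcases hc : firstSignal p.signalClass (p.move true θ) h (.lock false) l with _ | ⟨c, x⟩
  · rfl
  · obtain rfl | rfl : c = .reveal false ∨ c = .final false := class_eq (c, x) hc <;> rfl

lemma getElem_of_unlock_firstSignal_lock {θ : p.Secret} {l : List (p.RawObs × Fin p.A)} {h : ℕ}
    (hl : unlock (firstSignal p.signalClass (p.move true θ) h (.lock true) l) ≠ 0)
    (j : Fin p.passwordLength) (hj : h ≤ p.lastEntry + 1 + j) :
    ∃ q, l[p.lastEntry + 1 + j - h]? = some q ∧ q.2.1 = p.numReveal + θ.2 j := by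
  induction l generalizing h with
  | nil => exact absurd rfl hl
  | cons q l ih =>
    have h_ne : h ≠ p.H := by
      have := j.2
      simp only [passwordLength] at this
      omega
    rw [firstSignal_cons_of_none (by simp [signalClass, h_ne])] at hl
    simp only [move] at hl
    split_ifs at hl with reveals matches_password
    · exact absurd (unlock_firstSignal_reveal θ _ _ l) hl
    · obtain rfl | h_lt := hj.eq_or_lt
      · exact ⟨q, by simp, matches_password.2 j rfl⟩
      · obtain ⟨n, hn⟩ := Nat.exists_eq_add_of_lt h_lt
        obtain ⟨q', hq', h_action⟩ := ih hl h_lt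
        refine ⟨q', ?_, h_action⟩
        rw [show p.lastEntry + 1 + j - h = p.lastEntry + 1 + j - (h + 1) + 1 by omega]
        simpa using hq'
    · have := probe_add_unlock_firstSignal_lock_false θ (h + 1) l
      omega

lemma password_unique {θ θ' : p.Secret} {l : List (p.RawObs × Fin p.A)} {h : ℕ}
    (h_le : h ≤ p.lastEntry + 1)
    (hl : unlock (firstSignal p.signalClass (p.move true θ) h (.lock true) l) ≠ 0)
    (hl' : unlock (firstSignal p.signalClass (p.move true θ') h (.lock true) l) ≠ 0) :
    θ.2 = θ'.2 := by
  funext j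
  obtain ⟨q, hq, h_action⟩ := getElem_of_unlock_firstSignal_lock hl j (by omega)
  obtain ⟨q', hq', h_action'⟩ := getElem_of_unlock_firstSignal_lock hl' j (by omega)
  obtain rfl : q = q' := Option.some.inj (hq.symm.trans hq')
  exact Fin.ext (by omega)

lemma IsEntry.unique {e e' : p.Entry} {h : ℕ} {i : Fin p.treeSize} {a : Fin p.A}
    (he : p.IsEntry e h i a) (he' : p.IsEntry e' h i a) : e = e' := by
  obtain ⟨h_step, h_node, h_action⟩ := he
  obtain ⟨h_step', h_node', h_action'⟩ := he'
  exact Prod.ext (Fin.ext (by omega)) (Prod.ext (Fin.ext (by omega)) (Fin.ext (by omega)))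

lemma entry_unique {θ θ' : p.Secret} {l : List (p.RawObs × Fin p.A)} {h : ℕ} {i : Fin p.treeSize}
    (hl : probe (firstSignal p.signalClass (p.move true θ) h (.tree i) l) +
      unlock (firstSignal p.signalClass (p.move true θ) h (.tree i) l) ≠ 0)
    (hl' : probe (firstSignal p.signalClass (p.move true θ') h (.tree i) l) +
      unlock (firstSignal p.signalClass (p.move true θ') h (.tree i) l) ≠ 0) :
    θ.1 = θ'.1 ∧ ∃ h₁ ≤ p.lastEntry + 1, ∃ l₁, ∀ ϑ ∈ ({θ, θ'} : Set p.Secret),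
      firstSignal p.signalClass (p.move true ϑ) h (.tree i) l =
        firstSignal p.signalClass (p.move true ϑ) h₁ (.lock true) l₁ := by
  induction l generalizing h i with
  | nil => exact absurd rfl hl
  | cons q l ih =>
    have step (ϑ : p.Secret) := firstSignal_cons_of_none (cls := p.signalClass)
      (nx := p.move true ϑ) (h := h) (st := .tree i) rfl q l
    simp only [step, move] at hl hl' ⊢
    by_cases in_tree : q.2.1 < 2
    · simp only [if_pos in_tree] at hl hl' ⊢
      exact ih hl hl'
    · simp only [if_neg in_tree, true_and] at hl hl' ⊢
      split_ifs at hl with he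
      · split_ifs at hl' with he'
        · refine ⟨he.unique he', h + 1, ?_, l, ?_⟩
          · have := θ.1.1.2
            have := lastEntry_bounds p
            have := he.1
            omega
          · rintro ϑ (rfl | rfl)
            · rw [if_pos he]
            · rw [if_pos he']
        · exact absurd (probe_add_unlock_firstSignal_lock_false θ' _ l) hl'
      · exact absurd (probe_add_unlock_firstSignal_lock_false θ _ l) hl

lemma entry_eq_of_probe_ne_zero {θ θ' : p.Secret} {l : List (p.RawObs × Fin p.A)}
    (hl : probe (signal θ l) ≠ 0) (hl' : probe (signal θ' l) ≠ 0) : θ.1 = θ'.1 := by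
  rw [signal, probe_map, root] at hl hl'
  exact (entry_unique (θ := θ) (θ' := θ') (l := l) (h := 1) (i := ⟨0, p.treeSize_pos⟩) (by omega)
    (by omega)).1

lemma secret_eq_of_unlock_ne_zero {θ θ' : p.Secret} {l : List (p.RawObs × Fin p.A)}
    (hl : unlock (signal θ l) ≠ 0) (hl' : unlock (signal θ' l) ≠ 0) : θ = θ' := by
  rw [signal, unlock_map, root] at hl hl'
  obtain ⟨entry_eq, h₁, h₁_le, l₁, signal_eq⟩ := entry_unique (θ := θ) (θ' := θ') (l := l) (h := 1)
    (i := ⟨0, p.treeSize_pos⟩) (by omega) (by omega)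
  rw [signal_eq θ (by simp)] at hl
  rw [signal_eq θ' (by simp)] at hl'
  exact Prod.ext entry_eq (password_unique h₁_le hl hl')

lemma sum_probe_le_revealCount (w : p.Password) (l : List (p.RawObs × Fin p.A)) :
    ∑ e : p.Entry, probe (signal (e, w) l) ≤ p.revealCount l := by
  by_cases h : p.revealCount l = 0
  · rw [h, Nat.le_zero]
    refine sum_eq_zero fun e _ => Nat.le_zero.1 ?_
    rw [← h, ← anyReveal_signal (e, w)]
    exact probe_le_anyReveal _
  · refine (sum_le_one_of_forall_eq (fun e => ?_) fun e e' => ?_).trans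
      (Nat.one_le_iff_ne_zero.2 h)
    · exact le_of_add_le_left (probe_add_unlock_le_one _)
    · exact entry_eq_of_probe_ne_zero (θ := (e, w)) (θ' := (e', w))

lemma sum_unlock_le_one (l : List (p.RawObs × Fin p.A)) :
    ∑ θ : p.Secret, unlock (signal θ l) ≤ 1 :=
  sum_le_one_of_forall_eq (fun _ => le_of_add_le_right (probe_add_unlock_le_one _))
    fun _ _ => secret_eq_of_unlock_ne_zero

lemma sum_refExpect_unlock_le_one (π : Policy p.RawObs (Fin p.A)) :
    ∑ θ : p.Secret, refExpect π (fun l => (unlock (signal θ l) : ℝ)) ≤ 1 := by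
  rw [← map_sum]
  refine (refExpect_mono π (G' := fun _ => 1) fun l => ?_).trans_eq (refExpect_const π 1)
  rw [Finset.sum_apply]
  exact_mod_cast sum_unlock_le_one l

lemma refExpect_unlock_nonneg (π : Policy p.RawObs (Fin p.A)) (θ : p.Secret) :
    0 ≤ refExpect π fun l => (unlock (signal θ l) : ℝ) :=
  (refExpect_const π 0).symm.trans_le (refExpect_mono π fun _ => by positivity)

end LockTree

/-! ### The revealing condition -/

/-- The matrix that averages an estimate `e` of the row index over the second components in `D`. -/
def averagedEstimate {S ι κ : Type} [DecidableEq κ] (D : Finset κ) (e : S → ι → ℝ) :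
    Matrix S (ι × κ) ℝ :=
  Matrix.of fun s q => if q.2 ∈ D then e s q.1 / #D else 0

section AveragedEstimate

variable {S ι κ : Type} [Fintype ι] [Fintype κ]

lemma sum_abs_le_of_starNorm_le_one {x : ι × κ → ℝ} (hx : starNorm x ≤ 1) (D : Finset κ) :
    ∑ a ∈ D, ∑ ω, |x (ω, a)| ≤ √(#D) := by
  rw [starNorm, Real.sqrt_le_one] at hx
  refine Real.le_sqrt_of_sq_le (sq_sum_le_card_mul_sum_sq.trans ?_)
  refine mul_le_of_le_one_right (Nat.cast_nonneg _) (le_trans ?_ hx)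
  exact sum_le_univ_sum_of_nonneg fun a => sq_nonneg _

variable [DecidableEq κ]

lemma opNormStarOne_averagedEstimate_le [Fintype S] {C : ℝ} (hC : 0 ≤ C) {e : S → ι → ℝ}
    (he : ∀ ω, ∑ s, |e s ω| ≤ C) (D : Finset κ) :
    opNormStarOne (averagedEstimate D e) ≤ C / √(#D) := by
  refine csSup_le ⟨0, 0, by simp [starNorm], by simp⟩ ?_
  rintro _ ⟨x, hx, rfl⟩
  calc ∑ s, |(averagedEstimate D e).mulVec x s|
      ≤ ∑ s, ∑ q, |averagedEstimate D e s q * x q| :=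
        sum_le_sum fun s _ => abs_sum_le_sum_abs _ _
    _ = ∑ a ∈ D, ∑ ω, (∑ s, |e s ω|) * (|x (ω, a)| / #D) := by
        rw [sum_comm, Fintype.sum_prod_type_right, ← sum_filter_add_sum_filter_not univ (· ∈ D)]
        have off (a : κ) (ha : a ∈ univ.filter (· ∉ D)) :
            ∑ ω, ∑ s, |averagedEstimate D e s (ω, a) * x (ω, a)| = 0 := by
          simp [averagedEstimate, (mem_filter.1 ha).2]
        rw [sum_eq_zero off, add_zero, filter_mem_eq_inter, univ_inter]
        refine sum_congr rfl fun a ha => sum_congr rfl fun ω _ => ?_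
        rw [sum_mul]
        refine sum_congr rfl fun s _ => ?_
        rw [averagedEstimate, Matrix.of_apply, if_pos ha, abs_mul, abs_div, Nat.abs_cast]
        ring
    _ ≤ ∑ a ∈ D, ∑ ω, C * (|x (ω, a)| / #D) :=
        sum_le_sum fun a _ => sum_le_sum fun ω _ =>
          mul_le_mul_of_nonneg_right (he ω) (by positivity)
    _ = C / #D * ∑ a ∈ D, ∑ ω, |x (ω, a)| := by
        simp only [mul_sum]
        exact sum_congr rfl fun a _ => sum_congr rfl fun ω _ => by ring
    _ ≤ C / #D * √(#D) :=
        mul_le_mul_of_nonneg_left (sum_abs_le_of_starNorm_le_one hx D) (by positivity)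
    _ = C / √(#D) := by rw [div_mul_eq_mul_div, mul_div_assoc, Real.sqrt_div_self']; ring

lemma averagedEstimate_mul_eq_one [DecidableEq S] {D : Finset κ} (hD : D.Nonempty)
    {e : S → ι → ℝ} {N : Matrix (ι × κ) S ℝ}
    (unbiased : ∀ a ∈ D, ∀ s z, ∑ ω, e s ω * N (ω, a) z = if s = z then 1 else 0) :
    averagedEstimate D e * N = 1 := by
  have card_ne : (#D : ℝ) ≠ 0 := by exact_mod_cast hD.card_pos.ne'
  ext s z
  calc ∑ q, averagedEstimate D e s q * N q z
      = ∑ a, if a ∈ D then (∑ ω, e s ω * N (ω, a) z) / #D else 0 := by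
        rw [Fintype.sum_prod_type_right]
        refine sum_congr rfl fun a _ => ?_
        simp only [averagedEstimate, Matrix.of_apply, ite_mul, zero_mul, sum_div]
        split_ifs
        · exact sum_congr rfl fun ω _ => by ring
        · exact sum_const_zero
    _ = ∑ a ∈ D, (if s = z then 1 else 0) / (#D : ℝ) := by
        rw [sum_ite_mem, univ_inter]
        exact sum_congr rfl fun a ha => by rw [unbiased a ha]
    _ = (1 : Matrix S S ℝ) s z := by
        rw [sum_const, nsmul_eq_mul, Matrix.one_apply]
        field_simp

end AveragedEstimate

namespace POMDP

variable {S O A : Type} [Fintype S] [Fintype O] [Fintype A] {H : ℕ} (M : POMDP S O A H)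

lemma sum_emitActProb (m : ℕ) : ∀ (h : ℕ) (s : S) (a : Fin (m - 1) → A),
    ∑ ω, M.emitActProb m h s ω a = 1 := by
  induction m with
  | zero => intro h s a; simp [emitActProb]
  | succ m ih =>
    intro h s a
    rcases m with _ | m
    · rw [sum_tuple_eq_sum_cons]
      simp [emitActProb, M.emit_sum]
    · have future : ∑ ω : Fin (m + 1) → O, ∑ s', M.trans h s (a ⟨0, Nat.succ_pos m⟩) s' *
          M.emitActProb (m + 1) (h + 1) s' ω (fun i => a i.succ) = 1 := by
        rw [sum_comm, ← M.trans_sum h s (a ⟨0, Nat.succ_pos m⟩)]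
        refine sum_congr rfl fun s' _ => ?_
        rw [← mul_sum, ih (h + 1) s' fun i => a i.succ, mul_one]
      rw [sum_tuple_eq_sum_cons, ← M.emit_sum h s]
      refine sum_congr rfl fun o _ => ?_
      simp only [emitActProb, Fin.cons_zero, Fin.cons_succ, ← mul_sum]
      rw [future, mul_one]

lemma sum_mul_emitActProb_zero (m h : ℕ) (s : S) (a : Fin (m + 1 - 1) → A) (g : O → ℝ) :
    ∑ ω, g (ω 0) * M.emitActProb (m + 1) h s ω a = ∑ o, g o * M.emit h s o := by
  rw [sum_tuple_eq_sum_cons]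
  refine sum_congr rfl fun o _ => ?_
  rcases m with _ | m
  · simp [emitActProb]
  · simp only [Fin.cons_zero, ← mul_sum, emitActProb, Fin.cons_succ]
    rw [sum_comm]
    have (s' : S) := M.sum_emitActProb (m + 1) (h + 1) s' fun i => a i.succ
    simp only [← mul_sum, this, M.trans_sum, mul_one]

lemma sum_mul_emitActProb_zero_one (m h : ℕ) (s : S) (a : Fin (m + 2 - 1) → A) (g : O → O → ℝ) :
    ∑ ω, g (ω 0) (ω 1) * M.emitActProb (m + 2) h s ω a =
      ∑ o, M.emit h s o * ∑ s', M.trans h s (a ⟨0, Nat.succ_pos m⟩) s' *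
        ∑ o', g o o' * M.emit (h + 1) s' o' := by
  rw [sum_tuple_eq_sum_cons]
  refine sum_congr rfl fun o _ => ?_
  have marginal (s' : S) :=
    M.sum_mul_emitActProb_zero m (h + 1) s' (fun i => a i.succ) (g o)
  have cons_one (ω : Fin (m + 1) → O) : (Fin.cons o ω : Fin (m + 2) → O) 1 = ω 0 := rfl
  simp only [emitActProb, Fin.cons_zero, Fin.cons_succ, cons_one, ← marginal, mul_sum]
  rw [sum_comm]
  exact sum_congr rfl fun s' _ => sum_congr rfl fun ω _ => by ring

end POMDP

namespace LockTree

variable {p : LockTree}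

/-- Unbiased estimate of the indicator that the revealing state has the given flag. -/
def flagEstimate (s : ℝ) (v : Fin p.K → Bool) : Bool → Obs p.treeSize p.K → ℝ
  | true, .sign k g => boolSign (v k) * boolSign g / s
  | false, .sign k g => 1 - boolSign (v k) * boolSign g / s
  | _, _ => 0

/-- Estimate of the indicator of a state from the observation made there and the one that follows
it, unbiased if a revealing action is played. -/
def stateEstimate (s : ℝ) (v : Fin p.K → Bool) :
    State p.treeSize → Obs p.treeSize p.K → Obs p.treeSize p.K → ℝ
  | .tree i, x, _ => if x = .tree i then 1 else 0
  | .lock f, .lock, x' => flagEstimate s v f x'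
  | .lock _, _, _ => 0
  | .reveal f, x, _ => flagEstimate s v f x
  | .term, x, _ => if x = .term then 1 else 0

section Estimates

variable {s : ℝ} (hs : 0 < s) (v : Fin p.K → Bool)
include hs

lemma abs_flagEstimate_add_le (x : Obs p.treeSize p.K) :
    |flagEstimate s v true x| + |flagEstimate s v false x| ≤ 2 / s + 1 := by
  have : 0 < 1 / s := by positivity
  have two_div : 2 / s = 1 / s + 1 / s := by ring
  cases x with
  | sign k g =>
    have abs_eq : |boolSign (v k) * boolSign g / s| = 1 / s := by
      rw [abs_div, abs_mul, abs_boolSign, abs_boolSign, abs_of_pos hs, one_mul]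
    have := abs_sub 1 (boolSign (v k) * boolSign g / s)
    rw [abs_one, abs_eq] at this
    simp only [flagEstimate, abs_eq]
    linarith
  | _ => simp only [flagEstimate, abs_zero]; linarith

lemma sum_abs_stateEstimate_le (x x' : Obs p.treeSize p.K) :
    ∑ st, |stateEstimate s v st x x'| ≤ 2 / s + 1 := by
  have : 0 < 2 / s := by positivity
  rw [sum_state]
  cases x with
  | tree i => simp [stateEstimate, flagEstimate, apply_ite abs]; linarith
  | lock => simpa [stateEstimate, flagEstimate] using abs_flagEstimate_add_le hs v x'
  | sign k g => simpa [stateEstimate] using abs_flagEstimate_add_le hs v (.sign k g)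
  | _ => simp [stateEstimate, flagEstimate]; linarith

end Estimates

section Unbiased

variable (s : ℝ) (v : Fin p.K → Bool)

lemma sum_emission_tree_mul (h : ℕ) (i : Fin p.treeSize) (φ : Obs p.treeSize p.K → ℝ) :
    ∑ x, emission s v h (.tree i) x * φ x = φ (.tree i) := by
  simp [emission, signalClass, refEmission]

lemma sum_emission_term_mul (h : ℕ) (φ : Obs p.treeSize p.K → ℝ) :
    ∑ x, emission s v h .term x * φ x = φ .term := by
  simp [emission, signalClass, refEmission]

lemma sum_emission_lock_mul {h : ℕ} (hh : h < p.H) (f : Bool) (φ : Obs p.treeSize p.K → ℝ) :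
    ∑ x, emission s v h (.lock f) x * φ x = φ .lock := by
  simp [emission, signalClass, refEmission, hh.ne]

lemma sum_emission_reveal_mul {h : ℕ} (hh : h ≤ p.H) (f : Bool) (φ : Obs p.treeSize p.K → ℝ) :
    ∑ x, emission s v h (.reveal f) x * φ x =
      classMean (.reveal f) fun x => (1 + excess s v (.reveal f) x) * φ x := by
  have hc : p.signalClass h (.reveal f) = some (.reveal f) := by simp [signalClass, hh]
  simp [← sum_refEmission_mul hc, emission, hc, mul_assoc]

variable {s}

lemma sum_emission_reveal_mul_flagEstimate (hs : s ≠ 0) {h : ℕ} (hh : h ≤ p.H) (f f' : Bool) :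
    ∑ x, emission s v h (.reveal f) x * flagEstimate s v f' x = if f' = f then 1 else 0 := by
  have := p.K_pos
  have bit (k : Fin p.K) :
      (1 + excess s v (.reveal f) (.sign k true)) * flagEstimate s v f' (.sign k true) +
        (1 + excess s v (.reveal f) (.sign k false)) * flagEstimate s v f' (.sign k false) =
        2 * if f' = f then 1 else 0 := by
    rcases hv : v k <;> rcases f <;> rcases f' <;>
      simp [flagEstimate, excess, hv, boolSign] <;> field_simp <;> ring
  rw [sum_emission_reveal_mul s v hh, classMean, sum_congr rfl fun k _ => bit k]
  rw [sum_const, card_univ, Fintype.card_fin, nsmul_eq_mul]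
  field_simp

lemma sum_stateEstimate_mul_emission_of_ne_lock {x : Obs p.treeSize p.K} (hx : x ≠ .lock) (h : ℕ)
    (st z : State p.treeSize) :
    ∑ x', stateEstimate s v st x x' * emission s v h z x' = stateEstimate s v st x .term := by
  have (x' : Obs p.treeSize p.K) : stateEstimate s v st x x' = stateEstimate s v st x .term := by
    cases st <;> cases x <;> first | rfl | exact absurd rfl hx
  simp only [this, ← mul_sum, sum_emission, mul_one]

lemma sum_stateEstimate_lock_mul_emission_reveal (hs : s ≠ 0) {h : ℕ} (hh : h ≤ p.H) (f : Bool)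
    (st : State p.treeSize) : ∑ x', stateEstimate s v st .lock x' * emission s v h (.reveal f) x' =
      if st = .lock f then 1 else 0 := by
  cases st with
  | lock f' =>
    simp only [stateEstimate, mul_comm (flagEstimate _ _ _ _), State.lock.injEq]
    exact sum_emission_reveal_mul_flagEstimate v hs hh f f'
  | _ => simp [stateEstimate, flagEstimate]

lemma sum_emission_mul_stateEstimate (hs : s ≠ 0) {h : ℕ} (hh : h < p.H) (θ : p.Secret)
    {a : Fin p.A} (ha : a.1 < p.numReveal) (b : ℝ) (st z : State p.treeSize) :
    ∑ x, emission s v h z x *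
      ((1 - b) * ∑ x', stateEstimate s v st x x' * emission s v (h + 1) (p.move false θ h z a) x' +
        b * ∑ x', stateEstimate s v st x x' * emission s v (h + 1) (p.move true θ h z a) x') =
      if st = z then 1 else 0 := by
  have mix (y : ℝ) : (1 - b) * y + b * y = y := by ring
  cases z with
  | tree i =>
    simp only [sum_emission_tree_mul, sum_stateEstimate_mul_emission_of_ne_lock v
      (x := .tree i) (by simp), mix]
    cases st <;> simp [stateEstimate, flagEstimate, eq_comm]
  | lock f =>
    simp only [sum_emission_lock_mul s v hh, move, if_pos ha, mix,
      sum_stateEstimate_lock_mul_emission_reveal v hs (Nat.succ_le_of_lt hh)]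
  | reveal f =>
    have summand_eq (x : Obs p.treeSize p.K) : emission s v h (.reveal f) x *
        ∑ x', stateEstimate s v st x x' * emission s v (h + 1) .term x' =
          emission s v h (.reveal f) x * stateEstimate s v st x .term := by
      by_cases hx : x = .lock
      · simp [hx, emission, refEmission]
      · rw [sum_stateEstimate_mul_emission_of_ne_lock v hx]
    simp only [move, mix, summand_eq]
    cases st with
    | reveal f' =>
      simpa [stateEstimate] using sum_emission_reveal_mul_flagEstimate v hs hh.le f f'
    | _ =>
      refine (sum_eq_zero fun x _ => ?_).trans (by simp)
      cases x <;> simp [stateEstimate, flagEstimate, emission, refEmission]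
  | term =>
    simp only [sum_emission_term_mul, sum_stateEstimate_mul_emission_of_ne_lock v
      (x := .term) (by simp), mix]
    cases st <;> simp [stateEstimate, flagEstimate]

end Unbiased

section Model

variable {s : ℝ} (hs : |s| ≤ 1) {b : ℝ} (hb : b ∈ Set.Icc 0 1) (θ : p.Secret) (v : Fin p.K → Bool)

lemma sum_trans_model_mul (h : ℕ) (x : p.RawState) (a : Fin p.A) (f : State p.treeSize → ℝ) :
    ∑ y, (p.model hs hb θ v).trans h x a y * f (p.decodeState y) =
      (1 - b) * f (p.move false θ h (p.decodeState x) a) +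
        b * f (p.move true θ h (p.decodeState x) a) := by
  simp only [model]
  rw [← p.decodeState.symm.sum_comp]
  simp [add_mul, sum_add_distrib]

/-- Action sequences of length `k + 1` that start with a revealing action. -/
def revealSeqs (p : LockTree) (k : ℕ) : Finset (Fin (k + 2 - 1) → Fin p.A) :=
  Fintype.piFinset fun i => if i.1 = 0 then univ.filter (·.1 < p.numReveal) else univ

lemma card_revealSeqs (k : ℕ) : #(p.revealSeqs k) = p.numReveal * p.A ^ k := by
  rw [revealSeqs, Fintype.card_piFinset]
  refine (Fin.prod_univ_succ (n := k) _).trans ?_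
  simp [Fin.card_filter_val_lt, Nat.div_le_self]

lemma one_le_card_revealSeqs (k : ℕ) : 1 ≤ #(p.revealSeqs k) := by
  have := p.three_le_A
  rw [card_revealSeqs]
  exact Nat.mul_pos (by simp only [numReveal]; omega) (pow_pos (by omega) k)

/-- Left inverse of the emission-action matrix. -/
def leftInverse (p : LockTree) (s : ℝ) (v : Fin p.K → Bool) (k : ℕ) :
    Matrix p.RawState ((Fin (k + 2) → p.RawObs) × (Fin (k + 2 - 1) → Fin p.A)) ℝ :=
  averagedEstimate (p.revealSeqs k)
    fun x ω => stateEstimate s v (p.decodeState x) (p.decodeObs (ω 0)) (p.decodeObs (ω 1))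

lemma leftInverse_mul_emitActMatrix (hs₀ : s ≠ 0) {h : ℕ} (hh : h < p.H) (k : ℕ) :
    p.leftInverse s v k * (p.model hs hb θ v).emitActMatrix h (k + 2) = 1 := by
  refine averagedEstimate_mul_eq_one (card_pos.1 (one_le_card_revealSeqs k)) fun a ha x z => ?_
  refine ((p.model hs hb θ v).sum_mul_emitActProb_zero_one k h z a fun o o' =>
    stateEstimate s v (p.decodeState x) (p.decodeObs o) (p.decodeObs o')).trans ?_
  have decode (o : p.RawObs) (y : p.RawState) : ∑ o', stateEstimate s v (p.decodeState x)
      (p.decodeObs o) (p.decodeObs o') * (p.model hs hb θ v).emit (h + 1) y o' =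
        ∑ x', stateEstimate s v (p.decodeState x) (p.decodeObs o) x' *
          emission s v (h + 1) (p.decodeState y) x' :=
    p.decodeObs.sum_comp fun x' => _ * emission s v (h + 1) (p.decodeState y) x'
  simp only [decode]
  have step (o : p.RawObs) := sum_trans_model_mul hs hb θ v h z (a ⟨0, Nat.succ_pos k⟩)
    fun y => ∑ x', stateEstimate s v (p.decodeState x) (p.decodeObs o) x' *
      emission s v (h + 1) y x'
  simp only [step]
  have ha₀ : (a ⟨0, Nat.succ_pos k⟩).1 < p.numReveal := by
    simpa using Fintype.mem_piFinset.1 ha ⟨0, Nat.succ_pos k⟩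
  have unbiased := sum_emission_mul_stateEstimate v hs₀ hh θ ha₀ b (p.decodeState x)
    (p.decodeState z)
  rw [← p.decodeObs.sum_comp] at unbiased
  simp only [p.decodeState.injective.eq_iff] at unbiased
  exact unbiased

lemma opNormStarOne_leftInverse_le (hs₀ : 0 < s) (k : ℕ) :
    opNormStarOne (p.leftInverse s v k) ≤ (2 / s + 1) / √(#(p.revealSeqs k)) := by
  refine opNormStarOne_averagedEstimate_le (by positivity) (fun ω => ?_) _
  rw [p.decodeState.sum_comp fun st =>
    |stateEstimate s v st (p.decodeObs (ω 0)) (p.decodeObs (ω 1))|]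
  exact sum_abs_stateEstimate_le hs₀ v _ _

end Model

/-- Strength of the bits for which the models are `σ / (σ + 2)`-revealing within `k + 2` steps. -/
def strength (p : LockTree) (σ : ℝ) (k : ℕ) : ℝ := σ / √(#(p.revealSeqs k))

lemma one_le_sqrt_card_revealSeqs (k : ℕ) : 1 ≤ √(#(p.revealSeqs k) : ℝ) :=
  Real.one_le_sqrt.2 (by exact_mod_cast one_le_card_revealSeqs k)

section Strength

variable {σ : ℝ} (hσ : 0 < σ)
include hσ

lemma strength_pos (k : ℕ) : 0 < p.strength σ k :=
  div_pos hσ (zero_lt_one.trans_le (one_le_sqrt_card_revealSeqs k))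

lemma abs_strength_le_one (hσ₁ : σ ≤ 1) (k : ℕ) : |p.strength σ k| ≤ 1 := by
  have one_le := one_le_sqrt_card_revealSeqs (p := p) k
  rw [abs_of_pos (strength_pos hσ k), strength, div_le_one (by positivity)]
  exact hσ₁.trans one_le

lemma isRevealing_model {k : ℕ} (hk : k + 2 ≤ p.H) (hs : |p.strength σ k| ≤ 1) {b : ℝ}
    (hb : b ∈ Set.Icc 0 1) (θ : p.Secret) (v : Fin p.K → Bool) :
    (p.model hs hb θ v).IsRevealing (k + 2) (σ / (σ + 2)) := by
  intro h hh
  rw [mem_Icc] at hh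
  have s_pos := strength_pos (p := p) hσ k
  refine ⟨p.leftInverse (p.strength σ k) v k, fun c _ => ?_, ?_⟩
  · rw [leftInverse_mul_emitActMatrix hs hb θ v s_pos.ne' (by omega), Matrix.one_mulVec]
  · have one_le := one_le_sqrt_card_revealSeqs (p := p) k
    calc opNormStarOne (p.leftInverse (p.strength σ k) v k)
        ≤ (2 / p.strength σ k + 1) / √(#(p.revealSeqs k)) := opNormStarOne_leftInverse_le v s_pos k
      _ = 2 / σ + 1 / √(#(p.revealSeqs k)) := by
          rw [strength]
          field_simp
      _ ≤ 2 / σ + 1 := by gcongr; exact (div_le_one (by positivity)).2 one_le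
      _ = 1 / (σ / (σ + 2)) := by field_simp; ring

end Strength

end LockTree

/-! ### Sizes of the family and of the sampling budgets -/

namespace LockTree

variable {p : LockTree}

lemma card_entry :
    Fintype.card p.Entry = (p.lastEntry - p.n + 1) * (2 ^ (p.n - 1) * (p.A - 2)) := by
  simp

lemma card_password : Fintype.card p.Password = (p.A - p.numReveal) ^ p.passwordLength := by
  simp

lemma le_card_entry : (2 : ℝ) ^ (p.n - 1) * p.H * p.A / 40 ≤ Fintype.card p.Entry := by
  have := p.three_le_A
  have := p.le_H
  have steps : (3 * p.H : ℝ) ≤ 40 * (p.lastEntry - p.n + 1 : ℕ) := by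
    exact_mod_cast (by simp only [lastEntry]; omega : 3 * p.H ≤ 40 * (p.lastEntry - p.n + 1))
  have actions : (p.A : ℝ) ≤ 3 * (p.A - 2 : ℕ) := by
    exact_mod_cast (by omega : p.A ≤ 3 * (p.A - 2))
  calc (2 : ℝ) ^ (p.n - 1) * p.H * p.A / 40 = 2 ^ (p.n - 1) * (3 * p.H * p.A) / 120 := by ring
    _ ≤ 2 ^ (p.n - 1) * (40 * (p.lastEntry - p.n + 1 : ℕ) * (3 * (p.A - 2 : ℕ))) / 120 := by
        gcongr
    _ = Fintype.card p.Entry := by rw [card_entry]; push_cast; ring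

lemma pow_five_le_sub_numReveal_pow_eight :
    (p.A : ℝ) ^ 5 ≤ ((p.A - p.numReveal : ℕ) : ℝ) ^ 8 := by
  have three_le : (3 : ℝ) ≤ p.A := by exact_mod_cast p.three_le_A
  have two_thirds : 2 / 3 * (p.A : ℝ) ≤ (p.A - p.numReveal : ℕ) := by
    have : (2 * p.A : ℝ) ≤ 3 * (p.A - p.numReveal : ℕ) := by
      exact_mod_cast (by simp only [numReveal]; omega : 2 * p.A ≤ 3 * (p.A - p.numReveal))
    linarith
  calc (p.A : ℝ) ^ 5 = 1 / 3 ^ 3 * 3 ^ 3 * (p.A : ℝ) ^ 5 := by ring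
    _ ≤ (2 / 3) ^ 8 * (p.A : ℝ) ^ 3 * (p.A : ℝ) ^ 5 := by gcongr; norm_num
    _ = (2 / 3 * (p.A : ℝ)) ^ 8 := by ring
    _ ≤ _ := by gcongr

/-- The number of passwords beats `A ^ (H / 2)` because at least `2 * A / 3 ≥ A ^ (5 / 8)` actions
are available at each of at least `4 * H / 5 - 1` steps. -/
lemma le_card_password :
    3 / 2 * (p.A : ℝ) ^ ((p.H : ℝ) / 2) ≤ p.A * Fintype.card p.Password := by
  have three_le : (3 : ℝ) ≤ p.A := by exact_mod_cast p.three_le_A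
  have one_le : (1 : ℝ) ≤ p.A := by linarith
  have pow_eight : ((p.A : ℝ) ^ ((p.H : ℝ) / 2)) ^ 8 = (p.A : ℝ) ^ (4 * p.H) := by
    rw [← Real.rpow_natCast, ← Real.rpow_mul (by positivity), ← Real.rpow_natCast]
    congr 1
    push_cast
    ring
  rw [← pow_le_pow_iff_left₀ (by positivity) (by positivity) (by norm_num : 8 ≠ 0)]
  calc (3 / 2 * (p.A : ℝ) ^ ((p.H : ℝ) / 2)) ^ 8 = (3 / 2) ^ 8 * (p.A : ℝ) ^ (4 * p.H) := by
        rw [mul_pow, pow_eight]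
    _ ≤ (p.A : ℝ) ^ 3 * (p.A : ℝ) ^ (4 * p.H) := by
        gcongr
        exact le_trans (by norm_num) (pow_le_pow_left₀ (by norm_num) three_le 3)
    _ ≤ (p.A : ℝ) ^ 8 * ((p.A : ℝ) ^ 5) ^ p.passwordLength := by
        rw [← pow_mul, ← pow_add, ← pow_add]
        exact pow_le_pow_right₀ one_le (by simp only [passwordLength, lastEntry]; omega)
    _ ≤ (p.A : ℝ) ^ 8 * (((p.A - p.numReveal : ℕ) : ℝ) ^ 8) ^ p.passwordLength := by
        gcongr
        exact pow_five_le_sub_numReveal_pow_eight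
    _ = (p.A * Fintype.card p.Password) ^ 8 := by
        rw [card_password]
        push_cast
        ring

lemma le_card_secret : 3 / 80 * ((2 : ℝ) ^ (p.n - 1) * (p.A : ℝ) ^ ((p.H : ℝ) / 2) * p.H) ≤
    Fintype.card p.Secret := by
  have A_pos : (0 : ℝ) < p.A := by exact_mod_cast (by have := p.three_le_A; omega : 0 < p.A)
  refine le_of_mul_le_mul_left ?_ A_pos
  calc p.A * (3 / 80 * ((2 : ℝ) ^ (p.n - 1) * (p.A : ℝ) ^ ((p.H : ℝ) / 2) * p.H))
      = 2 ^ (p.n - 1) * p.H * p.A / 40 * (3 / 2 * (p.A : ℝ) ^ ((p.H : ℝ) / 2)) := by ring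
    _ ≤ Fintype.card p.Entry * (p.A * Fintype.card p.Password) :=
        mul_le_mul le_card_entry le_card_password (by positivity) (by positivity)
    _ = p.A * Fintype.card p.Secret := by
        rw [Fintype.card_prod p.Entry p.Password, Nat.cast_mul]
        ring

lemma thirty_two_le_card_secret : 32 ≤ Fintype.card p.Secret := by
  have := p.three_le_A
  have := p.le_H
  have entries : 1 ≤ Fintype.card p.Entry := by
    rw [card_entry]
    exact Nat.mul_pos (Nat.succ_pos _) (Nat.mul_pos (by positivity) (by omega))
  have passwords : 2 ^ 5 ≤ Fintype.card p.Password := by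
    rw [card_password]
    have := p.one_le_n
    calc 2 ^ 5 ≤ 2 ^ p.passwordLength :=
          Nat.pow_le_pow_right two_pos (by simp only [passwordLength, lastEntry]; omega)
      _ ≤ (p.A - p.numReveal) ^ p.passwordLength :=
          Nat.pow_le_pow_left (by simp only [numReveal]; omega) _
  rw [Fintype.card_prod p.Entry p.Password]
  exact Nat.mul_le_mul entries passwords

lemma card_secret_mul_add_one_le : Fintype.card p.Secret * 2 ^ p.K + 1 ≤
    2 ^ p.K * p.A ^ p.H * (2 ^ p.n + 4) * p.A * p.H := by
  have := p.three_le_A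
  have := p.le_H
  have entries : Fintype.card p.Entry ≤ p.H * (2 ^ p.n * p.A) := by
    rw [card_entry]
    exact Nat.mul_le_mul (by have := p.one_le_n; simp only [lastEntry]; omega)
      (Nat.mul_le_mul (Nat.pow_le_pow_right (by norm_num) (by omega)) (by omega))
  have passwords : Fintype.card p.Password ≤ p.A ^ p.H := by
    rw [card_password]
    exact (Nat.pow_le_pow_left (Nat.sub_le _ _) _).trans
      (Nat.pow_le_pow_right (by omega) (by simp only [passwordLength]; omega))
  have slack : 0 < 2 ^ p.K * p.A ^ p.H * p.A * p.H := by
    have : 0 < p.A := by omega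
    have : 0 < p.H := by omega
    positivity
  calc Fintype.card p.Secret * 2 ^ p.K + 1
      ≤ p.H * (2 ^ p.n * p.A) * p.A ^ p.H * 2 ^ p.K + 2 ^ p.K * p.A ^ p.H * p.A * p.H * 4 := by
        rw [Fintype.card_prod p.Entry p.Password]
        exact add_le_add (Nat.mul_le_mul_right _ (Nat.mul_le_mul entries passwords)) (by omega)
    _ = 2 ^ p.K * p.A ^ p.H * (2 ^ p.n + 4) * p.A * p.H := by ring

/-- Number of probes of one entry up to which the random signs are indistinguishable from fair
ones. -/
def probeThreshold (p : LockTree) (ε s : ℝ) : ℕ := ⌊√p.K / (10 * (ε ^ 2 * s ^ 2))⌋₊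

/-- Number of unlocks up to which the bias `ε` of the final outcome is undetectable. -/
def unlockThreshold (ε : ℝ) : ℕ := ⌊1 / (50 * ε ^ 2)⌋₊

/-- Expected number of probes below which most entries are probed too rarely to be noticed. -/
def probeBudget (p : LockTree) (ε s : ℝ) : ℝ :=
  Fintype.card p.Entry * (p.probeThreshold ε s + 1) / 8

/-- Number of episodes up to which most secrets are unlocked too rarely to be noticed. -/
def episodeBudget (p : LockTree) (ε : ℝ) : ℝ :=
  Fintype.card p.Secret * (unlockThreshold ε + 1) / 8

lemma probeThreshold_mul_le (ε s : ℝ) :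
    p.probeThreshold ε s * (ε ^ 2 * s ^ 2) ≤ √p.K / 10 := by
  refine mul_le_of_le_div₀ (by positivity) (by positivity) ?_
  rw [div_div]
  exact Nat.floor_le (by positivity)

lemma unlockThreshold_mul_le (ε : ℝ) : unlockThreshold ε * ε ^ 2 ≤ 1 / 50 := by
  refine mul_le_of_le_div₀ (by positivity) (by positivity) ?_
  rw [div_div]
  exact Nat.floor_le (by positivity)

variable {ε σ : ℝ}

lemma le_probeBudget (hε : 0 < ε) (hσ : 0 < σ) (k : ℕ) :
    1 / 16000 * ((2 : ℝ) ^ (p.n - 1) * √p.K * (p.A : ℝ) ^ (k + 2) * p.H / (σ ^ 2 * ε ^ 2)) ≤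
      p.probeBudget ε (p.strength σ k) := by
  have A_ge := p.three_le_A
  have reveals : (p.A : ℝ) / 5 ≤ p.numReveal := by
    have : (p.A : ℝ) ≤ 5 * p.numReveal := by
      exact_mod_cast (by simp only [numReveal]; omega : p.A ≤ 5 * p.numReveal)
    linarith
  have strength_sq : p.strength σ k ^ 2 = σ ^ 2 / (p.numReveal * p.A ^ k) := by
    rw [strength, div_pow, Real.sq_sqrt (Nat.cast_nonneg _), card_revealSeqs]
    push_cast
    rfl
  have reveals_pos : (0 : ℝ) < p.numReveal := by
    exact_mod_cast (by simp only [numReveal]; omega : 0 < p.numReveal)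
  have threshold : √p.K * (p.A / 5 * p.A ^ k) / (10 * (ε ^ 2 * σ ^ 2)) ≤
      p.probeThreshold ε (p.strength σ k) + 1 :=
    calc √p.K * (p.A / 5 * p.A ^ k) / (10 * (ε ^ 2 * σ ^ 2))
        ≤ √p.K * (p.numReveal * p.A ^ k) / (10 * (ε ^ 2 * σ ^ 2)) := by gcongr
      _ = √p.K / (10 * (ε ^ 2 * p.strength σ k ^ 2)) := by rw [strength_sq]; field_simp
      _ ≤ _ := (Nat.lt_floor_add_one _).le
  calc _ = (2 : ℝ) ^ (p.n - 1) * p.H * p.A / 40 *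
        (√p.K * (p.A / 5 * p.A ^ k) / (10 * (ε ^ 2 * σ ^ 2))) / 8 := by field_simp; ring
    _ ≤ p.probeBudget ε (p.strength σ k) :=
        div_le_div_of_nonneg_right
          (mul_le_mul le_card_entry threshold (by positivity) (by positivity)) (by norm_num)

lemma le_episodeBudget (hε : 0 < ε) :
    3 / 32000 * ((2 : ℝ) ^ (p.n - 1) * (p.A : ℝ) ^ ((p.H : ℝ) / 2) * p.H / ε ^ 2) ≤
      p.episodeBudget ε := by
  have threshold : 1 / (50 * ε ^ 2) ≤ (unlockThreshold ε : ℝ) + 1 := (Nat.lt_floor_add_one _).le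
  calc _ = 3 / 80 * ((2 : ℝ) ^ (p.n - 1) * (p.A : ℝ) ^ ((p.H : ℝ) / 2) * p.H) *
        (1 / (50 * ε ^ 2)) / 8 := by field_simp; ring
    _ ≤ p.episodeBudget ε :=
        div_le_div_of_nonneg_right
          (mul_le_mul le_card_secret threshold (by positivity) (by positivity)) (by norm_num)

/-- Rounding down loses at most a factor `11 / 12`, since the budget is at least `12`. -/
lemma le_floor_episodeBudget (hε : 0 < ε) (hε' : ε ≤ 0.1) :
    11 / 12 * p.episodeBudget ε ≤ (⌊p.episodeBudget ε⌋₊ : ℝ) := by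
  have two_le : (2 : ℝ) ≤ unlockThreshold ε := by
    have : 2 ≤ unlockThreshold ε := by
      refine Nat.le_floor ?_
      rw [le_div_iff₀ (by positivity)]
      norm_num at hε' ⊢
      nlinarith
    exact_mod_cast this
  have card_ge : (32 : ℝ) ≤ Fintype.card p.Secret := by
    exact_mod_cast thirty_two_le_card_secret (p := p)
  have budget_ge : 12 ≤ p.episodeBudget ε := by
    rw [episodeBudget]
    nlinarith
  linarith [Nat.lt_floor_add_one (p.episodeBudget ε)]

end LockTree

/-! ### Lower bounds for a single family -/

namespace LockTree

variable {p : LockTree} {s : ℝ} (hs : |s| ≤ 1) {ε : ℝ} (hb : ε ∈ Set.Icc (0 : ℝ) 1)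

lemma half_mul_one_sub_refExpect_unlock_le (θ : p.Secret) (v : Fin p.K → Bool)
    (π : Policy p.RawObs (Fin p.A)) :
    ε / 2 * (1 - refExpect π fun l => (unlock (signal θ l) : ℝ)) ≤
      (p.model hs hb θ v).optValue - (p.model hs hb θ v).value π := by
  have reveals : 0 ≤ refExpect π fun l => (anyReveal (signal θ l) : ℝ) :=
    (refExpect_const π 0).symm.le.trans (refExpect_mono π fun _ => Nat.cast_nonneg _)
  linarith [gap_le_optValue_sub_value hs hb θ v π]

lemma episodeLaw_model (θ : p.Secret) (v : Fin p.K → Bool)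
    (𝔄 : Algorithm p.RawObs (Fin p.A) p.H) :
    (p.model hs hb θ v).episodeLaw 𝔄 = fun l τ => (p.refModel hs).episodeLaw 𝔄 l τ *
      (1 + ε * signalExcess s v (signal θ (List.ofFn τ))) := by
  funext l τ
  exact trajProb_model hs hb θ v _ τ

/-- Within the budgets, some model behaves so much like the reference model that a failure
indicator `Y θ` which is large for most secrets there is still not small. -/
lemma exists_lt_episodeExpect_model (hε : ε < 1) (𝔄 : Algorithm p.RawObs (Fin p.A) p.H) {T : ℕ}
    (hprobes : episodeExpect ((p.refModel hs).episodeLaw 𝔄) T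
      (fun l => (total (fun τ => p.revealCount (List.ofFn τ)) l : ℝ)) ≤ p.probeBudget ε s)
    (hT : T ≤ p.episodeBudget ε) {Y : p.Secret → List (Fin p.H → p.RawObs × Fin p.A) → ℝ}
    (hY0 : ∀ θ l, 0 ≤ Y θ l) (hY1 : ∀ θ l, Y θ l ≤ 1) (hY : ∀ l, ∑ θ, (1 - Y θ l) ≤ 4 / 3) :
    ∃ θ v, 1 / 4 < episodeExpect ((p.model hs hb θ v).episodeLaw 𝔄) T (Y θ) := by
  simp only [episodeLaw_model]
  exact ((p.refModel hs).isEpisodeLaw_episodeLaw 𝔄).exists_lt_episodeExpect_perturbed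
    (isSignal_refModel hs 𝔄) hb.1 hε hs p.one_le_K (probeThreshold_mul_le ε s)
    (unlockThreshold_mul_le ε) (fun w τ => sum_probe_le_revealCount w _)
    (fun τ => sum_unlock_le_one _) hprobes hT thirty_two_le_card_secret hY0 hY1 hY

lemma revealCount_le_one (l : List (p.RawObs × Fin p.A)) : p.revealCount l ≤ 1 := by
  rw [revealCount]
  rcases firstSignal p.signalClass p.refMove 1 p.root l with _ | ⟨_ | _, x⟩ <;> simp [anyReveal]

lemma episodeExpect_total_revealCount_le (𝔄 : Algorithm p.RawObs (Fin p.A) p.H) (T : ℕ) :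
    episodeExpect ((p.refModel hs).episodeLaw 𝔄) T
      (fun l => (total (fun τ => p.revealCount (List.ofFn τ)) l : ℝ)) ≤ T := by
  have law := (p.refModel hs).isEpisodeLaw_episodeLaw 𝔄
  rw [← law.episodeExpect_length T]
  refine law.episodeExpect_mono T fun l => ?_
  rw [← total_one]
  exact_mod_cast total_mono (fun τ => revealCount_le_one _) l

/-- An output policy that rarely unlocks the lock with the secret `θ` is suboptimal in all models
with this secret, and every policy unlocks the lock for few secrets only. -/
lemma exists_pacProb_lt (hε0 : 0 < ε) (hε : ε < 1) (𝔄 : Algorithm p.RawObs (Fin p.A) p.H) {T : ℕ}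
    (hprobes : T ≤ p.probeBudget ε s) (hT : T ≤ p.episodeBudget ε) :
    ∃ θ v, (p.model hs hb θ v).pacProb 𝔄 T (ε / 8) < 3 / 4 := by
  classical
  let unlockProb θ l := refExpect (𝔄.out (List.reverse l)) fun l => (unlock (signal θ l) : ℝ)
  obtain ⟨θ, v, rarely_unlocks⟩ := exists_lt_episodeExpect_model hs hb hε 𝔄
    ((episodeExpect_total_revealCount_le hs 𝔄 T).trans hprobes) hT
    (Y := fun θ l => if unlockProb θ l < 3 / 4 then 1 else 0)
    (fun θ l => by split_ifs <;> norm_num) (fun θ l => by split_ifs <;> norm_num) (fun l =>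
      calc _ ≤ ∑ θ, 4 / 3 * unlockProb θ l := by
            refine sum_le_sum fun θ _ => ?_
            have : 0 ≤ unlockProb θ l := refExpect_unlock_nonneg _ θ
            split_ifs with h <;> linarith
        _ ≤ 4 / 3 := by
            rw [← mul_sum]
            linarith [sum_refExpect_unlock_le_one (p := p) (𝔄.out l.reverse)])
  refine ⟨θ, v, ?_⟩
  have law := (p.model hs hb θ v).isEpisodeLaw_episodeLaw 𝔄
  calc (p.model hs hb θ v).pacProb 𝔄 T (ε / 8)
      ≤ episodeExpect ((p.model hs hb θ v).episodeLaw 𝔄) T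
          (fun l => 1 - if unlockProb θ l < 3 / 4 then 1 else 0) := by
        rw [POMDP.pacProb_eq_episodeExpect]
        refine law.episodeExpect_mono T fun l => ?_
        have gap : ε / 2 * (1 - unlockProb θ l) ≤ _ :=
          half_mul_one_sub_refExpect_unlock_le hs hb θ v (𝔄.out l.reverse)
        split_ifs <;> nlinarith
    _ < 3 / 4 := by
        rw [episodeExpect_sub, law.episodeExpect_const]
        linarith

lemma half_mul_episodeExpect_total_revealCount_le (𝔄 : Algorithm p.RawObs (Fin p.A) p.H) (T : ℕ) :
    1 / 2 * episodeExpect ((p.refModel hs).episodeLaw 𝔄) T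
      (fun l => (total (fun τ => p.revealCount (List.ofFn τ)) l : ℝ)) ≤
        (p.refModel hs).expRegret 𝔄 T := by
  have law := (p.refModel hs).isEpisodeLaw_episodeLaw 𝔄
  rw [law.episodeExpect_total, POMDP.expRegret_eq_episodeExpect, ← episodeExpect_const_mul]
  refine law.episodeExpect_mono T fun l => ?_
  rw [← pastSum_const_mul]
  refine pastSum_mono (fun l => ?_) l
  have gap := gap_le_optValue_sub_value hs (b := 0) ⟨le_rfl, zero_le_one⟩ p.refSecret
    (fun _ => true) (𝔄.policyAt l.reverse)
  simp only [anyReveal_signal, zero_div, zero_mul, add_zero] at gap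
  rwa [← sum_trajProb_refModel_mul hs] at gap

/-- The models are tested with the average, over past episodes, of the probability of not unlocking
the lock. -/
lemma exists_le_expRegret (hε : ε < 1) (𝔄 : Algorithm p.RawObs (Fin p.A) p.H) {T : ℕ}
    (hprobes : episodeExpect ((p.refModel hs).episodeLaw 𝔄) T
      (fun l => (total (fun τ => p.revealCount (List.ofFn τ)) l : ℝ)) ≤ p.probeBudget ε s)
    (hT : T ≤ p.episodeBudget ε) :
    ∃ θ v, ε * T / 8 ≤ (p.model hs hb θ v).expRegret 𝔄 T := by
  let unlocks θ := pastSum fun l =>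
    refExpect (𝔄.policyAt (List.reverse l)) fun l => (unlock (signal θ l) : ℝ)
  have unlocks_nonneg θ l : 0 ≤ unlocks θ l := by
    simpa [pastSum_const] using pastSum_mono (g := fun _ => 0)
      (fun l => refExpect_unlock_nonneg (𝔄.policyAt (List.reverse l)) θ) l
  have sum_unlocks_le l : ∑ θ, unlocks θ l ≤ l.length := by
    rw [← pastSum_sum]
    simpa [pastSum_const] using pastSum_mono (g' := fun _ => 1)
      (fun l => sum_refExpect_unlock_le_one (𝔄.policyAt (List.reverse l))) l
  have unlocks_le θ l : unlocks θ l ≤ l.length :=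
    (single_le_sum (fun θ _ => unlocks_nonneg θ l) (mem_univ θ)).trans (sum_unlocks_le l)
  -- For the empty list `0 / 0 = 0`, so that the test function is `1` there.
  obtain ⟨θ, v, rarely_unlocks⟩ := exists_lt_episodeExpect_model hs hb hε 𝔄 hprobes hT
    (Y := fun θ l => 1 - unlocks θ l / l.length)
    (fun θ l => sub_nonneg.2 (div_le_one_of_le₀ (unlocks_le θ l) (Nat.cast_nonneg _)))
    (fun θ l => sub_le_self _ (div_nonneg (unlocks_nonneg θ l) (Nat.cast_nonneg _)))
    (fun l => by
      simp only [sub_sub_cancel, ← sum_div]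
      linarith [div_le_one_of_le₀ (sum_unlocks_le l) (Nat.cast_nonneg _)])
  refine ⟨θ, v, ?_⟩
  have T_nonneg : 0 ≤ ε / 2 * T := mul_nonneg (by linarith [hb.1]) (Nat.cast_nonneg _)
  calc ε * T / 8 ≤ ε / 2 * T * episodeExpect ((p.model hs hb θ v).episodeLaw 𝔄) T
        (fun l => 1 - unlocks θ l / l.length) := by nlinarith
    _ = episodeExpect ((p.model hs hb θ v).episodeLaw 𝔄) T
        (fun l => ε / 2 * (l.length - unlocks θ l)) := by
        rw [← episodeExpect_const_mul]
        refine episodeExpect_congr_of_length T ?_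
        rintro l rfl
        rcases l with _ | ⟨τ, l⟩
        · simp [unlocks, pastSum]
        · field_simp
    _ ≤ (p.model hs hb θ v).expRegret 𝔄 T := by
        rw [POMDP.expRegret_eq_episodeExpect]
        refine ((p.model hs hb θ v).isEpisodeLaw_episodeLaw 𝔄).episodeExpect_mono T fun l => ?_
        rw [← mul_one (l.length : ℝ), ← pastSum_const, ← pastSum_sub, ← pastSum_const_mul]
        exact pastSum_mono
          (fun l => half_mul_one_sub_refExpect_unlock_le hs hb θ v (𝔄.policyAt l.reverse)) l

/-- The hard family: the reference model and the models of all secrets and bits. -/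
def family (p : LockTree) {s : ℝ} (hs : |s| ≤ 1) {ε : ℝ} (hb : ε ∈ Set.Icc (0 : ℝ) 1) :
    Set (POMDP p.RawState p.RawObs (Fin p.A) p.H) :=
  insert (p.refModel hs) (Set.range fun x : p.Secret × (Fin p.K → Bool) => p.model hs hb x.1 x.2)

lemma family_finite : (p.family hs hb).Finite := (Set.finite_range _).insert _

lemma card_family_le :
    Nat.card (p.family hs hb) ≤ 2 ^ p.K * p.A ^ p.H * (2 ^ p.n + 4) * p.A * p.H :=
  calc Nat.card (p.family hs hb)
      ≤ Nat.card (Set.range fun x : p.Secret × (Fin p.K → Bool) => p.model hs hb x.1 x.2) + 1 :=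
        Set.ncard_insert_le _ _
    _ ≤ Nat.card (p.Secret × (Fin p.K → Bool)) + 1 := by
        gcongr
        exact Finite.card_range_le _
    _ = Fintype.card p.Secret * 2 ^ p.K + 1 := by
        rw [Nat.card_eq_fintype_card, Fintype.card_prod p.Secret]
        simp
    _ ≤ _ := card_secret_mul_add_one_le

lemma model_mem_family (θ : p.Secret) (v : Fin p.K → Bool) :
    p.model hs hb θ v ∈ p.family hs hb :=
  Set.mem_insert_of_mem _ ⟨(θ, v), rfl⟩

/-- An algorithm that exceeds the probing budget pays for it in the reference model; otherwise it
loses `ε / 8` per episode in some model. Episodes beyond the episode budget are ignored. -/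
lemma exists_mem_family_le_expRegret (hε : ε < 1) (𝔄 : Algorithm p.RawObs (Fin p.A) p.H) (T : ℕ) :
    ∃ M ∈ p.family hs hb, min (p.probeBudget ε s / 2)
      (ε / 8 * min (T : ℝ) ⌊p.episodeBudget ε⌋₊) ≤ M.expRegret 𝔄 T := by
  set T' := min T ⌊p.episodeBudget ε⌋₊ with hT'
  have budget_nonneg : 0 ≤ p.episodeBudget ε := by unfold episodeBudget; positivity
  have T'_le : (T' : ℝ) ≤ p.episodeBudget ε :=
    (Nat.cast_le.2 (min_le_right _ _)).trans (Nat.floor_le budget_nonneg)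
  by_cases few_probes : episodeExpect ((p.refModel hs).episodeLaw 𝔄) T'
      (fun l => (total (fun τ => p.revealCount (List.ofFn τ)) l : ℝ)) ≤ p.probeBudget ε s
  · obtain ⟨θ, v, regret⟩ := exists_le_expRegret hs hb hε 𝔄 few_probes T'_le
    refine ⟨_, model_mem_family hs hb θ v, (min_le_right _ _).trans ?_⟩
    rw [← Nat.cast_min, ← hT']
    linarith [(p.model hs hb θ v).expRegret_mono 𝔄 (min_le_left T ⌊p.episodeBudget ε⌋₊)]
  · refine ⟨_, Set.mem_insert _ _, (min_le_left _ _).trans ?_⟩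
    linarith [half_mul_episodeExpect_total_revealCount_le hs 𝔄 T',
      (p.refModel hs).expRegret_mono 𝔄 (min_le_left T ⌊p.episodeBudget ε⌋₊)]

end LockTree

namespace LockTree

variable {p : LockTree} {ε σ : ℝ} (hε : 0 < ε) (hε' : ε ≤ 0.1) (hσ : 0 < σ)

include hσ in
lemma isRevealing_of_mem_family {k : ℕ} (hk : k + 2 ≤ p.H) (hs : |p.strength σ k| ≤ 1)
    (hb : ε ∈ Set.Icc (0 : ℝ) 1) :
    ∀ M ∈ p.family hs hb, M.IsRevealing (k + 2) (σ / (σ + 2)) := by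
  rintro M (rfl | ⟨⟨θ, v⟩, rfl⟩)
  · exact isRevealing_model hσ hk hs _ _ _
  · exact isRevealing_model hσ hk hs hb θ v

include hε hε' hσ

lemma exists_mem_family_min_le_expRegret (k : ℕ) (hs : |p.strength σ k| ≤ 1)
    (hb : ε ∈ Set.Icc (0 : ℝ) 1) (𝔄 : Algorithm p.RawObs (Fin p.A) p.H) (T : ℕ) :
    ∃ M ∈ p.family hs hb, (1 / 120000 : ℝ) *
      min ((2 : ℝ) ^ (p.n - 1) * √p.K * (p.A : ℝ) ^ (k + 2) * p.H / (σ ^ 2 * ε ^ 2))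
        (min ((2 : ℝ) ^ (p.n - 1) * (p.A : ℝ) ^ ((p.H : ℝ) / 2) * p.H / ε) (ε * T)) ≤
      M.expRegret 𝔄 T := by
  obtain ⟨M, hM, regret⟩ :=
    exists_mem_family_le_expRegret hs hb (hε'.trans_lt (by norm_num)) 𝔄 T
  refine ⟨M, hM, le_trans (le_min ?_ ?_) regret⟩
  · have budget := le_probeBudget (p := p) hε hσ k
    set X := (2 : ℝ) ^ (p.n - 1) * √p.K * (p.A : ℝ) ^ (k + 2) * p.H / (σ ^ 2 * ε ^ 2)
    have X_nonneg : 0 ≤ X := by positivity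
    linarith [min_le_left X
      (min ((2 : ℝ) ^ (p.n - 1) * (p.A : ℝ) ^ ((p.H : ℝ) / 2) * p.H / ε) (ε * T))]
  · refine (mul_le_mul_of_nonneg_left (min_le_right _ _) (by norm_num)).trans ?_
    have budget := mul_le_mul_of_nonneg_left
      ((mul_le_mul_of_nonneg_left (le_episodeBudget (p := p) hε) (by norm_num)).trans
        (le_floor_episodeBudget hε hε')) hε.le
    have eps_mul : (2 : ℝ) ^ (p.n - 1) * (p.A : ℝ) ^ ((p.H : ℝ) / 2) * p.H / ε =
        ε * ((2 : ℝ) ^ (p.n - 1) * (p.A : ℝ) ^ ((p.H : ℝ) / 2) * p.H / ε ^ 2) := by field_simp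
    rw [eps_mul, ← mul_min_of_nonneg _ _ hε.le]
    set X := (2 : ℝ) ^ (p.n - 1) * (p.A : ℝ) ^ ((p.H : ℝ) / 2) * p.H / ε ^ 2
    rcases le_total (T : ℝ) ⌊p.episodeBudget ε⌋₊ with hT | hT
    · rw [min_eq_left hT]
      nlinarith [min_le_right X T]
    · rw [min_eq_right hT]
      nlinarith [min_le_left X T]

lemma min_le_of_forall_mem_family_le_pacProb (k : ℕ) (hs : |p.strength σ k| ≤ 1)
    (hb : ε ∈ Set.Icc (0 : ℝ) 1) (𝔄 : Algorithm p.RawObs (Fin p.A) p.H) (T : ℕ)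
    (accurate : ∀ M ∈ p.family hs hb, (3 : ℝ) / 4 ≤ M.pacProb 𝔄 T (ε / 8)) :
    (1 / 60000 : ℝ) *
      min ((2 : ℝ) ^ (p.n - 1) * √p.K * (p.A : ℝ) ^ (k + 2) * p.H / (σ ^ 2 * ε ^ 2))
        ((2 : ℝ) ^ (p.n - 1) * (p.A : ℝ) ^ ((p.H : ℝ) / 2) * p.H / ε ^ 2) ≤ T := by
  by_contra! few_episodes
  have budget := le_probeBudget (p := p) hε hσ k
  have budget' := le_episodeBudget (p := p) hε
  set X := (2 : ℝ) ^ (p.n - 1) * √p.K * (p.A : ℝ) ^ (k + 2) * p.H / (σ ^ 2 * ε ^ 2)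
  set X' := (2 : ℝ) ^ (p.n - 1) * (p.A : ℝ) ^ ((p.H : ℝ) / 2) * p.H / ε ^ 2
  have X_nonneg : 0 ≤ X := by positivity
  have X'_nonneg : 0 ≤ X' := by positivity
  obtain ⟨θ, v, fails⟩ := exists_pacProb_lt hs hb hε (hε'.trans_lt (by norm_num)) 𝔄
    (T := T) (by linarith [min_le_left X X']) (by linarith [min_le_right X X'])
  exact fails.not_ge (accurate _ (model_mem_family hs hb θ v))

end LockTree

theorem multi_step_hard_family_regret_pac_general (ε σ : ℝ) (m n K A H : ℕ)
    (hε : 0 < ε) (hε' : ε ≤ 0.1) (hσ : 0 < σ) (hσ' : σ ≤ 1)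
    (hm : 1 ≤ m) (hn : 1 ≤ n) (hK : 1 ≤ K) (hA : 3 ≤ A) (hH : 8 * n + 2 ≤ H) (hmH : m + 1 ≤ H) :
    ∃ ℳ : Set (POMDP (Fin (2 ^ n + 4)) (Fin (2 ^ n + 2 * K + 3)) (Fin A) H),
      ℳ.Finite ∧
      (∀ M ∈ ℳ, M.IsRevealing (m + 1) (σ / (σ + 2))) ∧
      Nat.card ℳ ≤ 2 ^ K * A ^ H * (2 ^ n + 4) * A * H ∧
      (∀ (T : ℕ) (𝔄 : Algorithm (Fin (2 ^ n + 2 * K + 3)) (Fin A) H),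
        ∃ M ∈ ℳ,
          (1 / 120000 : ℝ) *
              min ((2 : ℝ) ^ (n - 1) * Real.sqrt K * (A : ℝ) ^ (m + 1) * H / (σ ^ 2 * ε ^ 2))
                (min ((2 : ℝ) ^ (n - 1) * (A : ℝ) ^ ((H : ℝ) / 2) * H / ε) (ε * T)) ≤
            M.expRegret 𝔄 T) ∧
      ∀ (T : ℕ) (𝔄 : Algorithm (Fin (2 ^ n + 2 * K + 3)) (Fin A) H),
        (∀ M ∈ ℳ, (3 : ℝ) / 4 ≤ M.pacProb 𝔄 T (ε / 8)) →
        (1 / 60000 : ℝ) *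
            min ((2 : ℝ) ^ (n - 1) * Real.sqrt K * (A : ℝ) ^ (m + 1) * H / (σ ^ 2 * ε ^ 2))
              ((2 : ℝ) ^ (n - 1) * (A : ℝ) ^ ((H : ℝ) / 2) * H / ε ^ 2) ≤ (T : ℝ) := by
  obtain ⟨k, rfl⟩ := Nat.exists_eq_add_of_le' hm
  let p : LockTree := ⟨n, K, A, H, hn, hK, hA, hH⟩
  have hs : |p.strength σ k| ≤ 1 := LockTree.abs_strength_le_one hσ hσ' k
  have hb : ε ∈ Set.Icc (0 : ℝ) 1 := ⟨hε.le, hε'.trans (by norm_num)⟩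
  refine ⟨p.family hs hb, LockTree.family_finite hs hb,
    LockTree.isRevealing_of_mem_family hσ hmH hs hb,
    LockTree.card_family_le hs hb,
    fun T 𝔄 => LockTree.exists_mem_family_min_le_expRegret hε hε' hσ k hs hb 𝔄 T,
    fun T 𝔄 => LockTree.min_le_of_forall_mem_family_le_pacProb hε hε' hσ k hs hb 𝔄 T⟩

/-- **Proposition E.1 (hard instance family for multi-step revealing POMDPs: regret and
PAC).**  For every `ε ∈ (0,0.1]`, `σ ∈ (0,1]`, `m, n ≥ 1`, `K ≥ 2`, `A ≥ 3`,
`H ≥ 8n+m+1`, there is a finite family `ℳ` of POMDPs with `|𝒮| = 2ⁿ+4`,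
`|𝒪| = 2ⁿ+2K+3`, `|𝒜| = A`, each `(m+1)`-step `α`-revealing with `α = σ/(σ+2)`, with
`|ℳ| ≤ 2^K·A^H·(2ⁿ+4)·A·H`, such that (4) every `T`-episode algorithm suffers expected
regret at least
`(1/120000)·min{ 2^{n−1}·√K·A^{m+1}·H/(m σ²ε²), 2^{n−1}·A^{H/2}·H/(m ε), εT }` on some
member of `ℳ`, and (5) any `T`-episode algorithm that is `(ε/8)`-accurate with probability
`≥ 3/4` on all of `ℳ` must satisfy
`T ≥ (1/60000)·min{ 2^{n−1}·√K·A^{m+1}·H/(σ²ε²), 2^{n−1}·A^{H/2}·H/ε² }`. -/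
theorem multi_step_hard_family_regret_pac (ε σ : ℝ) (m n K A H : ℕ)
    (hε : 0 < ε) (hε' : ε ≤ 0.1) (hσ : 0 < σ) (hσ' : σ ≤ 1)
    (hm : 1 ≤ m) (hn : 1 ≤ n) (hK : 2 ≤ K) (hA : 3 ≤ A) (hH : 8 * n + m + 1 ≤ H) :
    ∃ ℳ : Set (POMDP (Fin (2 ^ n + 4)) (Fin (2 ^ n + 2 * K + 3)) (Fin A) H),
      ℳ.Finite ∧
      (∀ M ∈ ℳ, M.IsRevealing (m + 1) (σ / (σ + 2))) ∧
      Nat.card ℳ ≤ 2 ^ K * A ^ H * (2 ^ n + 4) * A * H ∧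
      (∀ (T : ℕ) (𝔄 : Algorithm (Fin (2 ^ n + 2 * K + 3)) (Fin A) H),
        ∃ M ∈ ℳ,
          (1 / 120000 : ℝ) *
              min ((2 : ℝ) ^ (n - 1) * Real.sqrt K * (A : ℝ) ^ (m + 1) * H /
                    (m * σ ^ 2 * ε ^ 2))
                (min ((2 : ℝ) ^ (n - 1) * (A : ℝ) ^ ((H : ℝ) / 2) * H / (m * ε))
                  (ε * T)) ≤
            M.expRegret 𝔄 T) ∧
      ∀ (T : ℕ) (𝔄 : Algorithm (Fin (2 ^ n + 2 * K + 3)) (Fin A) H),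
        (∀ M ∈ ℳ, (3 : ℝ) / 4 ≤ M.pacProb 𝔄 T (ε / 8)) →
        (1 / 60000 : ℝ) *
            min ((2 : ℝ) ^ (n - 1) * Real.sqrt K * (A : ℝ) ^ (m + 1) * H / (σ ^ 2 * ε ^ 2))
              ((2 : ℝ) ^ (n - 1) * (A : ℝ) ^ ((H : ℝ) / 2) * H / ε ^ 2) ≤ (T : ℝ) := by
  obtain ⟨ℳ, finite, revealing, card_le, regret, pac⟩ :=
    multi_step_hard_family_regret_pac_general ε σ m n K A H hε hε' hσ hσ' hm hn (by omega) hA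
      (by omega) (by omega)
  refine ⟨ℳ, finite, revealing, card_le, fun T 𝔄 => ?_, pac⟩
  obtain ⟨M, hM, le_regret⟩ := regret T 𝔄
  have one_le_m : (1 : ℝ) ≤ m := by exact_mod_cast hm
  refine ⟨M, hM, le_trans ?_ le_regret⟩
  have div_m_le (x : ℝ) {y : ℝ} (hx : 0 ≤ x) (hy : 0 < y) : x / (m * y) ≤ x / y :=
    div_le_div_of_nonneg_left hx hy (le_mul_of_one_le_left hy.le one_le_m)
  rw [mul_assoc (m : ℝ)]
  exact mul_le_mul_of_nonneg_left
    (min_le_min (div_m_le _ (by positivity) (by positivity))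
      (min_le_min_right _ (div_m_le _ (by positivity) hε))) (by norm_num)
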